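/- For any 0 < b < 𝓛₀ < ∞ there exists a bounded g : ℤ → ℝ with δ(g) = b and 𝓛(E) ≥ 𝓛₀ for every E ∈ ℝ, such that H_g has Anderson localization — that is, a complete orthonormal set of eigenfunctions {φ_s} in ℓ²(ℤ) and γ > 0, n_s ∈ ℤ, C_s < ∞ with |φ_s(n)| ≤ C_s·e^{−γ|n−n_s|} for all s, n — but H_g does not have SULE. -/

import Mathlib

noncomputable section

open Filter Real

def distToInt (x : ℝ) : ℝ := |x - round x|

def IsDiophantine (α : ℝ) : Prop :=
  ∃ κ τ : ℝ, 0 < κ ∧ 0 < τ ∧ ∀ k : ℤ, k ≠ 0 → τ / |(k : ℝ)| ^ κ ≤ distToInt (k * α)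

def deltaPhase (α θ : ℝ) : ℝ :=
  limsup (fun n : ℤ => -Real.log (distToInt (2 * θ + n * α)) / |(n : ℝ)|) cofinite

def amoPot (lam α θ : ℝ) : ℤ → ℝ := fun n => 2 * lam * Real.cos (2 * Real.pi * (θ + n * α))

def IsEigenfunction (g : ℤ → ℝ) (E : ℝ) (φ : ℤ → ℝ) : Prop :=
  ∀ n : ℤ, φ (n + 1) + φ (n - 1) + g n * φ n = E * φ n

def deltaPot (g : ℤ → ℝ) : ℝ :=
  limsup (fun n : ℤ => -Real.log (⨆ m : ℤ, |g (n - m) - g m|) / |(n : ℝ)|) cofinite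

def matNorm (M : Matrix (Fin 2) (Fin 2) ℝ) : ℝ := ⨆ p : Fin 2 × Fin 2, |M p.1 p.2|

def transfer (g : ℤ → ℝ) (E : ℝ) : ℕ → ℤ → Matrix (Fin 2) (Fin 2) ℝ
  | 0, _ => 1
  | n + 1, k => !![E - g (k + n), -1; 1, 0] * transfer g E n k

def LyapSup (g : ℤ → ℝ) (E : ℝ) : ℝ :=
  limsup (fun n : ℕ => ⨆ k : ℤ, Real.log (matNorm (transfer g E n k)) / n) atTop

def HasSULE (g : ℤ → ℝ) : Prop :=
  ∃ (Φ : HilbertBasis ℕ ℝ (lp (fun _ : ℤ => ℝ) 2)) (ns : ℕ → ℤ) (γ : ℝ),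
    0 < γ ∧
    (∀ s : ℕ, ∃ E : ℝ, IsEigenfunction g E (fun n => Φ s n)) ∧
    ∀ ε : ℝ, 0 < ε → ∃ C : ℝ,
      ∀ (s : ℕ) (n : ℤ),
        |Φ s n| ≤ C * Real.exp (ε * |(ns s : ℝ)|) * Real.exp (-γ * |(n : ℝ) - (ns s : ℝ)|)

def HasAndersonLocalization (g : ℤ → ℝ) : Prop :=
  ∃ (Φ : HilbertBasis ℕ ℝ (lp (fun _ : ℤ => ℝ) 2)) (ns : ℕ → ℤ) (γ : ℝ),
    0 < γ ∧
    (∀ s : ℕ, ∃ E : ℝ, IsEigenfunction g E (fun n => Φ s n)) ∧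
    ∀ s : ℕ, ∃ C : ℝ, ∀ n : ℤ,
      |Φ s n| ≤ C * Real.exp (-γ * |(n : ℝ) - (ns s : ℝ)|)


def IsEV (g : ℤ → ℝ) (a : ℤ) (l : ℕ) (E : ℝ) : Prop :=
  ∃ u : ℤ → ℝ, (∀ n, n ∉ Finset.Ico a (a + l) → u n = 0) ∧ (∃ n, u n ≠ 0) ∧
    ∀ n ∈ Finset.Ico a (a + l), u (n + 1) + u (n - 1) + g n * u n = E * u n

abbrev Ix (a : ℤ) (l : ℕ) := {x : ℤ // x ∈ Finset.Ico a (a + (l : ℤ))}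

structure ES (g : ℤ → ℝ) (a : ℤ) (l : ℕ) (lam : Ix a l → ℝ) (v : Ix a l → ℤ → ℝ) : Prop where
  supp : ∀ i n, n ∉ Finset.Ico a (a + (l : ℤ)) → v i n = 0
  eqn : ∀ i, ∀ n ∈ Finset.Ico a (a + (l : ℤ)),
    v i (n + 1) + v i (n - 1) + g n * v i n = lam i * v i n
  orth : ∀ i k, ∑ n ∈ Finset.Ico a (a + (l : ℤ)), v i n * v k n = if i = k then 1 else 0
  compl : ∀ n ∈ Finset.Ico a (a + (l : ℤ)), ∀ m ∈ Finset.Ico a (a + (l : ℤ)),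
    ∑ i, v i n * v i m = if n = m then 1 else 0

def boxMat (g : ℤ → ℝ) (a : ℤ) (l : ℕ) : Matrix (Ix a l) (Ix a l) ℝ :=
  Matrix.of fun i j => if j.1 = i.1 then g i.1 else if j.1 = i.1 + 1 ∨ j.1 = i.1 - 1 then 1 else 0

lemma boxMat_herm (g : ℤ → ℝ) (a : ℤ) (l : ℕ) : (boxMat g a l).IsHermitian := by
  ext i j
  simp only [boxMat, Matrix.conjTranspose_apply, Matrix.of_apply, star_trivial]
  by_cases h : i.1 = j.1
  · simp [h]
  · have h' : j.1 ≠ i.1 := fun e => h e.symm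
    simp only [h, h', if_false]
    congr 1
    apply propext
    constructor <;> rintro (h | h) <;> [right; left; right; left] <;> omega

lemma sum_box (g : ℤ → ℝ) (s : Finset ℤ) (w : ℤ → ℝ) (hw : ∀ n, n ∉ s → w n = 0) (n : ℤ)
    (hn : n ∈ s) :
    ∑ m ∈ s, (if m = n then g n else if m = n + 1 ∨ m = n - 1 then 1 else 0) * w m
      = w (n + 1) + w (n - 1) + g n * w n := by
  have : ∀ m ∈ s, (if m = n then g n else if m = n + 1 ∨ m = n - 1 then 1 else 0) * w m
      = (if m = n + 1 then w m else 0) + (if m = n - 1 then w m else 0) +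
        (if m = n then g n * w m else 0) := by
    intro m _
    by_cases h1 : m = n
    · subst h1
      have : ¬ (m = m + 1) := by omega
      have : ¬ (m = m - 1) := by omega
      simp [*]
    · by_cases h2 : m = n + 1
      · subst h2
        have : ¬ (n + 1 = n - 1) := by omega
        simp [*]
      · by_cases h3 : m = n - 1
        · subst h3; simp [*]
        · simp [*]
  rw [Finset.sum_congr rfl this, Finset.sum_add_distrib, Finset.sum_add_distrib,
    Finset.sum_ite_eq', Finset.sum_ite_eq', Finset.sum_ite_eq', if_pos hn]
  congr 2
  · split_ifs with h
    · rfl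
    · exact (hw _ h).symm
  · split_ifs with h
    · rfl
    · exact (hw _ h).symm

lemma exists_ES (g : ℤ → ℝ) (a : ℤ) (l : ℕ) : ∃ lam v, ES g a l lam v := by
  classical
  set M := boxMat g a l with hM
  have hH := boxMat_herm g a l
  let U : Matrix (Ix a l) (Ix a l) ℝ := (hH.eigenvectorUnitary : Matrix _ _ ℝ)
  have hU1 : U.transpose * U = 1 := by
    have := (Matrix.mem_unitaryGroup_iff'.1 hH.eigenvectorUnitary.2)
    simpa [Matrix.star_eq_conjTranspose, Matrix.conjTranspose_eq_transpose_of_trivial] using this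
  have hU2 : U * U.transpose = 1 := mul_eq_one_comm.1 hU1
  let v : Ix a l → ℤ → ℝ := fun i n => if h : n ∈ Finset.Ico a (a + (l : ℤ)) then U ⟨n, h⟩ i else 0
  have hv : ∀ i (n : Ix a l), v i n.1 = U n i := by
    intro i n; simp only [v]; rw [dif_pos n.2]
  refine ⟨hH.eigenvalues, v, ?_, ?_, ?_, ?_⟩
  · intro i n hn; simp only [v]; rw [dif_neg hn]
  · intro i n hn
    rw [← sum_box g _ (v i) (by intro n hn; simp only [v]; rw [dif_neg hn]) n hn]
    rw [← Finset.sum_coe_sort]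
    have h1 := hH.mulVec_eigenvectorBasis i
    have h2 := congrFun h1 ⟨n, hn⟩
    simp only [Matrix.mulVec, dotProduct, Pi.smul_apply, smul_eq_mul] at h2
    have hUe : ∀ n, U n i = (hH.eigenvectorBasis i).ofLp n := fun n => by
      simp [U, Matrix.IsHermitian.eigenvectorUnitary_apply]
    rw [show v i n = U ⟨n, hn⟩ i from hv i ⟨n, hn⟩, hUe, ← h2]
    apply Finset.sum_congr rfl
    intro m _
    rw [hv i m, hUe]
    simp only [boxMat, Matrix.of_apply]
  · intro i k
    rw [← Finset.sum_coe_sort]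
    have := congrFun (congrFun hU1 i) k
    simp only [Matrix.mul_apply, Matrix.transpose_apply, Matrix.one_apply] at this
    rw [← this]
    exact Finset.sum_congr rfl fun n _ => by rw [hv, hv]
  · intro n hn m hm
    have := congrFun (congrFun hU2 ⟨n, hn⟩) ⟨m, hm⟩
    simp only [Matrix.mul_apply, Matrix.transpose_apply, Matrix.one_apply, Subtype.mk.injEq] at this
    rw [← this]
    exact Finset.sum_congr rfl fun i _ => by
      rw [show v i n = U ⟨n, hn⟩ i from hv i ⟨n, hn⟩, show v i m = U ⟨m, hm⟩ i from hv i ⟨m, hm⟩]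

section
variable {g : ℤ → ℝ} {a : ℤ} {l : ℕ} {lam : Ix a l → ℝ} {v : Ix a l → ℤ → ℝ}

/-- energy functional -/
def res (g : ℤ → ℝ) (E : ℝ) (u : ℤ → ℝ) (n : ℤ) : ℝ := u (n + 1) + u (n - 1) + g n * u n - E * u n

lemma ES.norm_comb (h : ES g a l lam v) (c : Ix a l → ℝ) :
    ∑ n ∈ Finset.Ico a (a + (l : ℤ)), (∑ i, c i * v i n) ^ 2 = ∑ i, c i ^ 2 := by
  have : ∀ n, (∑ i, c i * v i n) ^ 2 = ∑ i, ∑ k, c i * c k * (v i n * v k n) := by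
    intro n
    rw [sq, Finset.sum_mul_sum]
    exact Finset.sum_congr rfl fun i _ => Finset.sum_congr rfl fun k _ => by ring
  simp_rw [this]
  rw [Finset.sum_comm]
  refine Finset.sum_congr rfl fun i _ => ?_
  rw [Finset.sum_comm]
  simp_rw [← Finset.mul_sum, h.orth]
  simp [sq]

lemma ES.res_comb (h : ES g a l lam v) (c : Ix a l → ℝ) (E : ℝ) (n : ℤ)
    (hn : n ∈ Finset.Ico a (a + (l : ℤ))) :
    res g E (fun n => ∑ i, c i * v i n) n = ∑ i, (c i * (lam i - E)) * v i n := by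
  simp only [res]
  rw [Finset.mul_sum, Finset.mul_sum, ← Finset.sum_add_distrib, ← Finset.sum_add_distrib,
    ← Finset.sum_sub_distrib]
  refine Finset.sum_congr rfl fun i _ => ?_
  linear_combination c i * h.eqn i n hn

lemma ES.expand (h : ES g a l lam v) (u : ℤ → ℝ)
    (hu : ∀ n, n ∉ Finset.Ico a (a + (l : ℤ)) → u n = 0) :
    u = fun n => ∑ i, (∑ m ∈ Finset.Ico a (a + (l : ℤ)), v i m * u m) * v i n := by
  funext n
  by_cases hn : n ∈ Finset.Ico a (a + (l : ℤ))
  · simp_rw [Finset.sum_mul]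
    rw [Finset.sum_comm]
    have : ∀ m ∈ Finset.Ico a (a + (l : ℤ)), ∑ i, v i m * u m * v i n = if n = m then u m else 0 := by
      intro m hm
      have := h.compl n hn m hm
      calc ∑ i, v i m * u m * v i n = u m * ∑ i, v i n * v i m := by
            rw [Finset.mul_sum]; exact Finset.sum_congr rfl fun i _ => by ring
        _ = _ := by rw [this]; simp
    rw [Finset.sum_congr rfl this, Finset.sum_ite_eq, if_pos hn]
  · rw [hu n hn, Finset.sum_eq_zero]
    intro i _
    rw [h.supp i n hn, mul_zero]

lemma ES.parseval (h : ES g a l lam v) (u : ℤ → ℝ)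
    (hu : ∀ n, n ∉ Finset.Ico a (a + (l : ℤ)) → u n = 0) :
    ∑ n ∈ Finset.Ico a (a + (l : ℤ)), u n ^ 2
      = ∑ i, (∑ m ∈ Finset.Ico a (a + (l : ℤ)), v i m * u m) ^ 2 := by
  rw [← h.norm_comb]
  exact Finset.sum_congr rfl fun n _ => by rw [← congrFun (h.expand u hu) n]

lemma ES.res_sq (h : ES g a l lam v) (u : ℤ → ℝ)
    (hu : ∀ n, n ∉ Finset.Ico a (a + (l : ℤ)) → u n = 0) (E : ℝ) :
    ∑ n ∈ Finset.Ico a (a + (l : ℤ)), res g E u n ^ 2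
      = ∑ i, ((∑ m ∈ Finset.Ico a (a + (l : ℤ)), v i m * u m) * (lam i - E)) ^ 2 := by
  rw [← h.norm_comb]
  refine Finset.sum_congr rfl fun n hn => ?_
  rw [← h.res_comb _ _ n hn, ← h.expand u hu]

/-- quasimode lemma -/
lemma ES.quasi (h : ES g a l lam v) (u : ℤ → ℝ)
    (hu : ∀ n, n ∉ Finset.Ico a (a + (l : ℤ)) → u n = 0) (hne : ∃ n, u n ≠ 0) (E d : ℝ) (hd : 0 ≤ d)
    (hr : ∑ n ∈ Finset.Ico a (a + (l : ℤ)), res g E u n ^ 2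
      ≤ d ^ 2 * ∑ n ∈ Finset.Ico a (a + (l : ℤ)), u n ^ 2) : ∃ i, |lam i - E| ≤ d := by
  by_contra hcon
  push Not at hcon
  rw [h.res_sq u hu, h.parseval u hu, Finset.mul_sum] at hr
  have hle : ∀ i ∈ Finset.univ, d ^ 2 * (∑ m ∈ Finset.Ico a (a + (l : ℤ)), v i m * u m) ^ 2 ≤
      ((∑ m ∈ Finset.Ico a (a + (l : ℤ)), v i m * u m) * (lam i - E)) ^ 2 := by
    intro i _
    rw [mul_pow, mul_comm]
    apply mul_le_mul_of_nonneg_left _ (sq_nonneg _)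
    rw [← sq_abs (lam i - E)]
    exact pow_le_pow_left₀ hd (hcon i).le 2
  have heq := (Finset.sum_eq_sum_iff_of_le hle).1 (le_antisymm (Finset.sum_le_sum hle) hr)
  have hz : ∀ i, (∑ m ∈ Finset.Ico a (a + (l : ℤ)), v i m * u m) = 0 := by
    intro i
    by_contra hc
    have h1 := heq i (Finset.mem_univ _)
    rw [mul_pow, mul_comm] at h1
    have h2 := mul_left_cancel₀ (pow_ne_zero 2 hc) h1
    have h3 : d ^ 2 < (lam i - E) ^ 2 := by
      rw [← sq_abs (lam i - E)]
      exact pow_lt_pow_left₀ (hcon i) hd (by norm_num)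
    linarith
  obtain ⟨n, hn⟩ := hne
  apply hn
  rw [h.expand u hu]
  simp [hz]

lemma ES.ne (h : ES g a l lam v) (i : Ix a l) : ∃ n, v i n ≠ 0 := by
  by_contra hc
  push Not at hc
  have := h.orth i i
  simp [hc] at this

lemma ES.isEV (h : ES g a l lam v) (i : Ix a l) : IsEV g a l (lam i) :=
  ⟨v i, h.supp i, h.ne i, h.eqn i⟩

/-- Weyl perturbation -/
lemma ES.weyl (h : ES g a l lam v) (g' : ℤ → ℝ) (E d : ℝ) (hd : 0 ≤ d)
    (hg : ∀ n ∈ Finset.Ico a (a + (l : ℤ)), |g n - g' n| ≤ d) (hE : IsEV g' a l E) :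
    ∃ i, |lam i - E| ≤ d := by
  obtain ⟨u, hu, hne, heq⟩ := hE
  apply h.quasi u hu hne E d hd
  rw [Finset.mul_sum]
  refine Finset.sum_le_sum fun n hn => ?_
  have : res g E u n = (g n - g' n) * u n := by
    simp only [res]; linear_combination heq n hn
  rw [this, mul_pow]
  apply mul_le_mul_of_nonneg_right _ (sq_nonneg _)
  rw [← sq_abs (g n - g' n)]
  exact pow_le_pow_left₀ (abs_nonneg _) (hg n hn) 2

lemma ES.of_isEV (h : ES g a l lam v) {E : ℝ} (hE : IsEV g a l E) : ∃ i, lam i = E := by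
  obtain ⟨i, hi⟩ := h.weyl g E 0 le_rfl (by simp) hE
  exact ⟨i, by have := abs_nonpos_iff.1 hi; linarith⟩

lemma isEV_weyl {g g' : ℤ → ℝ} {a : ℤ} {l : ℕ} {E d : ℝ} (hd : 0 ≤ d)
    (hg : ∀ n ∈ Finset.Ico a (a + (l : ℤ)), |g n - g' n| ≤ d) (hE : IsEV g' a l E) :
    ∃ F, IsEV g a l F ∧ |F - E| ≤ d := by
  obtain ⟨lam, v, h⟩ := exists_ES g a l
  obtain ⟨i, hi⟩ := h.weyl g' E d hd hg hE
  exact ⟨lam i, h.isEV i, hi⟩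

lemma isEV_finset (g : ℤ → ℝ) (a : ℤ) (l : ℕ) :
    ∃ s : Finset ℝ, s.card ≤ l ∧ ∀ E, IsEV g a l E → E ∈ s := by
  classical
  obtain ⟨lam, v, h⟩ := exists_ES g a l
  refine ⟨Finset.univ.image lam, ?_, ?_⟩
  · refine Finset.card_image_le.trans ?_
    simp
  · intro E hE
    obtain ⟨i, hi⟩ := h.of_isEV hE
    exact Finset.mem_image.2 ⟨i, Finset.mem_univ _, hi⟩

lemma IsEV.congr {g g' : ℤ → ℝ} {a : ℤ} {l : ℕ} {E : ℝ} (h : IsEV g a l E)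
    (hg : ∀ n ∈ Finset.Ico a (a + (l : ℤ)), g n = g' n) : IsEV g' a l E := by
  obtain ⟨u, hu, hne, heq⟩ := h
  exact ⟨u, hu, hne, fun n hn => by rw [← hg n hn]; exact heq n hn⟩

lemma IsEV.shift {g : ℤ → ℝ} {a : ℤ} {l : ℕ} {E : ℝ} (h : IsEV g a l E) (t : ℝ) :
    IsEV (fun n => g n + t) a l (E + t) := by
  obtain ⟨u, hu, hne, heq⟩ := h
  exact ⟨u, hu, hne, fun n hn => by linear_combination heq n hn⟩

lemma IsEV.translate {g : ℤ → ℝ} {a : ℤ} {l : ℕ} {E : ℝ} (h : IsEV g a l E) (t : ℤ) :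
    IsEV (fun n => g (n - t)) (a + t) l E := by
  obtain ⟨u, hu, ⟨m, hm⟩, heq⟩ := h
  refine ⟨fun n => u (n - t), fun n hn => hu _ ?_, ⟨m + t, by simpa using hm⟩, fun n hn => ?_⟩
  · intro h; apply hn; rw [Finset.mem_Ico] at *; omega
  · have := heq (n - t) (by rw [Finset.mem_Ico] at *; omega)
    rw [← this]
    simp only
    rw [show n + 1 - t = n - t + 1 by ring, show n - 1 - t = n - t - 1 by ring]

lemma IsEV.reflect {g : ℤ → ℝ} {a : ℤ} {l : ℕ} {E : ℝ} (h : IsEV g a l E) (t : ℤ) :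
    IsEV (fun n => g (t - n)) (t - a - l + 1) l E := by
  obtain ⟨u, hu, ⟨m, hm⟩, heq⟩ := h
  refine ⟨fun n => u (t - n), fun n hn => hu _ ?_, ⟨t - m, by simpa using hm⟩, fun n hn => ?_⟩
  · intro h; apply hn; rw [Finset.mem_Ico] at *; omega
  · have := heq (t - n) (by rw [Finset.mem_Ico] at *; omega)
    rw [← this]
    simp only
    rw [show t - (n + 1) = t - n - 1 by ring, show t - (n - 1) = t - n + 1 by ring]
    ring

lemma IsEV.bound {g : ℤ → ℝ} {a : ℤ} {l : ℕ} {E M : ℝ} (h : IsEV g a l E)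
    (hg : ∀ n, |g n| ≤ M) : |E| ≤ M + 2 := by
  obtain ⟨u, hu, ⟨m, hm⟩, heq⟩ := h
  have hmI : m ∈ Finset.Ico a (a + (l : ℤ)) := by
    by_contra hc; exact hm (hu m hc)
  obtain ⟨x, hx, hmax⟩ := Finset.exists_max_image (Finset.Ico a (a + (l : ℤ))) (fun n => |u n|) ⟨m, hmI⟩
  have hall : ∀ n, |u n| ≤ |u x| := by
    intro n
    by_cases hn : n ∈ Finset.Ico a (a + (l : ℤ))
    · exact hmax n hn
    · rw [hu n hn, abs_zero]; exact abs_nonneg _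
  have hpos : 0 < |u x| := (abs_pos.2 hm).trans_le (hall m)
  have h1 : |E| * |u x| ≤ (M + 2) * |u x| := by
    rw [← abs_mul, ← heq x hx]
    calc _ ≤ |u (x + 1)| + |u (x - 1)| + |g x| * |u x| := by
          rw [← abs_mul]; exact abs_add_three _ _ _
      _ ≤ |u x| + |u x| + M * |u x| := by
          have e1 := hall (x + 1)
          have e2 := hall (x - 1)
          have e3 := mul_le_mul_of_nonneg_right (hg x) (abs_nonneg (u x))
          linarith
      _ = _ := by ring
  exact le_of_mul_le_mul_right h1 hpos

end


def cnt {a : ℤ} {l : ℕ} (lam : Ix a l → ℝ) (E η : ℝ) : ℕ :=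
  (Finset.univ.filter fun i => |lam i - E| < η).card

lemma res_low {g : ℤ → ℝ} {a : ℤ} {l : ℕ} {lam : Ix a l → ℝ} {v : Ix a l → ℤ → ℝ}
    (h : ES g a l lam v) (u : ℤ → ℝ) (ha : u (a - 1) = 0) (hb : u (a + l) = 0) (E η : ℝ) (hη : 0 ≤ η)
    (hlow : ∀ i, |lam i - E| < η → ∑ m ∈ Finset.Ico a (a + (l : ℤ)), v i m * u m = 0) :
    η ^ 2 * ∑ n ∈ Finset.Ico a (a + (l : ℤ)), u n ^ 2
      ≤ ∑ n ∈ Finset.Ico a (a + (l : ℤ)), res g E u n ^ 2 := by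
  set w : ℤ → ℝ := fun n => if n ∈ Finset.Ico a (a + (l : ℤ)) then u n else 0 with hw
  have hwu : ∀ n ∈ Finset.Ico a (a + (l : ℤ)), w n = u n := fun n hn => by simp only [hw]; rw [if_pos hn]
  have hw0 : ∀ n, n ∉ Finset.Ico a (a + (l : ℤ)) → w n = 0 := fun n hn => by
    simp only [hw]; rw [if_neg hn]
  have hext : ∀ n, a - 1 ≤ n → n ≤ a + l → w n = u n := by
    intro n h1 h2
    by_cases hn : n ∈ Finset.Ico a (a + (l : ℤ))
    · exact hwu n hn
    · rw [hw0 n hn]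
      rw [Finset.mem_Ico] at hn
      have : n = a - 1 ∨ n = a + l := by omega
      rcases this with rfl | rfl
      · exact ha.symm
      · exact hb.symm
  have e1 : ∑ n ∈ Finset.Ico a (a + (l : ℤ)), u n ^ 2 = ∑ n ∈ Finset.Ico a (a + (l : ℤ)), w n ^ 2 :=
    Finset.sum_congr rfl fun n hn => by rw [hwu n hn]
  have e2 : ∑ n ∈ Finset.Ico a (a + (l : ℤ)), res g E u n ^ 2
      = ∑ n ∈ Finset.Ico a (a + (l : ℤ)), res g E w n ^ 2 :=
    Finset.sum_congr rfl fun n hn => by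
      rw [Finset.mem_Ico] at hn
      simp only [res]
      rw [hext n (by omega) (by omega), hext (n+1) (by omega) (by omega),
        hext (n-1) (by omega) (by omega)]
  rw [e1, e2, h.res_sq w hw0, h.parseval w hw0, Finset.mul_sum]
  refine Finset.sum_le_sum fun i _ => ?_
  have e3 : ∑ m ∈ Finset.Ico a (a + (l : ℤ)), v i m * w m =
      ∑ m ∈ Finset.Ico a (a + (l : ℤ)), v i m * u m :=
    Finset.sum_congr rfl fun n hn => by rw [hwu n hn]
  rw [e3]
  by_cases hi : |lam i - E| < η
  · rw [hlow i hi]; simp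
  · push Not at hi
    rw [mul_pow, mul_comm]
    apply mul_le_mul_of_nonneg_left _ (sq_nonneg _)
    rw [← sq_abs (lam i - E)]
    exact pow_le_pow_left₀ hη hi 2

lemma cnt_cut {g : ℤ → ℝ} {a : ℤ} {l l1 l2 : ℕ} (hl : l = l1 + 1 + l2)
    {lam : Ix a l → ℝ} {v : Ix a l → ℤ → ℝ} (h : ES g a l lam v)
    {lam1 : Ix a l1 → ℝ} {v1 : Ix a l1 → ℤ → ℝ} (h1 : ES g a l1 lam1 v1)
    {lam2 : Ix (a + l1 + 1) l2 → ℝ} {v2 : Ix (a + l1 + 1) l2 → ℤ → ℝ}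
    (h2 : ES g (a + l1 + 1) l2 lam2 v2) (E η : ℝ) (hη : 0 < η) :
    cnt lam E η ≤ cnt lam1 E η + cnt lam2 E η + 1 := by
  classical
  by_contra hcon
  push Not at hcon
  obtain ⟨F, hF⟩ : ∃ F, F = Finset.univ.filter fun i => |lam i - E| < η := ⟨_, rfl⟩
  obtain ⟨F1, hF1⟩ : ∃ F, F = Finset.univ.filter fun i => |lam1 i - E| < η := ⟨_, rfl⟩
  obtain ⟨F2, hF2⟩ : ∃ F, F = Finset.univ.filter fun i => |lam2 i - E| < η := ⟨_, rfl⟩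
  have c0 : Fintype.card F = cnt lam E η := by
    rw [Fintype.card_coe, cnt, hF]
  have c1 : Fintype.card F1 = cnt lam1 E η := by
    rw [Fintype.card_coe, cnt, hF1]
  have c2 : Fintype.card F2 = cnt lam2 E η := by
    rw [Fintype.card_coe, cnt, hF2]
  let A : Matrix (F1 ⊕ (F2 ⊕ Unit)) F ℝ := Matrix.of fun r i =>
    match r with
    | Sum.inl k => ∑ m ∈ Finset.Ico a (a + (l1 : ℤ)), v1 k.1 m * v i.1 m
    | Sum.inr (Sum.inl k) => ∑ m ∈ Finset.Ico (a + l1 + 1) (a + l1 + 1 + (l2 : ℤ)), v2 k.1 m * v i.1 m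
    | Sum.inr (Sum.inr _) => v i.1 (a + l1)
  have hker : LinearMap.ker (Matrix.mulVecLin A) ≠ ⊥ := by
    apply LinearMap.ker_ne_bot_of_finrank_lt
    rw [Module.finrank_fintype_fun_eq_card, Module.finrank_fintype_fun_eq_card,
      Fintype.card_sum, Fintype.card_sum, c0, c1, c2]
    simp; omega
  obtain ⟨c, hc, hc0⟩ := (Submodule.ne_bot_iff _).1 hker
  have hAc : A.mulVec c = 0 := hc
  let d : Ix a l → ℝ := fun i => if hi : i ∈ F
    then c ⟨i, hi⟩ else 0
  have hdc : ∀ i : F, d i.1 = c i := fun i => by simp only [d]; rw [dif_pos i.2]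
  have hd0 : ∀ i, i ∉ F → d i = 0 := fun i hi => by
    simp only [d]; rw [dif_neg hi]
  let u : ℤ → ℝ := fun n => ∑ i, d i * v i n
  have hu : ∀ n, u n = ∑ i : F, v i.1 n * c i := by
    intro n
    simp only [u]
    rw [← Finset.sum_subset (Finset.subset_univ (F))
      (fun i _ hi => by rw [hd0 i hi, zero_mul])]
    rw [← Finset.sum_coe_sort]
    exact Finset.sum_congr rfl fun i _ => by rw [hdc i, mul_comm]
  have hux : u (a + l1) = 0 := by
    have := congrFun hAc (Sum.inr (Sum.inr ()))
    simp only [Matrix.mulVec, dotProduct, A, Matrix.of_apply, Pi.zero_apply] at this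
    rw [hu]; exact this
  have hu1 : ∀ i, |lam1 i - E| < η → ∑ m ∈ Finset.Ico a (a + (l1 : ℤ)), v1 i m * u m = 0 := by
    intro i hi
    have := congrFun hAc (Sum.inl ⟨i, by simpa [hF1, hF2] using hi⟩)
    simp only [Matrix.mulVec, dotProduct, A, Matrix.of_apply, Pi.zero_apply] at this
    rw [← this]
    simp_rw [hu, Finset.mul_sum, Finset.sum_mul]
    rw [Finset.sum_comm]
    exact Finset.sum_congr rfl fun _ _ => Finset.sum_congr rfl fun _ _ => by ring
  have hu2 : ∀ i, |lam2 i - E| < η →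
      ∑ m ∈ Finset.Ico (a + l1 + 1) (a + l1 + 1 + (l2 : ℤ)), v2 i m * u m = 0 := by
    intro i hi
    have := congrFun hAc (Sum.inr (Sum.inl ⟨i, by simpa [hF1, hF2] using hi⟩))
    simp only [Matrix.mulVec, dotProduct, A, Matrix.of_apply, Pi.zero_apply] at this
    rw [← this]
    simp_rw [hu, Finset.mul_sum, Finset.sum_mul]
    rw [Finset.sum_comm]
    exact Finset.sum_congr rfl fun _ _ => Finset.sum_congr rfl fun _ _ => by ring
  have hua : u (a - 1) = 0 := Finset.sum_eq_zero fun i _ => by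
    rw [h.supp i _ (by rw [Finset.mem_Ico]; omega), mul_zero]
  have hub : u (a + l) = 0 := Finset.sum_eq_zero fun i _ => by
    rw [h.supp i _ (by rw [Finset.mem_Ico]; omega), mul_zero]
  have r1 := res_low h1 u hua hux E η hη.le hu1
  have r2 := res_low h2 u (by rw [← hux]; congr 1; ring)
    (by rw [← hub]; congr 1; rw [hl]; push_cast; ring) E η hη.le hu2
  have split : ∀ f : ℤ → ℝ, ∑ n ∈ Finset.Ico a (a + (l : ℤ)), f n =
      ∑ n ∈ Finset.Ico a (a + (l1 : ℤ)), f n + (f (a + l1) +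
      ∑ n ∈ Finset.Ico (a + l1 + 1) (a + l1 + 1 + (l2 : ℤ)), f n) := by
    intro f
    have t1 : Finset.Ico a (a + (l : ℤ)) = Finset.Ico a (a + (l1 : ℤ)) ∪ ({a + (l1 : ℤ)} ∪
        Finset.Ico (a + l1 + 1) (a + l1 + 1 + (l2 : ℤ))) := by
      ext n; simp only [Finset.mem_union, Finset.mem_Ico, Finset.mem_singleton]; omega
    rw [t1, Finset.sum_union, Finset.sum_union, Finset.sum_singleton]
    · rw [Finset.disjoint_left]; intro n; simp only [Finset.mem_Ico, Finset.mem_singleton]; omega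
    · rw [Finset.disjoint_left]; intro n
      simp only [Finset.mem_union, Finset.mem_Ico, Finset.mem_singleton]; omega
  have t1 : ∑ n ∈ Finset.Ico a (a + (l : ℤ)), u n ^ 2 = ∑ i, d i ^ 2 := h.norm_comb d
  have t2 : ∑ n ∈ Finset.Ico a (a + (l : ℤ)), res g E u n ^ 2 = ∑ i, (d i * (lam i - E)) ^ 2 := by
    rw [← h.norm_comb]
    exact Finset.sum_congr rfl fun n hn => by rw [← h.res_comb d E n hn]
  have t3 : ∑ i, (d i * (lam i - E)) ^ 2 < η ^ 2 * ∑ i, d i ^ 2 := by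
    rw [Finset.mul_sum]
    have key : ∀ i, d i ≠ 0 → (d i * (lam i - E)) ^ 2 < η ^ 2 * d i ^ 2 := by
      intro i hi
      have hi' : i ∈ F := by
        by_contra hc; exact hi (hd0 i hc)
      have hlt := (Finset.mem_filter.1 (hF ▸ hi')).2
      rw [mul_pow, mul_comm]
      apply mul_lt_mul_of_pos_right _ (by positivity)
      rw [← sq_abs (lam i - E)]
      exact pow_lt_pow_left₀ hlt (abs_nonneg _) (by norm_num)
    apply Finset.sum_lt_sum
    · intro i _
      by_cases hi : d i = 0
      · simp [hi]
      · exact (key i hi).le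
    · have : ∃ i, c i ≠ 0 := by
        by_contra hc; push Not at hc; exact hc0 (funext hc)
      obtain ⟨i, hi⟩ := this
      exact ⟨i.1, Finset.mem_univ _, key i.1 (by rw [hdc]; exact hi)⟩
  rw [← t1, ← t2, split, split] at t3
  have := sq_nonneg (res g E u (a + l1))
  rw [hux] at t3
  nlinarith



def pF (g : ℤ → ℝ) (a : ℤ) : ℕ → Polynomial ℝ
  | 0 => 1
  | 1 => Polynomial.X - Polynomial.C (g a)
  | (k + 2) => (Polynomial.X - Polynomial.C (g (a + k + 1))) * pF g a (k + 1) - pF g a k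

def uF (g : ℤ → ℝ) (E : ℝ) (a : ℤ) : ℕ → ℝ
  | 0 => 1
  | 1 => E - g a
  | (k + 2) => (E - g (a + k + 1)) * uF g E a (k + 1) - uF g E a k

lemma eval_pF (g : ℤ → ℝ) (E : ℝ) (a : ℤ) : ∀ k, (pF g a k).eval E = uF g E a k
  | 0 => by simp [pF, uF]
  | 1 => by simp [pF, uF]
  | (k + 2) => by simp [pF, uF, eval_pF g E a (k+1), eval_pF g E a k]

lemma pF_monic (g : ℤ → ℝ) (a : ℤ) : ∀ k, (pF g a k).Monic ∧ (pF g a k).degree = k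
  | 0 => by simp [pF]
  | 1 => by
      simp only [pF]
      exact ⟨Polynomial.monic_X_sub_C _, by simpa using Polynomial.degree_X_sub_C _⟩
  | (k + 2) => by
      obtain ⟨m1, d1⟩ := pF_monic g a (k + 1)
      obtain ⟨m0, d0⟩ := pF_monic g a k
      have hm := (Polynomial.monic_X_sub_C (g (a + k + 1))).mul m1
      have hd : ((Polynomial.X - Polynomial.C (g (a + k + 1))) * pF g a (k + 1)).degree
          = ((k + 2 : ℕ) : WithBot ℕ) := by
        rw [Polynomial.degree_mul, Polynomial.degree_X_sub_C, d1]
        push_cast; ring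
      have hlt : (pF g a k).degree <
          ((Polynomial.X - Polynomial.C (g (a + k + 1))) * pF g a (k + 1)).degree := by
        rw [hd, d0]; exact_mod_cast (by omega : k < k + 2)
      refine ⟨?_, ?_⟩
      · simp only [pF]
        exact hm.sub_of_left hlt
      · simp only [pF]
        rw [Polynomial.degree_sub_eq_left_of_degree_lt hlt, hd]

lemma ev_form {g : ℤ → ℝ} {a : ℤ} {l : ℕ} {E : ℝ} {u : ℤ → ℝ}
    (ha : u (a - 1) = 0)
    (heq : ∀ n ∈ Finset.Ico a (a + (l : ℤ)), u (n + 1) + u (n - 1) + g n * u n = E * u n) :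
    ∀ k : ℕ, k ≤ l → u (a + k) = u a * uF g E a k
  | 0, _ => by simp [uF]
  | 1, hk => by
      have := heq a (by rw [Finset.mem_Ico]; omega)
      simp only [uF, Nat.cast_one]
      rw [ha] at this
      linear_combination this
  | (k + 2), hk => by
      have h1 := ev_form ha heq (k + 1) (by omega)
      have h0 := ev_form ha heq k (by omega)
      have := heq (a + k + 1) (by rw [Finset.mem_Ico]; omega)
      simp only [uF]
      push_cast at h1 ⊢
      rw [show a + (k : ℤ) + 1 - 1 = a + k by ring, show a + (k : ℤ) + 1 + 1 = a + (k + 2) by ring,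
        show a + (k : ℤ) + 1 = a + (k + 1) by ring, h1, h0] at this
      rw [show a + (k : ℤ) + 1 = a + (k + 1) by ring]
      linear_combination this

lemma ev_first {g : ℤ → ℝ} {a : ℤ} {l : ℕ} {E : ℝ} {u : ℤ → ℝ}
    (hu : ∀ n, n ∉ Finset.Ico a (a + (l : ℤ)) → u n = 0) (hne : ∃ n, u n ≠ 0)
    (heq : ∀ n ∈ Finset.Ico a (a + (l : ℤ)), u (n + 1) + u (n - 1) + g n * u n = E * u n) :
    u a ≠ 0 := by
  intro h0
  obtain ⟨n, hn⟩ := hne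
  have hmem : n ∈ Finset.Ico a (a + (l : ℤ)) := by by_contra hc; exact hn (hu n hc)
  rw [Finset.mem_Ico] at hmem
  have := ev_form (hu (a - 1) (by rw [Finset.mem_Ico]; omega)) heq (n - a).toNat (by omega)
  rw [show a + ((n - a).toNat : ℤ) = n by omega, h0, zero_mul] at this
  exact hn this

lemma ES.inj {g : ℤ → ℝ} {a : ℤ} {l : ℕ} {lam : Ix a l → ℝ} {v : Ix a l → ℤ → ℝ}
    (h : ES g a l lam v) : Function.Injective lam := by
  intro i k hik
  by_contra hne
  have h0 := h.orth i k
  rw [if_neg hne] at h0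
  have hai := ev_first (h.supp i) (h.ne i) (h.eqn i)
  have hak := ev_first (h.supp k) (h.ne k) (h.eqn k)
  have hmem : a ∈ Finset.Ico a (a + (l : ℤ)) := by
    by_contra hc; exact hai (h.supp i a hc)
  have hsupp := fun i => h.supp i (a - 1) (by rw [Finset.mem_Ico]; omega)
  have : ∀ n ∈ Finset.Ico a (a + (l : ℤ)), v i n * v k n = (v i a * v k a) * (uF g (lam i) a (n - a).toNat) ^ 2 := by
    intro n hn
    rw [Finset.mem_Ico] at hn
    have e1 := ev_form (hsupp i) (h.eqn i) (n - a).toNat (by omega)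
    have e2 := ev_form (hsupp k) (h.eqn k) (n - a).toNat (by omega)
    rw [show a + ((n - a).toNat : ℤ) = n by omega] at e1 e2
    rw [e1, e2, hik]; ring
  rw [Finset.sum_congr rfl this, ← Finset.mul_sum] at h0
  have hpos : 0 < ∑ n ∈ Finset.Ico a (a + (l : ℤ)), (uF g (lam i) a (n - a).toNat) ^ 2 := by
    apply Finset.sum_pos' (fun _ _ => sq_nonneg _)
    exact ⟨a, hmem, by simp [uF]⟩
  have := mul_ne_zero (mul_ne_zero hai hak) hpos.ne'
  exact this h0

lemma ES.prod {g : ℤ → ℝ} {a : ℤ} {l : ℕ} {lam : Ix a l → ℝ} {v : Ix a l → ℤ → ℝ}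
    (h : ES g a l lam v) (E : ℝ) : uF g E a l = ∏ i, (E - lam i) := by
  have hcard : Fintype.card (Ix a l) = l := by simp
  have hdeg : (∏ i, (Polynomial.X - Polynomial.C (lam i))).degree = (l : WithBot ℕ) := by
    rw [Polynomial.degree_prod]
    simp
  have hmon : (∏ i, (Polynomial.X - Polynomial.C (lam i))).Monic :=
    Polynomial.monic_prod_of_monic _ _ fun i _ => Polynomial.monic_X_sub_C _
  obtain ⟨m, d⟩ := pF_monic g a l
  have : pF g a l = ∏ i, (Polynomial.X - Polynomial.C (lam i)) := by
    apply Polynomial.eq_of_degree_sub_lt_of_eval_index_eq (v := lam) Finset.univ h.inj.injOn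
    · have := Polynomial.degree_sub_lt_left (d.trans hdeg.symm) m.ne_zero
        (m.leadingCoeff.trans hmon.leadingCoeff.symm)
      rw [d] at this
      rw [Finset.card_univ, hcard]
      exact this
    · intro i _
      rw [eval_pF, Polynomial.eval_prod, Finset.prod_eq_zero (Finset.mem_univ i) (by simp)]
      have e1 := ev_form (h.supp i (a - 1) (by rw [Finset.mem_Ico]; omega)) (h.eqn i) l le_rfl
      rw [h.supp i (a + l) (by rw [Finset.mem_Ico]; omega)] at e1
      have hai := ev_first (h.supp i) (h.ne i) (h.eqn i)
      exact (mul_eq_zero.1 e1.symm).resolve_left hai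
  rw [← eval_pF, this, Polynomial.eval_prod]
  simp

lemma transfer_uF (g : ℤ → ℝ) (E : ℝ) (k : ℤ) : ∀ n, transfer g E n k 0 0 = uF g E k n
  | 0 => by simp [transfer, uF]
  | 1 => by simp [transfer, uF]
  | (n + 2) => by
    have h1 := transfer_uF g E k (n + 1)
    have h0 := transfer_uF g E k n
    have h10 : transfer g E (n + 1) k 1 0 = transfer g E n k 0 0 := by
      rw [transfer]; simp [Matrix.mul_apply, Fin.sum_univ_two]
    rw [transfer]
    simp only [Matrix.mul_apply, Fin.sum_univ_two, uF]
    rw [h1, h10, h0]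
    push_cast
    simp
    ring_nf

lemma le_matNorm (A : Matrix (Fin 2) (Fin 2) ℝ) : |A 0 0| ≤ matNorm A :=
  le_ciSup (f := fun p : Fin 2 × Fin 2 => |A p.1 p.2|) (Set.finite_range _).bddAbove (0, 0)

lemma uF_bound {g : ℤ → ℝ} {E D : ℝ} (a : ℤ) (hD : ∀ n, |E - g n| + 1 ≤ D) :
    ∀ k, |uF g E a k| ≤ D ^ k
  | 0 => by simp [uF]
  | 1 => by simp only [uF, pow_one]; linarith [hD a]
  | (k + 2) => by
    have h1 := uF_bound a hD (k + 1)
    have h0 := uF_bound a hD k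
    simp only [uF]
    have hd := hD (a + k + 1)
    have hD1 : 1 ≤ D := by linarith [abs_nonneg (E - g (a + k + 1))]
    have hp : 0 ≤ D ^ k := by positivity
    calc _ ≤ |E - g (a + k + 1)| * |uF g E a (k + 1)| + |uF g E a k| := by
          rw [← abs_mul]; exact abs_sub _ _
      _ ≤ (D - 1) * D ^ (k + 1) + D ^ k := by
          have := mul_le_mul (by linarith : |E - g (a + k + 1)| ≤ D - 1) h1 (abs_nonneg _) (by linarith)
          linarith
      _ ≤ D ^ (k + 2) := by
          rw [pow_succ, pow_add]
          nlinarith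

lemma fwd (g : ℤ → ℝ) (E : ℝ) (a : ℤ) : ∃ u : ℤ → ℝ, u (a - 1) = 0 ∧
    (∀ k : ℕ, u (a + k) = uF g E a k) ∧
    ∀ n, a ≤ n → u (n + 1) + u (n - 1) + g n * u n = E * u n := by
  refine ⟨fun n => if n < a then 0 else uF g E a (n - a).toNat, ?_, ?_, ?_⟩
  · simp
  · intro k; simp
  · intro n hn
    obtain ⟨k, rfl⟩ : ∃ k : ℕ, n = a + k := ⟨(n - a).toNat, by omega⟩
    simp only
    rw [if_neg (show ¬ a + (k : ℤ) + 1 < a by omega), if_neg (show ¬ a + (k : ℤ) < a by omega)]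
    rcases k with _ | k
    · simp [uF]
    · rw [if_neg (by omega)]
      rw [show (a + ((k + 1 : ℕ) : ℤ) + 1 - a).toNat = k + 2 by omega,
        show (a + ((k + 1 : ℕ) : ℤ) - 1 - a).toNat = k by omega,
        show (a + ((k + 1 : ℕ) : ℤ) - a).toNat = k + 1 by omega]
      simp only [uF]
      push_cast
      ring_nf

lemma wronsk_const {g u w : ℤ → ℝ} {E : ℝ} {a : ℤ} (l : ℕ)
    (hu : ∀ n ∈ Finset.Ico a (a + (l : ℤ)), u (n + 1) + u (n - 1) + g n * u n = E * u n)
    (hw : ∀ n ∈ Finset.Ico a (a + (l : ℤ)), w (n + 1) + w (n - 1) + g n * w n = E * w n) :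
    ∀ k : ℕ, k ≤ l → u (a + k) * w (a + k - 1) - u (a + k - 1) * w (a + k) =
      u a * w (a - 1) - u (a - 1) * w a
  | 0, _ => by simp
  | (k + 1), hk => by
    rw [← wronsk_const l hu hw k (by omega)]
    have h1 := hu (a + k) (by rw [Finset.mem_Ico]; omega)
    have h2 := hw (a + k) (by rw [Finset.mem_Ico]; omega)
    push_cast
    rw [show a + ((k : ℤ) + 1) = a + k + 1 by ring, show a + (k : ℤ) + 1 - 1 = a + k by ring]
    linear_combination w (a + k) * h1 - u (a + k) * h2

lemma poisson {g ψ : ℤ → ℝ} {E D : ℝ} {a : ℤ} (k m : ℕ) (hD : ∀ n, |E - g n| + 1 ≤ D)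
    (hψ : ∀ n ∈ Finset.Ico a (a + ((k + 1 + m : ℕ) : ℤ)), ψ (n + 1) + ψ (n - 1) + g n * ψ n = E * ψ n) :
    |ψ (a + k)| * |uF g E a (k + 1 + m)| ≤
      |ψ (a + ((k + 1 + m : ℕ) : ℤ))| * D ^ k + |ψ (a - 1)| * D ^ m := by
  obtain ⟨u, u0, uk, ueq⟩ := fwd g E a
  set b := a + ((k + 1 + m : ℕ) : ℤ) with hb
  obtain ⟨w, w0, wk, weq⟩ := fwd (fun n => g (b - 1 - n)) E 0
  set v : ℤ → ℝ := fun n => w (b - 1 - n) with hv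
  have veq : ∀ n ∈ Finset.Ico a b, v (n + 1) + v (n - 1) + g n * v n = E * v n := by
    intro n hn
    rw [Finset.mem_Ico] at hn
    have := weq (b - 1 - n) (by omega)
    simp only [hv]
    rw [show b - 1 - (b - 1 - n) = n by ring] at this
    rw [show b - 1 - (n + 1) = b - 1 - n - 1 by ring, show b - 1 - (n - 1) = b - 1 - n + 1 by ring]
    linear_combination this
  have ueq' : ∀ n ∈ Finset.Ico a b, u (n + 1) + u (n - 1) + g n * u n = E * u n :=
    fun n hn => ueq n (Finset.mem_Ico.1 hn).1
  have ua : u a = 1 := by simpa [uF] using uk 0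
  have vb : v b = 0 := by simp only [hv]; rw [show b - 1 - b = 0 - 1 by ring]; exact w0
  have vb1 : v (b - 1) = 1 := by
    simp only [hv]; rw [show b - 1 - (b - 1) = 0 + ((0 : ℕ) : ℤ) by simp]; rw [wk]; simp [uF]
  have W1 := wronsk_const (k + 1 + m) ueq' veq (k + 1 + m) le_rfl
  have W1' := wronsk_const (k + 1 + m) ueq' veq (k + 1) (by omega)
  have W2 := wronsk_const (k + 1 + m) hψ ueq' (k + 1) (by omega)
  have W3 := wronsk_const (k + 1 + m) hψ veq (k + 1 + m) le_rfl
  have W3' := wronsk_const (k + 1 + m) hψ veq (k + 1) (by omega)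
  rw [← hb] at W1 W3
  rw [uk, vb, vb1] at W1
  rw [vb, vb1] at W3
  rw [u0, ua] at W2
  push_cast at W1' W2 W3'
  rw [show a + ((k : ℤ) + 1) - 1 = a + k by ring] at W1' W2 W3'
  have key : ψ (a + k) * uF g E a (k + 1 + m) = ψ b * u (a + k) + ψ (a - 1) * v (a + k) := by
    linear_combination (-ψ (a + k)) * W1' + ψ (a + k) * W1 + (u (a + k)) * (W3' - W3) - v (a + k) * W2
  rw [← abs_mul, key]
  have b1 : |u (a + k)| ≤ D ^ k := by rw [uk]; exact uF_bound a hD k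
  have b2 : |v (a + k)| ≤ D ^ m := by
    simp only [hv]
    rw [show b - 1 - (a + (k : ℤ)) = 0 + (m : ℤ) by rw [hb]; push_cast; ring, wk]
    exact uF_bound 0 (fun n => hD _) m
  calc _ ≤ |ψ b| * |u (a + k)| + |ψ (a - 1)| * |v (a + k)| := by
        rw [← abs_mul, ← abs_mul]; exact abs_add_le _ _
    _ ≤ _ := by gcongr



def om (h : ℝ) {A : ℤ} {n R : ℕ} (t : Ix A n → Fin (R + 1)) (x : ℤ) : ℝ :=
  h * ∑ y : Ix A n, if y.1 < x then ((t y : ℕ) : ℝ) else 0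

lemma om_update (h : ℝ) {A : ℤ} {n R : ℕ} (t : Ix A n → Fin (R + 1)) (b : Ix A n) (x : ℤ) :
    om h t x = om h (Function.update t b 0) x + if b.1 < x then h * ((t b : ℕ) : ℝ) else 0 := by
  have : ∑ y : Ix A n, (if y.1 < x then ((t y : ℕ) : ℝ) else 0) =
      ∑ y : Ix A n, ((if y.1 < x then (((Function.update t b 0) y : ℕ) : ℝ) else 0) +
        if y = b then (if b.1 < x then ((t b : ℕ) : ℝ) else 0) else 0) := by
    refine Finset.sum_congr rfl fun y _ => ?_
    by_cases hy : y = b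
    · subst hy; simp
    · simp [hy]
  unfold om
  rw [this, Finset.sum_add_distrib, Finset.sum_ite_eq' Finset.univ b, if_pos (Finset.mem_univ _),
    mul_add]
  congr 1
  split_ifs <;> simp

lemma om_bound {h : ℝ} (hh : 0 ≤ h) {A : ℤ} {n R : ℕ} (t : Ix A n → Fin (R + 1)) (x : ℤ) :
    0 ≤ om h t x ∧ om h t x ≤ h * (n * R) := by
  unfold om
  constructor
  · apply mul_nonneg hh
    exact Finset.sum_nonneg fun y _ => by split_ifs <;> positivity
  · apply mul_le_mul_of_nonneg_left _ hh
    calc _ ≤ ∑ y : Ix A n, (R : ℝ) := by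
          refine Finset.sum_le_sum fun y _ => ?_
          split_ifs
          · exact_mod_cast Nat.lt_succ_iff.1 (t y).2
          · positivity
      _ = _ := by simp

lemma fiber_card (G : ℤ → ℝ) {h : ℝ} (hh : 0 < h) {A : ℤ} {n R : ℕ} (b : Ix A n)
    (t' : Ix A n → Fin (R + 1)) (T : Finset (Ix A n → Fin (R + 1)))
    (a a' : ℤ) (l l' : ℕ) (hln : l ≤ n) (hln' : l' ≤ n) (hb : a + l ≤ b.1 + 1) (ha' : b.1 < a')
    (hT : ∀ t ∈ T, Function.update t b 0 = t' ∧ ∃ E F, IsEV (fun x => G x + om h t x) a l E ∧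
      IsEV (fun x => G x + om h t x) a' l' F ∧ |E - F| < h / 2) : T.card ≤ n ^ 2 := by
  classical
  obtain ⟨s1, c1, m1⟩ := isEV_finset (fun x => G x + om h t' x) a l
  obtain ⟨s2, c2, m2⟩ := isEV_finset (fun x => G x + om h t' x) a' l'
  have key : ∀ t ∈ T, ∃ p : ℝ × ℝ, p ∈ s1 ×ˢ s2 ∧ |p.1 - (p.2 + h * ((t b : ℕ) : ℝ))| < h / 2 := by
    intro t ht
    obtain ⟨hu, E, F, hE, hF, hEF⟩ := hT t ht
    refine ⟨(E, F - h * ((t b : ℕ) : ℝ)), Finset.mem_product.2 ⟨m1 _ ?_, m2 _ ?_⟩, ?_⟩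
    · refine hE.congr fun x hx => ?_
      rw [Finset.mem_Ico] at hx
      rw [om_update h t b x, hu, if_neg (by omega), add_zero]
    · have := (hF.shift (-(h * ((t b : ℕ) : ℝ))))
      refine IsEV.congr (g := fun x => G x + om h t x + -(h * ((t b : ℕ) : ℝ))) ?_ ?_
      · exact this
      · intro x hx
        rw [Finset.mem_Ico] at hx
        rw [om_update h t b x, hu, if_pos (by omega)]; ring
    · simpa using hEF
  choose! p hp hp' using key
  have hinj : Set.InjOn p T := by
    intro t ht t2 ht2 he
    have e1 := hp' t ht
    have e2 := hp' t2 ht2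
    rw [he] at e1
    have hb' : t b = t2 b := by
      by_contra hne
      have hne' : ((t b : ℕ) : ℤ) ≠ ((t2 b : ℕ) : ℤ) := by
        intro hc; apply hne; apply Fin.ext; exact_mod_cast hc
      have h1 : (1 : ℝ) ≤ |((t b : ℕ) : ℝ) - ((t2 b : ℕ) : ℝ)| := by
        have : (1 : ℤ) ≤ |((t b : ℕ) : ℤ) - ((t2 b : ℕ) : ℤ)| := Int.one_le_abs (sub_ne_zero.2 hne')
        exact_mod_cast this
      have h2 : |h * (((t b : ℕ) : ℝ) - ((t2 b : ℕ) : ℝ))| < h := by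
        rw [abs_lt] at *
        constructor <;> linarith [e1.1, e1.2, e2.1, e2.2]
      rw [abs_mul, abs_of_pos hh] at h2
      nlinarith
    have u1 := (hT t ht).1
    have u2 := (hT t2 ht2).1
    funext y
    by_cases hy : y = b
    · rw [hy, hb']
    · have := congrFun (u1.trans u2.symm) y
      simpa [hy] using this
  calc T.card ≤ (s1 ×ˢ s2).card := Finset.card_le_card_of_injOn p (fun t ht => hp t ht) hinj
    _ = s1.card * s2.card := Finset.card_product _ _
    _ ≤ n * n := Nat.mul_le_mul (c1.trans hln) (c2.trans hln')
    _ = n ^ 2 := by ring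

lemma card_fix {A : ℤ} {n R : ℕ} (b : Ix A n) (T : Finset (Ix A n → Fin (R + 1)))
    (hT : ∀ t ∈ T, t b = 0) : T.card ≤ (R + 1) ^ (n - 1) := by
  classical
  have hsub : T ⊆ Fintype.piFinset (Function.update (fun _ => Finset.univ) b {0}) := by
    intro t ht
    rw [Fintype.mem_piFinset]
    intro y
    by_cases hy : y = b
    · subst hy; simp [hT t ht]
    · simp [hy]
  refine (Finset.card_le_card hsub).trans ?_
  rw [Fintype.card_piFinset, ← Finset.mul_prod_erase _ _ (Finset.mem_univ b)]
  rw [Finset.prod_congr rfl (g := fun _ => R + 1)]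
  · simp
  · intro y hy
    rw [Function.update_of_ne (Finset.ne_of_mem_erase hy)]
    simp

lemma step (G : ℤ → ℝ) (A : ℤ) (n : ℕ) (hn : 1 ≤ n) (σ : ℝ) (hσ : 0 < σ) :
    ∃ ω : ℤ → ℝ, (∀ x, 0 ≤ ω x ∧ ω x ≤ σ) ∧
      ∀ (a a' : ℤ) (l l' : ℕ), A ≤ a → a + l ≤ a' → a' + l' ≤ A + n → ∀ E F : ℝ,
        IsEV (fun x => G x + ω x) a l E → IsEV (fun x => G x + ω x) a' l' F →
        σ / (2 * (n : ℝ) ^ 7) ≤ |E - F| := by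
  classical
  have hn0 : (0 : ℝ) < n := by exact_mod_cast hn
  set h : ℝ := σ / (n : ℝ) ^ 7 with hh
  have hpos : 0 < h := by positivity
  let T := Ix A n → Fin (n ^ 6 + 1)
  let Bad : Ix A n × Ix A n × Ix A n × Ix A n → Finset T := fun p =>
    Finset.univ.filter fun t => p.2.1.1 < p.2.2.1.1 ∧ ∃ E F,
      IsEV (fun x => G x + om h t x) p.1.1 (p.2.1.1 - p.1.1 + 1).toNat E ∧
      IsEV (fun x => G x + om h t x) p.2.2.1.1 (p.2.2.2.1 - p.2.2.1.1 + 1).toNat F ∧ |E - F| < h / 2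
  have hbad : ∀ p, (Bad p).card ≤ n ^ 2 * (n ^ 6 + 1) ^ (n - 1) := by
    intro p
    by_cases hp : p.1.1 ≤ p.2.1.1
    swap
    · have : Bad p = ∅ := by
        rw [Finset.eq_empty_iff_forall_notMem]
        intro t ht
        obtain ⟨_, _, E, F, ⟨u, hu, ⟨m, hm⟩, _⟩, _⟩ := Finset.mem_filter.1 ht
        apply hm; apply hu
        rw [Finset.mem_Ico]; omega
      rw [this]; simp
    have q1 := Finset.mem_Ico.1 p.1.2
    have q2 := Finset.mem_Ico.1 p.2.1.2
    have q3 := Finset.mem_Ico.1 p.2.2.1.2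
    have q4 := Finset.mem_Ico.1 p.2.2.2.2
    by_cases hp2 : p.2.1.1 < p.2.2.1.1
    swap
    · have : Bad p = ∅ := by
        rw [Finset.eq_empty_iff_forall_notMem]
        intro t ht
        exact hp2 (Finset.mem_filter.1 ht).2.1
      rw [this]; simp
    refine (Finset.card_le_mul_card_image (f := fun t : T => Function.update t p.2.1 0)
      (Bad p) (n ^ 2) ?_).trans (Nat.mul_le_mul_left _ (card_fix p.2.1 _ ?_))
    · intro t' _
      refine fiber_card G hpos p.2.1 t' _ p.1.1 p.2.2.1.1 (p.2.1.1 - p.1.1 + 1).toNat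
        (p.2.2.2.1 - p.2.2.1.1 + 1).toNat (by omega) (by omega) (by omega) hp2 ?_
      intro t ht
      obtain ⟨ht1, ht2⟩ := Finset.mem_filter.1 ht
      exact ⟨ht2, (Finset.mem_filter.1 ht1).2.2⟩
    · intro t ht
      obtain ⟨s, _, rfl⟩ := Finset.mem_image.1 ht
      simp
  have hcard : (Finset.univ.biUnion Bad).card < (Finset.univ : Finset T).card := by
    refine (Finset.card_biUnion_le_card_mul _ _ _ fun p _ => hbad p).trans_lt ?_
    have e1 : (Finset.univ : Finset (Ix A n × Ix A n × Ix A n × Ix A n)).card = n ^ 4 := by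
      simp [Fintype.card_prod]; ring
    have e2 : (Finset.univ : Finset T).card = (n ^ 6 + 1) ^ n := by
      simp [T]
    rw [e1, e2]
    obtain ⟨m, rfl⟩ : ∃ m, n = m + 1 := ⟨n - 1, by omega⟩
    rw [show m + 1 - 1 = m by omega, pow_succ ((m + 1) ^ 6 + 1) m]
    have : 0 < ((m + 1) ^ 6 + 1) ^ m := by positivity
    nlinarith
  obtain ⟨t, _, ht⟩ := Finset.exists_mem_notMem_of_card_lt_card hcard
  refine ⟨om h t, fun x => ?_, ?_⟩
  · obtain ⟨b1, b2⟩ := om_bound hpos.le t x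
    refine ⟨b1, b2.trans (le_of_eq ?_)⟩
    rw [hh]; push_cast; field_simp
  · intro a a' l l' h1 h2 h3 E F hE hF
    by_contra hcon
    push Not at hcon
    apply ht
    have hl : 1 ≤ l := by
      by_contra hc
      obtain ⟨u, hu, ⟨m, hm⟩, _⟩ := hE
      apply hm; apply hu; rw [Finset.mem_Ico]; omega
    have hl' : 1 ≤ l' := by
      by_contra hc
      obtain ⟨u, hu, ⟨m, hm⟩, _⟩ := hF
      apply hm; apply hu; rw [Finset.mem_Ico]; omega
    rw [Finset.mem_biUnion]
    refine ⟨(⟨a, by rw [Finset.mem_Ico]; omega⟩, ⟨a + l - 1, by rw [Finset.mem_Ico]; omega⟩,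
      ⟨a', by rw [Finset.mem_Ico]; omega⟩, ⟨a' + l' - 1, by rw [Finset.mem_Ico]; omega⟩),
      Finset.mem_univ _, ?_⟩
    refine Finset.mem_filter.2 ⟨Finset.mem_univ _, ?_, E, F, ?_, ?_, ?_⟩
    · simp only; omega
    · simp only
      rw [show (a + (l : ℤ) - 1 - a + 1).toNat = l by omega]; exact hE
    · simp only
      rw [show (a' + (l' : ℤ) - 1 - a' + 1).toNat = l' by omega]; exact hF
    · refine hcon.trans_le (le_of_eq ?_)
      rw [hh]; field_simp



def fold (B Q x : ℤ) : ℤ :=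
  B - (if (B - x) % (2 * Q) < Q then (B - x) % (2 * Q) else 2 * Q - 1 - (B - x) % (2 * Q))

lemma fold_mem {B Q : ℤ} (hQ : 0 < Q) (x : ℤ) : B - Q < fold B Q x ∧ fold B Q x ≤ B := by
  have h1 := Int.emod_nonneg (B - x) (show (2 * Q) ≠ 0 by omega)
  have h2 := Int.emod_lt_of_pos (B - x) (show 0 < 2 * Q by omega)
  unfold fold
  split_ifs <;> omega

lemma fold_cases {B Q : ℤ} (x : ℤ) :
    (∃ c, fold B Q x = x + 2 * Q * c) ∨ (∃ c, fold B Q x = 2 * B + 1 - x + 2 * Q * c) := by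
  have h := Int.emod_add_mul_ediv (B - x) (2 * Q)
  unfold fold
  split_ifs
  · left; exact ⟨(B - x) / (2 * Q), by linarith⟩
  · right; exact ⟨-(B - x) / (2 * Q) * 0 + (-1 - (B - x) / (2 * Q)), by linarith⟩

lemma fold_even {B Q : ℤ} (x c : ℤ) (h1 : B - (2 * c + 1) * Q < x) (h2 : x ≤ B - 2 * c * Q) :
    fold B Q x = x + 2 * c * Q := by
  have hm : (B - x) % (2 * Q) = B - x - 2 * c * Q := by
    have : B - x = (B - x - 2 * c * Q) + (2 * Q) * c := by ring
    rw [this, Int.add_mul_emod_self_left, Int.emod_eq_of_lt] <;> nlinarith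
  unfold fold
  rw [hm, if_pos (by nlinarith)]; ring

lemma fold_odd {B Q : ℤ} (x c : ℤ) (h1 : B - (2 * c + 2) * Q < x) (h2 : x ≤ B - (2 * c + 1) * Q) :
    fold B Q x = 2 * B + 1 - (2 * c + 2) * Q - x := by
  have hm : (B - x) % (2 * Q) = B - x - 2 * c * Q := by
    have : B - x = (B - x - 2 * c * Q) + (2 * Q) * c := by ring
    rw [this, Int.add_mul_emod_self_left, Int.emod_eq_of_lt] <;> nlinarith
  unfold fold
  rw [hm, if_neg (by nlinarith)]; ring

lemma fold_add {B Q : ℤ} (x c : ℤ) : fold B Q (x + 2 * Q * c) = fold B Q x := by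
  unfold fold
  rw [show B - (x + 2 * Q * c) = (B - x) + (2 * Q) * (-c) by ring, Int.add_mul_emod_self_left]

lemma exists_cell {Q : ℤ} (hQ : 0 < Q) (B x : ℤ) : ∃ k, B - (k + 1) * Q < x ∧ x ≤ B - k * Q := by
  refine ⟨(B - x) / Q, ?_, ?_⟩
  · have h1 := Int.emod_lt_of_pos (B - x) hQ
    have h := Int.emod_add_mul_ediv (B - x) Q
    linarith
  · have h1 := Int.emod_nonneg (B - x) hQ.ne'
    have h := Int.emod_add_mul_ediv (B - x) Q
    linarith

lemma fold_refl {B Q : ℤ} (hQ : 0 < Q) (x : ℤ) : fold B Q (2 * B + 1 - x) = fold B Q x := by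
  obtain ⟨k, h1, h2⟩ := exists_cell hQ B x
  rcases Int.even_or_odd' k with ⟨c, rfl | rfl⟩
  · rw [fold_even x c h1 h2, fold_odd (2 * B + 1 - x) (-c - 1) (by linarith) (by linarith)]; ring
  · rw [fold_odd x c (by linarith) h2, fold_even (2 * B + 1 - x) (-c - 1) (by linarith) (by linarith)]; ring

lemma fold_fold {B Q B' Q' : ℤ} (hQ : 0 < Q) (h1 : Q ∣ Q') (h2 : Q ∣ B' - B) (x : ℤ) :
    fold B Q (fold B' Q' x) = fold B Q x := by
  obtain ⟨d, rfl⟩ := h1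
  obtain ⟨e, he⟩ := h2
  rcases fold_cases (B := B') (Q := Q * d) x with ⟨c, hc⟩ | ⟨c, hc⟩
  · rw [hc, show x + 2 * (Q * d) * c = x + 2 * Q * (d * c) by ring, fold_add]
  · rw [hc, show 2 * B' + 1 - x + 2 * (Q * d) * c = 2 * B + 1 - x + 2 * Q * (d * c + e) by
      linear_combination 2 * he, fold_add, fold_refl hQ]

def Qn (q : ℕ) (j : ℕ) : ℕ := q ^ 2 ^ j
def Bn (q : ℕ) : ℕ → ℤ
  | 0 => 0
  | j + 1 => Bn q j + Qn q j

lemma Qn_succ (q j : ℕ) : Qn q (j + 1) = Qn q j ^ 2 := by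
  unfold Qn; rw [← pow_mul, pow_succ]

lemma Qn_ge {q : ℕ} (hq : 1000 ≤ q) (j : ℕ) : q ≤ Qn q j := by
  unfold Qn
  exact Nat.le_self_pow (by positivity) _

lemma Bn_Qn {q : ℕ} (hq : 1000 ≤ q) : ∀ j, 0 ≤ Bn q j ∧ 100 * Bn q j + 100 ≤ Qn q j
  | 0 => by simp [Bn, Qn]; omega
  | j + 1 => by
    obtain ⟨h1, h2⟩ := Bn_Qn hq j
    have h3 := Qn_ge hq j
    simp only [Bn]
    rw [Qn_succ]
    push_cast
    refine ⟨by positivity, ?_⟩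
    have : (1000 : ℤ) ≤ Qn q j := by exact_mod_cast hq.trans h3
    nlinarith

lemma Qn_dvd (q i k : ℕ) : Qn q i ∣ Qn q (i + k) := by
  unfold Qn
  exact pow_dvd_pow _ (Nat.pow_le_pow_right (by norm_num) (by omega))

lemma Bn_dvd (q i : ℕ) : ∀ k, (Qn q i : ℤ) ∣ Bn q (i + k) - Bn q i
  | 0 => by simp
  | k + 1 => by
    have h := Bn_dvd q i k
    have h2 : (Qn q i : ℤ) ∣ Qn q (i + k) := by exact_mod_cast Qn_dvd q i k
    rw [← add_assoc, Bn, show Bn q (i + k) + (Qn q (i + k) : ℤ) - Bn q i =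
      (Bn q (i + k) - Bn q i) + Qn q (i + k) by ring]
    exact dvd_add h h2

open Classical in
def stepω (G : ℤ → ℝ) (A : ℤ) (n : ℕ) (σ : ℝ) : ℤ → ℝ :=
  if h : 1 ≤ n ∧ 0 < σ then Classical.choose (step G A n h.1 σ h.2) else 0

def Gs (q : ℕ) (σ : ℕ → ℝ) : ℕ → ℤ → ℝ
  | 0 => fun _ => 0
  | j + 1 => fun x => Gs q σ j x + stepω (Gs q σ j) (Bn q j - Qn q j + 1) (Qn q j) (σ j)
      (fold (Bn q j) (Qn q j) x)

def gpot (q : ℕ) (σ : ℕ → ℝ) (x : ℤ) : ℝ := ⨆ j, Gs q σ j x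

structure Par (q : ℕ) (σ : ℕ → ℝ) : Prop where
  hq : 1000 ≤ q
  pos : ∀ j, 0 < σ j
  dec : ∀ j, 64 * (Qn q j : ℝ) ^ 7 * σ (j + 1) ≤ σ j

def eps (q : ℕ) (σ : ℕ → ℝ) (j : ℕ) : ℝ := σ j / (2 * (Qn q j : ℝ) ^ 7)

section
variable {q : ℕ} {σ : ℕ → ℝ}

lemma Par.Qpos (h : Par q σ) (j : ℕ) : 1000 ≤ Qn q j := h.hq.trans (Qn_ge h.hq j)
lemma Par.QposR (h : Par q σ) (j : ℕ) : (1000 : ℝ) ≤ Qn q j := by exact_mod_cast h.Qpos j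
lemma Par.QposZ (h : Par q σ) (j : ℕ) : (1000 : ℤ) ≤ Qn q j := by exact_mod_cast h.Qpos j

lemma Par.eps_pos (h : Par q σ) (j : ℕ) : 0 < eps q σ j := by
  have := h.QposR j
  have := h.pos j
  unfold eps; positivity

lemma Par.dec2 (h : Par q σ) (j : ℕ) : σ (j + 1) ≤ eps q σ j / 32 := by
  have h1 := h.QposR j
  have h2 := h.dec j
  unfold eps
  rw [div_div, le_div_iff₀ (by positivity)]
  linarith

lemma Par.dec3 (h : Par q σ) (j : ℕ) : 2 * σ (j + 1) ≤ σ j := by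
  have h1 := h.QposR j
  have h2 := h.dec j
  have h3 := h.pos (j + 1)
  have h4 : (1 : ℝ) ≤ (Qn q j : ℝ) ^ 7 := one_le_pow₀ (by linarith)
  nlinarith

lemma Par.step_spec (h : Par q σ) (j : ℕ) :
    (∀ x, 0 ≤ stepω (Gs q σ j) (Bn q j - Qn q j + 1) (Qn q j) (σ j) x ∧
      stepω (Gs q σ j) (Bn q j - Qn q j + 1) (Qn q j) (σ j) x ≤ σ j) ∧
      ∀ (a a' : ℤ) (l l' : ℕ), Bn q j - Qn q j + 1 ≤ a → a + l ≤ a' → a' + l' ≤ Bn q j + 1 →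
        ∀ E F : ℝ, IsEV (Gs q σ (j + 1)) a l E → IsEV (Gs q σ (j + 1)) a' l' F →
        eps q σ j ≤ |E - F| := by
  have hc : 1 ≤ Qn q j ∧ 0 < σ j := ⟨by have := h.Qpos j; omega, h.pos j⟩
  have hs := Classical.choose_spec (step (Gs q σ j) (Bn q j - Qn q j + 1) (Qn q j) hc.1 (σ j) hc.2)
  have he : stepω (Gs q σ j) (Bn q j - Qn q j + 1) (Qn q j) (σ j) =
    Classical.choose (step (Gs q σ j) (Bn q j - Qn q j + 1) (Qn q j) hc.1 (σ j) hc.2) := by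
    unfold stepω; rw [dif_pos hc]
  rw [← he] at hs
  refine ⟨hs.1, ?_⟩
  intro a a' l l' h1 h2 h3 E F hE hF
  have hid : ∀ x, Bn q j - Qn q j + 1 ≤ x → x ≤ Bn q j → Gs q σ (j + 1) x =
      Gs q σ j x + stepω (Gs q σ j) (Bn q j - Qn q j + 1) (Qn q j) (σ j) x := by
    intro x hx1 hx2
    simp only [Gs]
    rw [fold_even x 0 (by linarith) (by linarith)]
    simp
  refine hs.2 a a' l l' h1 h2 (by linarith) E F (hE.congr ?_) (hF.congr ?_)
  · intro x hx; rw [Finset.mem_Ico] at hx; exact hid x (by omega) (by omega)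
  · intro x hx; rw [Finset.mem_Ico] at hx; exact hid x (by omega) (by omega)

lemma Par.G_mono (h : Par q σ) (x : ℤ) : Monotone fun j => Gs q σ j x :=
  monotone_nat_of_le_succ fun j => by
    simp only [Gs]; linarith [((h.step_spec j).1 (fold (Bn q j) (Qn q j) x)).1]

lemma Par.G_anti (h : Par q σ) (x : ℤ) : Antitone fun j => Gs q σ j x + 2 * σ j :=
  antitone_nat_of_succ_le fun j => by
    simp only [Gs]
    linarith [((h.step_spec j).1 (fold (Bn q j) (Qn q j) x)).2, h.dec3 j]

lemma Par.G_le (h : Par q σ) (x : ℤ) (i j : ℕ) : Gs q σ i x ≤ Gs q σ j x + 2 * σ j := by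
  rcases le_total i j with hij | hij
  · have := h.G_mono x hij
    simp only at this
    linarith [h.pos j]
  · have := h.G_anti x hij
    simp only at this
    linarith [h.pos i]

lemma Par.le_g (h : Par q σ) (x : ℤ) (j : ℕ) : Gs q σ j x ≤ gpot q σ x :=
  le_ciSup (f := fun j => Gs q σ j x) ⟨_, by rintro _ ⟨i, rfl⟩; exact h.G_le x i j⟩ j

lemma Par.g_le (h : Par q σ) (x : ℤ) (j : ℕ) : gpot q σ x ≤ Gs q σ j x + 2 * σ j :=
  ciSup_le fun i => h.G_le x i j

lemma Par.g_close (h : Par q σ) (x : ℤ) (j : ℕ) : |gpot q σ x - Gs q σ j x| ≤ 2 * σ j := by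
  rw [abs_le]; constructor <;> linarith [h.le_g x j, h.g_le x j, h.pos j]

lemma Par.g_bound (h : Par q σ) (x : ℤ) : |gpot q σ x| ≤ 2 * σ 0 := by
  simpa [Gs] using h.g_close x 0

lemma Par.G_fold (h : Par q σ) (j : ℕ) : ∀ i, i ≤ j + 1 → ∀ x,
    Gs q σ i (fold (Bn q j) (Qn q j) x) = Gs q σ i x
  | 0, _, x => rfl
  | i + 1, hi, x => by
    simp only [Gs]
    obtain ⟨k, rfl⟩ : ∃ k, j = i + k := ⟨j - i, by omega⟩
    have hQ := h.QposZ i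
    rw [h.G_fold (i + k) i (by omega) x, fold_fold (by omega) (by exact_mod_cast Qn_dvd q i k) (Bn_dvd q i k)]

lemma Par.sep_G (h : Par q σ) (j : ℕ) (k a a' : ℤ) (l l' : ℕ) (h1 : Bn q j - (k + 1) * Qn q j < a)
    (h2 : a + l ≤ a') (h3 : a' + l' ≤ Bn q j - k * Qn q j + 1) (E F : ℝ)
    (hE : IsEV (Gs q σ (j + 1)) a l E) (hF : IsEV (Gs q σ (j + 1)) a' l' F) :
    eps q σ j ≤ |E - F| := by
  have hQ := h.QposZ j
  rcases Int.even_or_odd' k with ⟨c, rfl | rfl⟩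
  · have hE' := (hE.translate (2 * c * Qn q j))
    have hF' := (hF.translate (2 * c * Qn q j))
    have hid : ∀ x, a ≤ x - 2 * c * Qn q j → x - 2 * c * Qn q j < a' + l' →
        Gs q σ (j + 1) (x - 2 * c * Qn q j) = Gs q σ (j + 1) x := by
      intro x hx1 hx2
      rw [← h.G_fold j (j + 1) le_rfl (x - 2 * c * Qn q j),
        fold_even (x - 2 * c * Qn q j) c (by linarith) (by linarith)]
      congr 1; ring
    refine (h.step_spec j).2 (a + 2 * c * Qn q j) (a' + 2 * c * Qn q j) l l' (by linarith)
      (by linarith) (by linarith) E F (hE'.congr ?_) (hF'.congr ?_)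
    · intro x hx; rw [Finset.mem_Ico] at hx; exact hid x (by linarith) (by linarith)
    · intro x hx; rw [Finset.mem_Ico] at hx; exact hid x (by linarith) (by linarith)
  · set t := 2 * Bn q j + 1 - (2 * c + 2) * Qn q j with ht
    have hE' := (hE.reflect t)
    have hF' := (hF.reflect t)
    have hid : ∀ x, a ≤ t - x → t - x < a' + l' →
        Gs q σ (j + 1) (t - x) = Gs q σ (j + 1) x := by
      intro x hx1 hx2
      rw [← h.G_fold j (j + 1) le_rfl (t - x),
        fold_odd (t - x) c (by linarith) (by linarith)]
      congr 1; ring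
    rw [abs_sub_comm]
    refine (h.step_spec j).2 (t - a' - l' + 1) (t - a - l + 1) l' l (by linarith)
      (by linarith) (by linarith) F E (hF'.congr ?_) (hE'.congr ?_)
    · intro x hx; rw [Finset.mem_Ico] at hx; exact hid x (by linarith) (by linarith)
    · intro x hx; rw [Finset.mem_Ico] at hx; exact hid x (by linarith) (by linarith)

lemma Par.sep (h : Par q σ) (j : ℕ) (k a a' : ℤ) (l l' : ℕ) (h1 : Bn q j - (k + 1) * Qn q j < a)
    (h2 : a + l ≤ a') (h3 : a' + l' ≤ Bn q j - k * Qn q j + 1) (E F : ℝ)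
    (hE : IsEV (gpot q σ) a l E) (hF : IsEV (gpot q σ) a' l' F) :
    eps q σ j / 2 ≤ |E - F| := by
  have hc : ∀ n, |Gs q σ (j + 1) n - gpot q σ n| ≤ 2 * σ (j + 1) := fun n => by
    rw [abs_sub_comm]; exact h.g_close n (j + 1)
  have hp : 0 ≤ 2 * σ (j + 1) := by linarith [h.pos (j + 1)]
  obtain ⟨E', hE', e1⟩ := isEV_weyl hp (fun n _ => hc n) hE
  obtain ⟨F', hF', e2⟩ := isEV_weyl hp (fun n _ => hc n) hF
  have h4 := h.sep_G j k a a' l l' h1 h2 h3 E' F' hE' hF'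
  have h5 := h.dec2 j
  have h6 := h.eps_pos j
  have h7 : |E' - F'| ≤ |E - F| + |E' - E| + |F' - F| := by
    calc |E' - F'| = |(E - F) + (E' - E) + (-(F' - F))| := by ring_nf
      _ ≤ |E - F| + |E' - E| + |-(F' - F)| := abs_add_three _ _ _
      _ = _ := by rw [abs_neg]
  linarith
end



def lamOf (g : ℤ → ℝ) (a : ℤ) (l : ℕ) : Ix a l → ℝ := (exists_ES g a l).choose
def vOf (g : ℤ → ℝ) (a : ℤ) (l : ℕ) : Ix a l → ℤ → ℝ := (exists_ES g a l).choose_spec.choose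
lemma esOf (g : ℤ → ℝ) (a : ℤ) (l : ℕ) : ES g a l (lamOf g a l) (vOf g a l) :=
  (exists_ES g a l).choose_spec.choose_spec

def NN (g : ℤ → ℝ) (a : ℤ) (l : ℕ) (E η : ℝ) : ℕ := cnt (lamOf g a l) E η

lemma NN_pos {g : ℤ → ℝ} {a : ℤ} {l : ℕ} {E η : ℝ} (h : 1 ≤ NN g a l E η) :
    ∃ F, IsEV g a l F ∧ |F - E| < η := by
  obtain ⟨i, hi⟩ := Finset.card_pos.1
    (show 0 < (Finset.univ.filter fun i => |lamOf g a l i - E| < η).card from h)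
  exact ⟨_, (esOf g a l).isEV i, (Finset.mem_filter.1 hi).2⟩

lemma NN_cut (g : ℤ → ℝ) (a : ℤ) (l1 l2 : ℕ) (E η : ℝ) (hη : 0 < η) :
    NN g a (l1 + 1 + l2) E η ≤ NN g a l1 E η + NN g (a + l1 + 1) l2 E η + 1 :=
  cnt_cut rfl (esOf g a _) (esOf g a l1) (esOf g _ l2) E η hη

section
variable {q : ℕ} {σ : ℕ → ℝ}

lemma Par.NN_cell (h : Par q σ) (j : ℕ) (k a : ℤ) (l : ℕ) (h1 : Bn q j - (k + 1) * Qn q j < a)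
    (h3 : a + l ≤ Bn q j - k * Qn q j + 1) (E : ℝ) : NN (gpot q σ) a l E (eps q σ j / 4) ≤ 1 := by
  classical
  by_contra hcon
  push Not at hcon
  have hex : ∃ l1, 1 ≤ NN (gpot q σ) a l1 E (eps q σ j / 4) := ⟨l, by omega⟩
  have hs := Nat.find_spec hex
  have hle : Nat.find hex ≤ l := Nat.find_min' hex (by omega)
  have hmin : ∀ m, m < Nat.find hex → ¬ 1 ≤ NN (gpot q σ) a m E (eps q σ j / 4) :=
    fun m hm => Nat.find_min hex hm
  generalize Nat.find hex = l1 at hs hle hmin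
  rcases l1 with _ | m
  · obtain ⟨F, ⟨u, hu, ⟨n, hn⟩, _⟩, _⟩ := NN_pos hs
    apply hn; apply hu; rw [Finset.mem_Ico]; push_cast; omega
  · obtain ⟨l2, rfl⟩ : ∃ l2, l = m + 1 + l2 := ⟨l - (m + 1), by omega⟩
    have hc := NN_cut (gpot q σ) a m l2 E (eps q σ j / 4) (by linarith [h.eps_pos j])
    have hm := hmin m (by omega)
    obtain ⟨F1, e1, d1⟩ := NN_pos hs
    obtain ⟨F2, e2, d2⟩ := NN_pos (g := gpot q σ) (a := a + m + 1) (l := l2) (E := E)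
      (η := eps q σ j / 4) (by omega)
    have := h.sep j k a (a + m + 1) (m + 1) l2 h1 (by push_cast; linarith)
      (by push_cast at h3 ⊢; linarith) F1 F2 e1 e2
    rw [abs_lt] at d1 d2
    have : |F1 - F2| < eps q σ j / 2 := by rw [abs_lt]; constructor <;> linarith
    linarith

lemma Par.NN_cells (h : Par q σ) (j : ℕ) (E : ℝ) : ∀ (k : ℕ) (t a : ℤ) (l : ℕ),
    Bn q j - (t + 1) * Qn q j < a → a + l ≤ Bn q j - t * Qn q j + 1 + k * Qn q j →
    NN (gpot q σ) a l E (eps q σ j / 4) ≤ 2 * k + 1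
  | 0, t, a, l, h1, h2 => by
    have := h.NN_cell j t a l h1 (by simpa using h2) E
    omega
  | k + 1, t, a, l, h1, h2 => by
    have hQ := h.QposZ j
    by_cases ha : Bn q j - t * Qn q j < a
    · have := h.NN_cells j E k (t - 1) a l (by linarith) (by push_cast at h2; linarith)
      omega
    by_cases hl : a + l ≤ Bn q j - t * Qn q j + 1
    · have := h.NN_cell j t a l h1 hl E
      omega
    push Not at ha hl
    obtain ⟨l1, hl1⟩ : ∃ l1 : ℕ, (l1 : ℤ) = Bn q j - t * Qn q j - a :=
      ⟨(Bn q j - t * Qn q j - a).toNat, Int.toNat_of_nonneg (by linarith)⟩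
    obtain ⟨l2, rfl⟩ : ∃ l2, l = l1 + 1 + l2 := ⟨l - (l1 + 1), by
      have : (l1 : ℤ) + 1 < l := by linarith
      omega⟩
    have hc := NN_cut (gpot q σ) a l1 l2 E (eps q σ j / 4) (by linarith [h.eps_pos j])
    have c1 := h.NN_cell j t a l1 h1 (by linarith) E
    have c2 := h.NN_cells j E k (t - 1) (a + l1 + 1) l2 (by linarith)
      (by push_cast at h2; linarith)
    omega

lemma Par.NN_le (h : Par q σ) (j : ℕ) (E : ℝ) (a : ℤ) (l : ℕ) :
    (NN (gpot q σ) a l E (eps q σ j / 4) : ℝ) ≤ 2 * (l / Qn q j) + 3 := by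
  have hQ := h.QposZ j
  obtain ⟨t, h1, h2⟩ := exists_cell (by omega : (0 : ℤ) < Qn q j) (Bn q j) a
  have := h.NN_cells j E (l / Qn q j + 1) t a l h1 (by
    have h3 : l < (l / Qn q j + 1) * Qn q j := by
      have := Nat.lt_div_mul_add (a := l) (b := Qn q j) (by omega)
      linarith
    have h4 : (l : ℤ) < ((l / Qn q j + 1 : ℕ) : ℤ) * Qn q j := by exact_mod_cast h3
    linarith)
  have h5 : ((l / Qn q j : ℕ) : ℝ) ≤ (l : ℝ) / Qn q j := Nat.cast_div_le
  have h6 : (NN (gpot q σ) a l E (eps q σ j / 4) : ℝ) ≤ ((2 * (l / Qn q j + 1) + 1 : ℕ) : ℝ) := by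
    exact_mod_cast this
  push_cast at h6
  linarith
end

lemma layer (η : ℕ → ℝ) (hpos : ∀ j, 0 < η j) (hanti : ∀ j, η (j + 1) ≤ η j) (x : ℝ) (hx : 0 < x) :
    ∀ J, log (η 0) - ∑ j ∈ Finset.range J, (if x < η j then (log (η j) - log (η (j + 1))) else 0)
      - (if x < η J then (log (η J) - log x) else 0) ≤ log x
  | 0 => by
    simp only [Finset.range_zero, Finset.sum_empty]
    split_ifs with h
    · linarith
    · have := Real.log_le_log (hpos 0) (not_lt.1 h); linarith
  | J + 1 => by
    have ih := layer η hpos hanti x hx J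
    rw [Finset.sum_range_succ]
    have hs := hanti J
    have key : (if x < η J then (log (η J) - log x) else 0) ≤
        (if x < η J then (log (η J) - log (η (J + 1))) else 0) +
        (if x < η (J + 1) then (log (η (J + 1)) - log x) else 0) := by
      by_cases h1 : x < η J
      · by_cases h2 : x < η (J + 1)
        · simp [h1, h2]
        · have := Real.log_le_log (hpos (J + 1)) (not_lt.1 h2)
          simp [h1, h2]; linarith
      · have h2 : ¬ x < η (J + 1) := by linarith
        simp [h1, h2]
    linarith

lemma sum_layer (η : ℕ → ℝ) (hpos : ∀ j, 0 < η j) (hanti : ∀ j, η (j + 1) ≤ η j)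
    (g : ℤ → ℝ) (a : ℤ) (l : ℕ) (E d : ℝ) (hd : 0 < d)
    (hE : ∀ F, IsEV g a l F → d ≤ |F - E|) (J : ℕ) :
    (l : ℝ) * log (η 0) - ∑ j ∈ Finset.range J, NN g a l E (η j) * (log (η j) - log (η (j + 1)))
      - NN g a l E (η J) * (max 0 (log (η J) - log d)) ≤ log |uF g E a l| := by
  have hes := esOf g a l
  rw [hes.prod E, Finset.abs_prod, Real.log_prod]
  swap
  · intro i _ h0
    have := hE _ (hes.isEV i)
    rw [abs_sub_comm, h0] at this
    linarith
  have h1 : ∀ i ∈ (Finset.univ : Finset (Ix a l)), log (η 0) - ∑ j ∈ Finset.range J,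
      (if |lamOf g a l i - E| < η j then (log (η j) - log (η (j + 1))) else 0)
      - (if |lamOf g a l i - E| < η J then max 0 (log (η J) - log d) else 0) ≤
        log |E - lamOf g a l i| := by
    intro i _
    have hx := hE _ (hes.isEV i)
    rw [abs_sub_comm E]
    have := layer η hpos hanti |lamOf g a l i - E| (by linarith) J
    have hl := Real.log_le_log hd hx
    have : (if |lamOf g a l i - E| < η J then (log (η J) - log |lamOf g a l i - E|) else 0) ≤
      (if |lamOf g a l i - E| < η J then max 0 (log (η J) - log d) else 0) := by
      split_ifs
      · exact le_trans (by linarith) (le_max_right _ _)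
      · exact le_rfl
    linarith
  refine le_trans (le_of_eq ?_) (Finset.sum_le_sum h1)
  rw [Finset.sum_sub_distrib, Finset.sum_sub_distrib, Finset.sum_comm]
  have hN : ∀ (η' c : ℝ), ∑ i : Ix a l, (if |lamOf g a l i - E| < η' then c else 0)
      = NN g a l E η' * c := by
    intro η' c
    rw [← Finset.sum_filter, Finset.sum_const, nsmul_eq_mul]; rfl
  simp_rw [hN]
  simp



def sg (b : ℝ) (q : ℕ) (K : ℝ) : ℕ → ℝ
  | 0 => 4 * (q : ℝ) ^ 7 * K
  | j + 1 => exp (-(b * (2 * (Bn q j : ℝ) + 1)))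

lemma exists_q (b : ℝ) (hb : 0 < b) : ∃ q : ℕ, 1000 ≤ q ∧ ∀ K, 16 ≤ K → Par q (sg b q K) := by
  obtain ⟨q, hq⟩ := exists_nat_ge (max 1000 (64 * (Nat.factorial 15 : ℝ) / (2 * b) ^ 15))
  have hq1 : 1000 ≤ q := by exact_mod_cast (le_max_left _ _).trans hq
  have hq2 := (le_max_right _ _).trans hq
  refine ⟨q, hq1, fun K hK => ⟨hq1, ?_, ?_⟩⟩
  · rintro (_ | j)
    · have : (1000 : ℝ) ≤ q := by exact_mod_cast hq1
      simp only [sg]; positivity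
    · exact exp_pos _
  · rintro (_ | j)
    · have : (1000 : ℝ) ≤ q := by exact_mod_cast hq1
      simp only [sg, Bn, Qn]
      have h1 : exp (-(b * (2 * ((0 : ℤ) : ℝ) + 1))) ≤ 1 := by
        rw [exp_le_one_iff]; push_cast; nlinarith
      have h2 : (0 : ℝ) < (q : ℝ) ^ 7 := by positivity
      push_cast at h1 ⊢
      simp only [pow_zero, pow_one]
      nlinarith
    · simp only [sg]
      have hx : (q : ℝ) ≤ Qn q j := by exact_mod_cast Qn_ge hq1 j
      set x : ℝ := (Qn q j : ℝ) with hxd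
      have hQ : (Qn q (j + 1) : ℝ) = x ^ 2 := by rw [Qn_succ]; push_cast; rfl
      have hB : (Bn q (j + 1) : ℝ) = Bn q j + x := by simp only [Bn]; push_cast; rfl
      have hx0 : 0 < x := by
        have : (1000 : ℝ) ≤ q := by exact_mod_cast hq1
        linarith
      have key : 64 * x ^ 14 ≤ exp (2 * b * x) := by
        refine le_trans ?_ (Real.pow_div_factorial_le_exp (2 * b * x) (by positivity) 15)
        rw [le_div_iff₀ (by positivity)]
        have h3 : 64 * (Nat.factorial 15 : ℝ) ≤ x * (2 * b) ^ 15 := by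
          rw [← div_le_iff₀ (by positivity)]; linarith
        have h4 : 0 < x ^ 14 := by positivity
        calc 64 * x ^ 14 * (Nat.factorial 15 : ℝ) = 64 * (Nat.factorial 15 : ℝ) * x ^ 14 := by ring
          _ ≤ x * (2 * b) ^ 15 * x ^ 14 := mul_le_mul_of_nonneg_right h3 h4.le
          _ = _ := by ring
      rw [hQ, hB]
      calc 64 * (x ^ 2) ^ 7 * exp (-(b * (2 * (Bn q j + x) + 1)))
          = 64 * x ^ 14 * exp (-(b * (2 * (Bn q j + x) + 1))) := by ring
        _ ≤ exp (2 * b * x) * exp (-(b * (2 * (Bn q j + x) + 1))) := by gcongr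
        _ = _ := by rw [← exp_add]; congr 1; ring

section
variable {q : ℕ} {σ : ℕ → ℝ} {b K : ℝ}

lemma Par.Q4 (h : Par q σ) : ∀ j, 1000 * (4 : ℝ) ^ j ≤ Qn q j
  | 0 => by simpa using h.QposR 0
  | j + 1 => by
    have ih := h.Q4 j
    have := h.QposR j
    rw [Qn_succ, pow_succ]; push_cast
    nlinarith

lemma Par.eps_anti (h : Par q σ) (j : ℕ) : eps q σ (j + 1) ≤ eps q σ j := by
  have h1 := h.dec2 j
  have h2 := h.eps_pos j
  have h3 : eps q σ (j + 1) ≤ σ (j + 1) := by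
    unfold eps
    apply div_le_self (h.pos _).le
    have := h.QposR (j + 1)
    have : (1 : ℝ) ≤ (Qn q (j + 1) : ℝ) ^ 7 := one_le_pow₀ (by linarith)
    linarith
  linarith

lemma Par.B_le (h : Par q σ) (j : ℕ) : (Bn q j : ℝ) ≤ 2 * √(Qn q j) := by
  rcases j with _ | i
  · simp [Bn]
  · have h1 := (Bn_Qn h.hq i).2
    rw [Qn_succ]; push_cast
    rw [Real.sqrt_sq (by positivity)]
    simp only [Bn]; push_cast
    have h2 : (Bn q i : ℝ) ≤ Qn q i := by
      have : Bn q i ≤ Qn q i := by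
        have := (Bn_Qn h.hq i).1
        linarith
      exact_mod_cast this
    linarith

lemma Par.eps0 (h : Par q (sg b q K)) : eps q (sg b q K) 0 / 4 = K / 2 := by
  have := h.QposR 0
  have hq : (1000 : ℝ) ≤ q := by exact_mod_cast h.hq
  unfold eps
  simp only [sg, Qn, pow_zero, pow_one]
  field_simp

lemma Par.log_eps (h : Par q (sg b q K)) (hb : 0 < b) (j : ℕ) :
    -log (eps q (sg b q K) (j + 1) / 4) ≤ (5 * b + 30) * √(Qn q j) := by
  have hQ := h.QposR j
  have hs : (31 : ℝ) ≤ √(Qn q j) := by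
    apply Real.le_sqrt_of_sq_le; linarith
  have hss : √(Qn q j : ℝ) ^ 2 = Qn q j := Real.sq_sqrt (by linarith)
  have hB := h.B_le j
  have e : eps q (sg b q K) (j + 1) / 4 =
      exp (-(b * (2 * (Bn q j : ℝ) + 1))) / (8 * √(Qn q j) ^ 28) := by
    unfold eps
    simp only [sg]
    rw [Qn_succ]; push_cast
    rw [← hss, div_div]
    simp only [Real.sqrt_sq (by positivity : (0 : ℝ) ≤ √(Qn q j))]
    congr 1; ring
  rw [e, Real.log_div (exp_pos _).ne' (by positivity), Real.log_exp, Real.log_mul (by norm_num) (by positivity),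
    Real.log_pow]
  have l1 : log (√(Qn q j)) ≤ √(Qn q j) - 1 := Real.log_le_sub_one_of_pos (by linarith)
  have l2 : log 8 ≤ 8 - 1 := Real.log_le_sub_one_of_pos (by norm_num)
  push_cast
  nlinarith

lemma sum_half (J : ℕ) : ∑ j ∈ Finset.range J, ((1 : ℝ) / 2) ^ j ≤ 2 := sum_geometric_two_le J

lemma Par.good (h : Par q (sg b q K)) (hb : 0 < b) (hK1 : 1 < K) (D : ℝ) (hD : 0 ≤ D)
    (hK : 1 + 2 * (5 * b + 30) + 5 * D ≤ 0.015 * log K) (a : ℤ) (l : ℕ) (hl : 1000 ≤ l) (E : ℝ)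
    (hE : ∀ F, IsEV (gpot q (sg b q K)) a l F → exp (-(D * l)) ≤ |F - E|) :
    0.97 * l * log K ≤ log |uF (gpot q (sg b q K)) E a l| := by
  classical
  set σ := sg b q K with hσ
  set g := gpot q σ with hg
  set η : ℕ → ℝ := fun j => eps q σ j / 4 with hη
  have hηpos : ∀ j, 0 < η j := fun j => by simp only [hη]; linarith [h.eps_pos j]
  have hηanti : ∀ j, η (j + 1) ≤ η j := fun j => by simp only [hη]; linarith [h.eps_anti j]
  have hη0 : η 0 = K / 2 := h.eps0
  have hlK : 0 < log K := by nlinarith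
  have hηK : ∀ j, log (η j) ≤ log K := by
    intro j
    apply Real.log_le_log (hηpos j)
    calc η j ≤ η 0 := antitone_nat_of_succ_le hηanti (Nat.zero_le j)
      _ ≤ K := by rw [hη0]; linarith
  have hex : ∃ J, l < Qn q J := by
    refine ⟨l, ?_⟩
    have h1 := h.Q4 l
    have h2 : (l : ℝ) < 2 ^ l := by exact_mod_cast Nat.lt_two_pow_self
    have h3 : (2 : ℝ) ^ l ≤ 4 ^ l := pow_le_pow_left₀ (by norm_num) (by norm_num) l
    have : (l : ℝ) < Qn q l := by nlinarith
    exact_mod_cast this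
  have hJ := Nat.find_spec hex
  have hmin : ∀ j, j < Nat.find hex → Qn q j ≤ l := fun j hj => not_lt.1 (Nat.find_min hex hj)
  generalize Nat.find hex = J at hJ hmin
  have main := sum_layer η hηpos hηanti g a l E (exp (-(D * l))) (exp_pos _) hE J
  have hl' : (1000 : ℝ) ≤ l := by exact_mod_cast hl
  -- the tail term
  have t1 : (NN g a l E (η J) : ℝ) * max 0 (log (η J) - log (exp (-(D * l)))) ≤
      5 * (log K + D * l) := by
    have hN := h.NN_le J E a l
    have hJ' : (l : ℝ) < Qn q J := by exact_mod_cast hJ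
    have : (l : ℝ) / Qn q J ≤ 1 := by rw [div_le_one (by linarith)]; exact hJ'.le
    have hm : max 0 (log (η J) - log (exp (-(D * l)))) ≤ log K + D * l := by
      apply max_le
      · positivity
      · rw [Real.log_exp]; linarith [hηK J]
    exact mul_le_mul (by linarith) hm (le_max_left _ _) (by norm_num)
  have t2 : ∑ j ∈ Finset.range J, (NN g a l E (η j) : ℝ) * (log (η j) - log (η (j + 1))) ≤
      (l : ℝ) * (log K / 100 + (5 * b + 30)) := by
    have tj : ∀ j ∈ Finset.range J, (NN g a l E (η j) : ℝ) * (log (η j) - log (η (j + 1))) ≤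
        (l : ℝ) * (log K / 200 + (5 * b + 30) * (5 / 31)) * (1 / 2) ^ j := by
      intro j hj
      have hQl : (Qn q j : ℝ) ≤ l := by exact_mod_cast hmin j (Finset.mem_range.1 hj)
      have hQ := h.QposR j
      have hN := h.NN_le j E a l
      have h1 : 1 ≤ (l : ℝ) / Qn q j := by rw [le_div_iff₀ (by linarith)]; linarith
      have hN' : (NN g a l E (η j) : ℝ) ≤ 5 * (l / Qn q j) := by linarith
      have hΔ : log (η j) - log (η (j + 1)) ≤ log K + (5 * b + 30) * √(Qn q j) := by
        have := h.log_eps hb j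
        linarith [hηK j]
      have hΔ0 : 0 ≤ log (η j) - log (η (j + 1)) := by
        have := Real.log_le_log (hηpos (j + 1)) (hηanti j); linarith
      have q4 := h.Q4 j
      have hp : (0 : ℝ) < 2 ^ j := by positivity
      have hs : 31 * (2 : ℝ) ^ j ≤ √(Qn q j) := by
        apply Real.le_sqrt_of_sq_le
        rw [mul_pow, ← pow_mul, mul_comm j 2, pow_mul]; norm_num
        have : (0 : ℝ) < 4 ^ j := by positivity
        linarith
      have hs0 : 0 < √(Qn q j : ℝ) := by linarith
      have hss : √(Qn q j : ℝ) * √(Qn q j) = Qn q j := Real.mul_self_sqrt (by linarith)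
      have i1 : 1 / (Qn q j : ℝ) ≤ (1 / 1000) * (1 / 2) ^ j := by
        have h24 : (2 : ℝ) ^ j ≤ 4 ^ j := pow_le_pow_left₀ (by norm_num) (by norm_num) j
        rw [div_pow, one_pow, div_mul_div_comm, one_mul]
        apply one_div_le_one_div_of_le (by positivity); linarith
      have i2 : 1 / √(Qn q j : ℝ) ≤ (1 / 31) * (1 / 2) ^ j := by
        rw [div_pow, one_pow, div_mul_div_comm, one_mul]
        apply one_div_le_one_div_of_le (by positivity); linarith
      calc (NN g a l E (η j) : ℝ) * (log (η j) - log (η (j + 1)))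
          ≤ 5 * (l / Qn q j) * (log K + (5 * b + 30) * √(Qn q j)) :=
            mul_le_mul hN' hΔ hΔ0 (by positivity)
        _ = 5 * l * (log K * (1 / Qn q j) + (5 * b + 30) * (1 / √(Qn q j))) := by
            have hq1 : √(Qn q j : ℝ) / Qn q j = 1 / √(Qn q j) := by
              rw [div_eq_div_iff (by linarith) hs0.ne']; linarith
            rw [← hq1]; ring
        _ ≤ 5 * l * (log K * ((1 / 1000) * (1 / 2) ^ j) + (5 * b + 30) * ((1 / 31) * (1 / 2) ^ j)) := by
            gcongr
        _ = _ := by ring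
    refine (Finset.sum_le_sum tj).trans ?_
    rw [← Finset.mul_sum]
    have hc : 0 ≤ (l : ℝ) * (log K / 200 + (5 * b + 30) * (5 / 31)) := by positivity
    calc _ ≤ (l : ℝ) * (log K / 200 + (5 * b + 30) * (5 / 31)) * 2 :=
          mul_le_mul_of_nonneg_left (sum_half J) hc
      _ ≤ _ := by nlinarith
  have t3 : log K - 1 ≤ log (η 0) := by
    rw [hη0, Real.log_div (by linarith) (by norm_num)]
    have : log 2 ≤ 2 - 1 := Real.log_le_sub_one_of_pos (by norm_num)
    linarith
  have t4 : (l : ℝ) * (log K - 1) ≤ l * log (η 0) := mul_le_mul_of_nonneg_left t3 (by linarith)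
  have t5 : 5 * log K ≤ 0.005 * (l * log K) := by nlinarith
  have t6 : (l : ℝ) * (1 + 2 * (5 * b + 30) + 5 * D) ≤ l * (0.015 * log K) :=
    mul_le_mul_of_nonneg_left hK (by linarith)
  have t7 : 0 ≤ (l : ℝ) * (5 * b + 30) := by positivity
  linarith

lemma exists_B_ge (h : Par q σ) (x : ℤ) : ∃ j, x ≤ Bn q j := by
  have : ∀ j : ℕ, (j : ℤ) ≤ Bn q j := by
    intro j
    induction j with
    | zero => simp [Bn]
    | succ j ih => simp only [Bn]; push_cast; linarith [h.QposZ j]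
  exact ⟨x.toNat, le_trans (by omega) (this _)⟩

lemma Par.sepN (h : Par q (sg b q K)) (hb : 0 < b) (N : ℕ) (hN : 1 ≤ N) (a a' : ℤ) (l l' : ℕ)
    (h1 : -(5 * N : ℤ) ≤ a) (h2 : a + l ≤ a') (h3 : a' + l' ≤ 5 * N + 1) (E F : ℝ)
    (hE : IsEV (gpot q (sg b q K)) a l E) (hF : IsEV (gpot q (sg b q K)) a' l' F) :
    2 * exp (-((11 * b + 14 * log q + 150) * N)) ≤ |E - F| := by
  classical
  have hex := exists_B_ge h (5 * N)
  have hs := Nat.find_spec hex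
  have hmin : ∀ j, j < Nat.find hex → Bn q j < 5 * N := fun j hj => not_le.1 (Nat.find_min hex hj)
  generalize Nat.find hex = j at hs hmin
  have hBQ := Bn_Qn h.hq j
  have key := h.sep j 0 a a' l l' (by linarith) h2 (by linarith) E F hE hF
  refine le_trans ?_ key
  have hq : (1000 : ℝ) ≤ q := by exact_mod_cast h.hq
  have hN' : (1 : ℝ) ≤ N := by exact_mod_cast hN
  rcases j with _ | i
  · simp only [Bn] at hs; omega
  have hBi := hmin i (by omega)
  have hQ : (Qn q (i + 1) : ℝ) ≤ 625 * (q : ℝ) ^ 2 * (N : ℝ) ^ 4 := by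
    rcases i with _ | i
    · rw [Qn_succ]; simp only [Qn, pow_zero, pow_one]; push_cast
      have : (1 : ℝ) ≤ (N : ℝ) ^ 4 := one_le_pow₀ hN'
      nlinarith [sq_nonneg (q : ℝ)]
    · simp only [Bn] at hBi
      have hB0 := (Bn_Qn h.hq i).1
      have hQi : (Qn q i : ℝ) ≤ 5 * N := by
        have : (Qn q i : ℤ) ≤ 5 * N := by linarith
        exact_mod_cast this
      rw [Qn_succ, Qn_succ]; push_cast
      have h0 : (0 : ℝ) ≤ Qn q i := by positivity
      calc (((Qn q i : ℝ) ^ 2) ^ 2) ≤ ((5 * N) ^ 2) ^ 2 := by gcongr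
        _ = 625 * 1 * (N : ℝ) ^ 4 := by ring
        _ ≤ _ := by gcongr; nlinarith
  have hBi' : (Bn q i : ℝ) ≤ 5 * N := by exact_mod_cast hBi.le
  unfold eps
  simp only [sg]
  have hQ0 := h.QposR (i + 1)
  rw [div_div, le_div_iff₀ (by positivity)]
  have e5 : (625 : ℝ) ≤ exp 16 := by
    have h5 : (5 : ℝ) ≤ exp 4 := by have := Real.add_one_le_exp (4 : ℝ); linarith
    calc (625 : ℝ) = 5 ^ 4 := by norm_num
      _ ≤ (exp 4) ^ 4 := by gcongr
      _ = exp 16 := by rw [← exp_nat_mul]; norm_num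
  have e8 : (8 : ℝ) ≤ exp 7 := by have := Real.add_one_le_exp (7 : ℝ); linarith
  have eN : (N : ℝ) ≤ exp N := by have := Real.add_one_le_exp (N : ℝ); linarith
  have eq : (q : ℝ) = exp (log q) := (Real.exp_log (by linarith)).symm
  have hlq : 0 ≤ log q := Real.log_nonneg (by linarith)
  have big : 8 * (Qn q (i + 1) : ℝ) ^ 7 ≤ exp ((14 * log q + 150) * N) := by
    calc 8 * (Qn q (i + 1) : ℝ) ^ 7 ≤ 8 * (625 * (q : ℝ) ^ 2 * (N : ℝ) ^ 4) ^ 7 := by gcongr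
      _ ≤ exp 7 * (exp 16 * (exp (log q)) ^ 2 * (exp N) ^ 4) ^ 7 := by
          rw [← eq]; gcongr
      _ = exp (7 + 7 * (16 + 2 * log q + 4 * N)) := by
          rw [← exp_nat_mul, ← exp_nat_mul, ← exp_add, ← exp_add, ← exp_nat_mul, ← exp_add]
          congr 1; 
      _ ≤ _ := by
          apply exp_le_exp.2
          nlinarith
  calc 2 * exp (-((11 * b + 14 * log q + 150) * N)) * (2 * (Qn q (i + 1) : ℝ) ^ 7 * 2)
      = exp (-((11 * b + 14 * log q + 150) * N)) * (8 * (Qn q (i + 1) : ℝ) ^ 7) := by ring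
    _ ≤ exp (-((11 * b + 14 * log q + 150) * N)) * exp ((14 * log q + 150) * N) := by gcongr
    _ = exp (-(11 * b * N)) := by rw [← exp_add]; congr 1; ring
    _ ≤ _ := by apply exp_le_exp.2; nlinarith
end


lemma limsup_eq_of {ι : Type*} {f : Filter ι} {u : ι → ℝ} {b : ℝ}
    (h1 : ∀ ε > 0, ∀ᶠ n in f, u n ≤ b + ε) (h2 : ∀ ε > 0, ∃ᶠ n in f, b - ε ≤ u n) :
    limsup u f = b := by
  have hc : f.IsCoboundedUnder (· ≤ ·) u := IsCoboundedUnder.of_frequently_ge (h2 1 one_pos)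
  have hb : f.IsBoundedUnder (· ≤ ·) u := isBoundedUnder_of_eventually_le (h1 1 one_pos)
  apply le_antisymm
  · apply le_of_forall_pos_le_add
    intro ε hε
    exact limsup_le_of_le hc (h1 ε hε)
  · apply le_of_forall_pos_le_add
    intro ε hε
    have := le_limsup_of_frequently_le (h2 ε hε) hb
    linarith

lemma isEV_one (g : ℤ → ℝ) (x : ℤ) : IsEV g x 1 (g x) := by
  refine ⟨fun n => if n = x then 1 else 0, ?_, ⟨x, by simp⟩, ?_⟩
  · intro n hn
    have : n ≠ x := by rintro rfl; apply hn; simp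
    simp [this]
  · intro n hn
    have : n = x := by rw [Finset.mem_Ico] at hn; push_cast at hn; omega
    subst this
    simp

section
variable {q : ℕ} {σ : ℕ → ℝ} {b K : ℝ}

lemma Par.pt_sep (h : Par q σ) (j : ℕ) (x y : ℤ)
    (hxy : fold (Bn q j) (Qn q j) x ≠ fold (Bn q j) (Qn q j) y) :
    eps q σ j / 2 ≤ |gpot q σ x - gpot q σ y| := by
  have hQ := h.QposZ j
  have key : ∀ x y : ℤ, fold (Bn q j) (Qn q j) x < fold (Bn q j) (Qn q j) y →
      eps q σ j ≤ |Gs q σ (j + 1) x - Gs q σ (j + 1) y| := by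
    intro x y hlt
    rw [← h.G_fold j (j + 1) le_rfl x, ← h.G_fold j (j + 1) le_rfl y]
    have hx := fold_mem (B := Bn q j) (Q := Qn q j) (by omega) x
    have hy := fold_mem (B := Bn q j) (Q := Qn q j) (by omega) y
    exact h.sep_G j 0 _ _ 1 1 (by linarith) (by push_cast; omega) (by push_cast; linarith) _ _ (isEV_one _ _) (isEV_one _ _)
  have key' : eps q σ j ≤ |Gs q σ (j + 1) x - Gs q σ (j + 1) y| := by
    rcases lt_or_gt_of_ne hxy with hlt | hlt
    · exact key x y hlt
    · rw [abs_sub_comm]; exact key y x hlt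
  have c1 := h.g_close x (j + 1)
  have c2 := h.g_close y (j + 1)
  have h5 := h.dec2 j
  have h6 := h.eps_pos j
  have h7 : |Gs q σ (j + 1) x - Gs q σ (j + 1) y| ≤ |gpot q σ x - gpot q σ y| +
      |gpot q σ x - Gs q σ (j + 1) x| + |gpot q σ y - Gs q σ (j + 1) y| := by
    calc _ = |(gpot q σ x - gpot q σ y) + (-(gpot q σ x - Gs q σ (j + 1) x)) + (gpot q σ y - Gs q σ (j + 1) y)| := by ring_nf
      _ ≤ _ + |-(gpot q σ x - Gs q σ (j + 1) x)| + _ := abs_add_three _ _ _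
      _ = _ := by rw [abs_neg]
  linarith

lemma Par.S_bdd (h : Par q σ) (n : ℤ) :
    BddAbove (Set.range fun m : ℤ => |gpot q σ (n - m) - gpot q σ m|) := by
  refine ⟨4 * σ 0, ?_⟩
  rintro _ ⟨m, rfl⟩
  have h1 := abs_le.1 (h.g_bound (n - m))
  have h2 := abs_le.1 (h.g_bound m)
  simp only
  rw [abs_le]; constructor <;> linarith

lemma Par.refl_close (h : Par q σ) (j : ℕ) (m : ℤ) :
    |gpot q σ (2 * Bn q j + 1 - m) - gpot q σ m| ≤ 4 * σ (j + 1) := by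
  have hQ := h.QposZ j
  have e : Gs q σ (j + 1) (2 * Bn q j + 1 - m) = Gs q σ (j + 1) m := by
    rw [← h.G_fold j (j + 1) le_rfl, fold_refl (by omega), h.G_fold j (j + 1) le_rfl]
  have c1 := abs_le.1 (h.g_close (2 * Bn q j + 1 - m) (j + 1))
  have c2 := abs_le.1 (h.g_close m (j + 1))
  rw [abs_le]; constructor <;> linarith

lemma Par.fold_id (h : Par q σ) (j : ℕ) (x : ℤ) (hx : -(Bn q j) - 2 ≤ x) (hx' : x ≤ Bn q j) :
    fold (Bn q j) (Qn q j) x = x := by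
  have := Bn_Qn h.hq j
  rw [fold_even x 0 (by linarith) (by linarith)]; ring

lemma Par.exists_level (h : Par q σ) (n : ℤ) (hn : n ≠ 0) :
    ∃ i, (∃ m, fold (Bn q i) (Qn q i) (n - m) ≠ fold (Bn q i) (Qn q i) m) ∧
      ∀ j, i = j + 1 → 2 * Bn q j + 1 ≤ |n| := by
  classical
  have hex : ∃ i, ∃ m, fold (Bn q i) (Qn q i) (n - m) ≠ fold (Bn q i) (Qn q i) m := by
    obtain ⟨i, hi⟩ := exists_B_ge h |n|
    refine ⟨i, 0, ?_⟩
    have h1 := abs_le.1 hi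
    have h2 := abs_nonneg n
    rw [h.fold_id i _ (by linarith) (by linarith), h.fold_id i 0 (by linarith) (by linarith)]
    simpa using hn
  refine ⟨Nat.find hex, Nat.find_spec hex, ?_⟩
  intro j hj
  have hm : ∀ m, fold (Bn q j) (Qn q j) (n - m) = fold (Bn q j) (Qn q j) m := by
    have := Nat.find_min hex (m := j) (by omega)
    push Not at this
    exact this
  have hB := Bn_Qn h.hq j
  have hQ := h.QposZ j
  have h0 := hm 0
  have h1 := hm (-1)
  rw [h.fold_id j 0 (by linarith) (by linarith)] at h0
  rw [h.fold_id j (-1) (by linarith) (by linarith)] at h1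
  have key : ∃ c, n = 2 * Bn q j + 1 + 2 * (Qn q j * c) := by
    rcases fold_cases (B := Bn q j) (Q := Qn q j) (n - 0) with ⟨c, hc⟩ | ⟨c, hc⟩
    · rcases fold_cases (B := Bn q j) (Q := Qn q j) (n - -1) with ⟨d, hd⟩ | ⟨d, hd⟩
      · exfalso
        have h3 : (Qn q j : ℤ) * (c - d) = 1 := by nlinarith
        have := Int.eq_one_or_neg_one_of_mul_eq_one h3
        omega
      · exact ⟨d, by nlinarith⟩
    · exact ⟨c, by nlinarith⟩
  obtain ⟨c, hc⟩ := key
  rcases le_or_gt 0 c with h0 | h0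
  · have : 0 ≤ (Qn q j : ℤ) * c := by positivity
    rw [le_abs]; left; omega
  · have : (Qn q j : ℤ) * c ≤ -(Qn q j) := by nlinarith
    rw [le_abs]; right; linarith

lemma Par.S_upper (h : Par q (sg b q K)) (hb : 0 < b) : ∃ C : ℝ, ∀ n : ℤ, n ≠ 0 →
    -Real.log (⨆ m : ℤ, |gpot q (sg b q K) (n - m) - gpot q (sg b q K) m|) ≤
      b * |(n : ℝ)| + (C + 28 * Real.log |(n : ℝ)|) ∧
    0 < ⨆ m : ℤ, |gpot q (sg b q K) (n - m) - gpot q (sg b q K) m| := by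
  have hq : (1000 : ℝ) ≤ q := by exact_mod_cast h.hq
  have hlq : 0 ≤ log q := Real.log_nonneg (by linarith)
  refine ⟨log 4 + 14 * log q + |log (eps q (sg b q K) 0 / 2)|, ?_⟩
  intro n hn
  obtain ⟨i, ⟨m, hm⟩, hi⟩ := h.exists_level n hn
  have h1 := h.pt_sep i _ _ hm
  have h2 := h1.trans (le_ciSup (h.S_bdd n) m)
  have hp := h.eps_pos i
  refine ⟨?_, by linarith⟩
  have h3 := Real.log_le_log (by linarith) h2
  have hn1 : (1 : ℝ) ≤ |(n : ℝ)| := by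
    have := Int.one_le_abs hn
    exact_mod_cast this
  have hln := Real.log_nonneg hn1
  have hl4 : 0 ≤ log 4 := Real.log_nonneg (by norm_num)
  rcases i with _ | j
  · have := neg_abs_le (log (eps q (sg b q K) 0 / 2))
    have : 0 ≤ b * |(n : ℝ)| := by positivity
    linarith
  · have hj := hi j rfl
    have hj' : 2 * (Bn q j : ℝ) + 1 ≤ |(n : ℝ)| := by exact_mod_cast hj
    have hQ := h.QposR j
    have e : log (eps q (sg b q K) (j + 1) / 2) = -(b * (2 * (Bn q j : ℝ) + 1)) - (log 4 + 14 * log (Qn q j)) := by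
      unfold eps
      simp only [sg]
      rw [Qn_succ]; push_cast
      rw [div_div, Real.log_div (exp_pos _).ne' (by positivity), Real.log_exp,
        show 2 * (((Qn q j : ℝ) ^ 2) ^ 7) * 2 = 4 * (Qn q j : ℝ) ^ 14 by ring,
        Real.log_mul (by norm_num) (by positivity), Real.log_pow]
      push_cast; ring
    have hQn : log (Qn q j) ≤ log q + 2 * log |(n : ℝ)| := by
      rcases j with _ | j
      · simp only [Qn, pow_zero, pow_one]; linarith
      · have hB0 := (Bn_Qn h.hq j).1
        have hQ' := h.QposR j
        have : (Qn q j : ℝ) ≤ |(n : ℝ)| := by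
          have h5 : (0 : ℝ) ≤ Bn q j := by exact_mod_cast hB0
          simp only [Bn] at hj'; push_cast at hj'
          linarith
        have h6 := Real.log_le_log (by linarith) this
        rw [Qn_succ]; push_cast
        rw [Real.log_pow]; push_cast
        linarith
    rw [e] at h3
    have h8 : b * (2 * (Bn q j : ℝ) + 1) ≤ b * |(n : ℝ)| := mul_le_mul_of_nonneg_left hj' hb.le
    have := abs_nonneg (log (eps q (sg b q K) 0 / 2))
    linarith

lemma tendsto_abs_cofinite : Tendsto (fun n : ℤ => |(n : ℝ)|) cofinite atTop := by
  have : Tendsto (fun n : ℤ => ‖n‖) cofinite atTop := by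
    rw [← Filter.cocompact_eq_cofinite] 
    exact tendsto_norm_cocompact_atTop
  simpa [Int.norm_eq_abs] using this

lemma Par.delta (h : Par q (sg b q K)) (hb : 0 < b) : deltaPot (gpot q (sg b q K)) = b := by
  obtain ⟨C, hC⟩ := h.S_upper hb
  unfold deltaPot
  apply limsup_eq_of
  · intro ε hε
    have t1 : Tendsto (fun x : ℝ => (C + 28 * log x) / x) atTop (nhds 0) := by
      have a1 : Tendsto (fun x : ℝ => C / x) atTop (nhds 0) := tendsto_const_nhds.div_atTop tendsto_id
      have a2 : Tendsto (fun x : ℝ => log x / x) atTop (nhds 0) :=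
        Real.isLittleO_log_id_atTop.tendsto_div_nhds_zero
      have := a1.add (a2.const_mul 28)
      simp only [mul_zero, add_zero] at this
      refine this.congr fun x => ?_
      ring
    have t2 := (t1.comp tendsto_abs_cofinite).eventually (gt_mem_nhds hε)
    have t3 : ∀ᶠ n : ℤ in cofinite, n ≠ 0 := by
      rw [Filter.eventually_cofinite]; simp
    filter_upwards [t2, t3] with n hn hn0
    have hp : 0 < |(n : ℝ)| := by positivity
    have h1 := (hC n hn0).1
    simp only [Function.comp] at hn
    rw [div_lt_iff₀ hp] at hn
    rw [div_le_iff₀ hp]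
    linarith
  · intro ε hε
    have t : Tendsto (fun j : ℕ => (2 * Bn q j + 1 : ℤ)) atTop atTop := by
      apply tendsto_atTop_mono (f := fun j : ℕ => (j : ℤ)) _ tendsto_natCast_atTop_atTop
      intro j
      have : ∀ j : ℕ, (j : ℤ) ≤ Bn q j := by
        intro j
        induction j with
        | zero => simp [Bn]
        | succ j ih => simp only [Bn]; push_cast; linarith [h.QposZ j]
      have := this j
      omega
    have tR : Tendsto (fun j : ℕ => ((2 * Bn q j + 1 : ℤ) : ℝ)) atTop atTop :=
      tendsto_intCast_atTop_atTop.comp t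
    have tc : Tendsto (fun j : ℕ => (2 * Bn q j + 1 : ℤ)) atTop cofinite := by
      refine t.mono_right ?_
      exact atTop_le_cofinite
    refine tc.frequently (p := fun n : ℤ => b - ε ≤ -Real.log (⨆ m : ℤ, |gpot q (sg b q K) (n - m) - gpot q (sg b q K) m|) / |(n : ℝ)|) ?_
    apply Eventually.frequently
    filter_upwards [tR.eventually_ge_atTop (log 4 / ε), tR.eventually_ge_atTop 1] with j hj hj1
    set n : ℤ := 2 * Bn q j + 1 with hn
    have hn0 : n ≠ 0 := by
      intro h0; rw [h0] at hj1; norm_num at hj1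
    have hS := (hC n hn0).2
    have hS2 : (⨆ m : ℤ, |gpot q (sg b q K) (n - m) - gpot q (sg b q K) m|) ≤ 4 * sg b q K (j + 1) :=
      ciSup_le fun m => h.refl_close j m
    have h3 := Real.log_le_log hS hS2
    simp only [sg] at h3
    rw [Real.log_mul (by norm_num) (exp_pos _).ne', Real.log_exp] at h3
    have hnn : (2 * (Bn q j : ℝ) + 1) = (n : ℝ) := by rw [hn]; push_cast; rfl
    rw [hnn] at h3
    rw [abs_of_pos (by linarith : (0 : ℝ) < n), le_div_iff₀ (by linarith)]
    rw [div_le_iff₀ hε] at hj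
    linarith
end


def Cn (b : ℝ) (q : ℕ) : ℝ := 11 * b + 14 * log q + 150

structure Big (b : ℝ) (q : ℕ) (K : ℝ) : Prop where
  par : Par q (sg b q K)
  hb : 0 < b
  K16 : 16 ≤ K
  K1 : 1 + 2 * (5 * b + 30) + 5 * Cn b q ≤ 0.015 * log K
  K2 : log (16 * (q : ℝ) ^ 7 * K + 3) ≤ 1.01 * log K

lemma Big.Cn_nonneg {b : ℝ} {q : ℕ} {K : ℝ} (h : Big b q K) : 0 ≤ Cn b q := by
  have hq : (1000 : ℝ) ≤ q := by exact_mod_cast h.par.hq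
  have hlq : 0 ≤ log q := Real.log_nonneg (by linarith)
  have := h.hb
  unfold Cn; positivity

lemma exists_Big (b L : ℝ) (hb : 0 < b) : ∃ q K, Big b q K ∧ L ≤ 0.97 * log K := by
  obtain ⟨q, hq, hK⟩ := exists_q b hb
  have hq' : (1000 : ℝ) ≤ q := by exact_mod_cast hq
  have h1 : ∀ᶠ K : ℝ in atTop, 16 ≤ K := eventually_ge_atTop 16
  have h2 := Real.tendsto_log_atTop.eventually_ge_atTop ((1 + 2 * (5 * b + 30) + 5 * Cn b q) / 0.015)
  have h3 := Real.tendsto_log_atTop.eventually_ge_atTop (L / 0.97)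
  have h4 := Real.tendsto_log_atTop.eventually_ge_atTop (log (17 * (q : ℝ) ^ 7) / 0.01)
  obtain ⟨K, k1, k2, k3, k4⟩ := (h1.and (h2.and (h3.and h4))).exists
  rw [div_le_iff₀ (by norm_num)] at k2 k3 k4
  refine ⟨q, K, ⟨hK K k1, hb, k1, by linarith, ?_⟩, by linarith⟩
  have : log (16 * (q : ℝ) ^ 7 * K + 3) ≤ log (17 * (q : ℝ) ^ 7 * K) := by
    apply Real.log_le_log (by positivity)
    have : (1 : ℝ) ≤ (q : ℝ) ^ 7 := one_le_pow₀ (by linarith)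
    nlinarith
  rw [Real.log_mul (by positivity) (by linarith)] at this
  linarith

section
variable {q : ℕ} {b K : ℝ}

lemma Big.dich (h : Big b q K) (N : ℕ) (hN : 1000 ≤ N) (a a' : ℤ) (l l' : ℕ) (hl : N ≤ l) (hl' : N ≤ l')
    (h1 : -(5 * N : ℤ) ≤ a) (h2 : a + l ≤ a') (h3 : a' + l' ≤ 5 * N + 1) (E : ℝ) :
    0.97 * l * log K ≤ log |uF (gpot q (sg b q K)) E a l| ∨
    0.97 * l' * log K ≤ log |uF (gpot q (sg b q K)) E a' l'| := by
  by_contra hcon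
  push Not at hcon
  have hC := h.Cn_nonneg
  have key : ∀ (a : ℤ) (l : ℕ), N ≤ l → log |uF (gpot q (sg b q K)) E a l| < 0.97 * l * log K →
      ∃ F, IsEV (gpot q (sg b q K)) a l F ∧ |F - E| < exp (-(Cn b q * N)) := by
    intro a l hl hlt
    by_contra hc
    push Not at hc
    have := h.par.good h.hb (by linarith [h.K16]) (Cn b q) hC h.K1 a l (by omega) E (fun F hF => ?_)
    · linarith
    · refine le_trans ?_ (hc F hF)
      apply exp_le_exp.2
      have : (N : ℝ) ≤ l := by exact_mod_cast hl
      nlinarith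
  obtain ⟨F, hF, f1⟩ := key a l hl hcon.1
  obtain ⟨F', hF', f2⟩ := key a' l' hl' hcon.2
  have h4 := h.par.sepN h.hb N (by omega) a a' l l' h1 h2 h3 F F' hF hF'
  have h5 : |F - F'| ≤ |F - E| + |F' - E| := by
    calc |F - F'| = |(F - E) - (F' - E)| := by ring_nf
      _ ≤ _ := abs_sub _ _
  unfold Cn at f1 f2
  linarith
end

lemma matNorm_le {M : Matrix (Fin 2) (Fin 2) ℝ} {C : ℝ} (h : ∀ i j, |M i j| ≤ C) : matNorm M ≤ C :=
  ciSup_le fun p => h p.1 p.2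

lemma transfer_bound {g : ℤ → ℝ} {E D : ℝ} (hD : ∀ n, |E - g n| + 1 ≤ D) (k : ℤ) :
    ∀ (n : ℕ) i j, |transfer g E n k i j| ≤ D ^ n
  | 0, i, j => by
    simp only [transfer, pow_zero]
    fin_cases i <;> fin_cases j <;> simp
  | n + 1, i, j => by
    have ih := transfer_bound hD k n
    have h1 := hD (k + n)
    have h0 := abs_nonneg (E - g (k + n))
    have hDn : 0 ≤ D ^ n := pow_nonneg (by linarith) n
    have hD1 : D ^ n ≤ D ^ (n + 1) := by rw [pow_succ]; nlinarith
    simp only [transfer]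
    fin_cases i
    · simp only [Matrix.mul_apply, Fin.sum_univ_two]
      simp
      calc |(E - g (k + n)) * transfer g E n k 0 j + -transfer g E n k 1 j|
          ≤ |E - g (k + n)| * |transfer g E n k 0 j| + |transfer g E n k 1 j| := by
            refine (abs_add_le _ _).trans ?_
            rw [abs_mul, abs_neg]
        _ ≤ |E - g (k + n)| * D ^ n + D ^ n := by
            gcongr
            · exact ih 0 j
            · exact ih 1 j
        _ = (|E - g (k + n)| + 1) * D ^ n := by ring
        _ ≤ D * D ^ n := by gcongr
        _ = _ := by ring
    · simp only [Matrix.mul_apply, Fin.sum_univ_two]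
      simp
      exact (ih 0 j).trans hD1

lemma Big.lyap {q : ℕ} {b K L : ℝ} (h : Big b q K) (hL : L ≤ 0.97 * log K) (E : ℝ) :
    L ≤ LyapSup (gpot q (sg b q K)) E := by
  set g := gpot q (sg b q K) with hg
  set D := |E| + 2 * sg b q K 0 + 1 with hDd
  have hD : ∀ n, |E - g n| + 1 ≤ D := by
    intro n
    have := abs_sub E (g n)
    have h2 := h.par.g_bound n
    rw [← hg] at h2
    linarith
  have hD1 : 1 ≤ D := by
    have := h.par.pos 0
    have := abs_nonneg E
    linarith
  have hlD := Real.log_nonneg hD1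
  have ub : ∀ (n : ℕ) (k : ℤ), 1 ≤ n → log (matNorm (transfer g E n k)) / n ≤ log D := by
    intro n k hn
    have hn' : (1 : ℝ) ≤ n := by exact_mod_cast hn
    rw [div_le_iff₀ (by linarith)]
    have h1 : matNorm (transfer g E n k) ≤ D ^ n := matNorm_le (transfer_bound hD k n)
    have h0 : 0 ≤ matNorm (transfer g E n k) := (abs_nonneg _).trans (le_matNorm _)
    rcases h0.eq_or_lt with h0 | h0
    · rw [← h0, Real.log_zero]; positivity
    · have := Real.log_le_log h0 h1
      rw [Real.log_pow] at this
      linarith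
  unfold LyapSup
  apply le_limsup_of_frequently_le
  · apply Eventually.frequently
    filter_upwards [eventually_ge_atTop 1000] with n hn
    have hn' : (1000 : ℝ) ≤ n := by exact_mod_cast hn
    have hbdd : BddAbove (Set.range fun k : ℤ => log (matNorm (transfer g E n k)) / n) := by
      refine ⟨log D, ?_⟩
      rintro _ ⟨k, rfl⟩
      exact ub n k (by omega)
    have hlK : 0 < log K := Real.log_pos (by linarith [h.K16])
    have key : ∀ k : ℤ, 0.97 * n * log K ≤ log |uF g E k n| →
        L ≤ ⨆ k : ℤ, log (matNorm (transfer g E n k)) / n := by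
      intro k hk
      refine le_trans ?_ (le_ciSup hbdd k)
      rw [le_div_iff₀ (by linarith)]
      have h1 : |uF g E k n| ≤ matNorm (transfer g E n k) := by
        rw [← transfer_uF]; exact le_matNorm _
      have h2 : 0 < |uF g E k n| := by
        rcases (abs_nonneg (uF g E k n)).eq_or_lt with h0 | h0
        · rw [← h0, Real.log_zero] at hk
          have : 0 < 0.97 * n * log K := by positivity
          linarith
        · exact h0
      have h3 := Real.log_le_log h2 h1
      have : L * n ≤ 0.97 * log K * n := by gcongr
      linarith
    rcases h.dich n hn 0 n n n le_rfl le_rfl (by omega) (by omega) (by omega) E with h1 | h1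
    · exact key _ h1
    · exact key _ h1
  · apply isBoundedUnder_of_eventually_le (a := log D)
    filter_upwards [eventually_ge_atTop 1] with n hn
    exact ciSup_le fun k => ub n k hn


structure BoxEF (g : ℤ → ℝ) (R : ℕ) (E : ℝ) (ψ : ℤ → ℝ) : Prop where
  supp : ∀ n : ℤ, (R : ℤ) < |n| → ψ n = 0
  eqn : ∀ n : ℤ, |n| ≤ (R : ℤ) → ψ (n + 1) + ψ (n - 1) + g n * ψ n = E * ψ n
  bd : ∀ n, |ψ n| ≤ 1

lemma poisson_decay {g ψ : ℤ → ℝ} {E D lK : ℝ} {a x : ℤ} (k m N : ℕ) (hN : 1000 ≤ N) (hD1 : 1 ≤ D)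
    (hlK : 1000 ≤ lK) (hDK : log D ≤ 1.01 * lK)
    (hD : ∀ n, |E - g n| + 1 ≤ D) (hx : x = a + k)
    (hψ : ∀ n ∈ Finset.Ico a (a + ((k + 1 + m : ℕ) : ℤ)), ψ (n + 1) + ψ (n - 1) + g n * ψ n = E * ψ n)
    (hb : ∀ n, |ψ n| ≤ 1)
    (hu : 0.97 * ((k + 1 + m : ℕ) : ℝ) * lK ≤ log |uF g E a (k + 1 + m)|)
    (h1 : ψ (a + ((k + 1 + m : ℕ) : ℤ)) = 0 ∨ 1.01 * (k : ℝ) + 0.1 * N ≤ 0.97 * ((k + 1 + m : ℕ) : ℝ))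
    (h2 : ψ (a - 1) = 0 ∨ 1.01 * (m : ℝ) + 0.1 * N ≤ 0.97 * ((k + 1 + m : ℕ) : ℝ)) :
    |ψ x| ≤ exp (-(4 * N)) := by
  have hp := poisson k m hD hψ
  rw [← hx] at hp
  set u := |uF g E a (k + 1 + m)| with hud
  set L : ℝ := ((k + 1 + m : ℕ) : ℝ) with hL
  have hL1 : 1 ≤ L := by rw [hL]; push_cast; have := Nat.cast_nonneg (α := ℝ) k; have := Nat.cast_nonneg (α := ℝ) m; linarith
  have hN' : (1000 : ℝ) ≤ N := by exact_mod_cast hN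
  have hupos : 0 < u := by
    rcases (abs_nonneg (uF g E a (k + 1 + m))).eq_or_lt with h0 | h0
    · exfalso
      rw [hud, ← h0, Real.log_zero] at hu
      nlinarith
    · exact h0
  have hu' : exp (0.97 * L * lK) ≤ u := by
    rw [← Real.exp_log hupos]; exact exp_le_exp.2 hu
  have key : ∀ (y : ℤ) (c : ℕ), (ψ y = 0 ∨ 1.01 * (c : ℝ) + 0.1 * N ≤ 0.97 * L) →
      |ψ y| * D ^ c ≤ exp (-(5 * N)) * u := by
    intro y c hy
    rcases hy with hy | hy
    · rw [hy, abs_zero, zero_mul]; positivity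
    · have e1 : D ^ c ≤ exp (1.01 * c * lK) := by
        rw [← Real.exp_log (by positivity : 0 < D), ← exp_nat_mul]
        apply exp_le_exp.2
        have : (0 : ℝ) ≤ c := Nat.cast_nonneg c
        nlinarith
      calc |ψ y| * D ^ c ≤ 1 * exp (1.01 * c * lK) := by
            gcongr
            exact hb y
        _ = exp (1.01 * c * lK) := one_mul _
        _ ≤ exp (-(5 * N) + 0.97 * L * lK) := by
            apply exp_le_exp.2
            have h3 : (1.01 * (c : ℝ) + 0.1 * N) * lK ≤ 0.97 * L * lK := by gcongr
            have h4 : (N : ℝ) * 1000 ≤ N * lK := by gcongr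
            linarith
        _ = exp (-(5 * N)) * exp (0.97 * L * lK) := exp_add _ _
        _ ≤ _ := by gcongr
  have k1 := key _ k h1
  have k2 := key _ m h2
  have h3 : |ψ x| * u ≤ 2 * exp (-(5 * N)) * u := by linarith
  have h4 := le_of_mul_le_mul_right h3 hupos
  refine h4.trans ?_
  rw [show -(4 * (N : ℝ)) = N + -(5 * N) by ring, exp_add]
  have : (2 : ℝ) ≤ exp N := by have := Real.add_one_le_exp (N : ℝ); linarith
  gcongr

lemma Big.loc {q : ℕ} {b K : ℝ} (h : Big b q K) (R N : ℕ) (hN : 1000 ≤ N) (E : ℝ) (ψ : ℤ → ℝ)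
    (hE : |E| ≤ 2 * sg b q K 0 + 2) (hψ : BoxEF (gpot q (sg b q K)) R E ψ) :
    (∀ m : ℤ, 2 * |m| ≤ N → |ψ m| ≤ exp (-(N : ℝ))) ∨
    (∀ x : ℤ, 2 * (N : ℤ) ≤ |x| → |x| ≤ 4 * N → |ψ x| ≤ exp (-|(x : ℝ)|)) := by
  set g := gpot q (sg b q K) with hg
  set D := 16 * (q : ℝ) ^ 7 * K + 3 with hDd
  have hq : (1000 : ℝ) ≤ q := by exact_mod_cast h.par.hq
  have hs0 : sg b q K 0 = 4 * (q : ℝ) ^ 7 * K := rfl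
  have hD : ∀ n, |E - g n| + 1 ≤ D := by
    intro n
    have := abs_sub E (g n)
    have h2 := h.par.g_bound n
    rw [← hg] at h2
    rw [hs0] at h2 hE
    linarith
  have hD1 : 1 ≤ D := by
    have := h.K16
    have : 0 ≤ 16 * (q : ℝ) ^ 7 * K := by positivity
    linarith
  have hlK : 1000 ≤ log K := by
    have := h.K1
    have := h.hb
    have hlq : 0 ≤ log q := Real.log_nonneg (by linarith)
    unfold Cn at *
    linarith
  have hN' : (1000 : ℝ) ≤ N := by exact_mod_cast hN
  have hN0 : -(4 * (N : ℝ)) ≤ -N := by linarith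
  by_cases hR : (R : ℤ) < 2 * N
  · right
    intro x hx _
    rw [hψ.supp x (by omega), abs_zero]; positivity
  push Not at hR
  by_cases hu0 : 0.97 * ((2 * N + 1 : ℕ) : ℝ) * log K ≤ log |uF g E (-(N : ℤ)) (2 * N + 1)|
  · left
    intro m hm
    have hm' := abs_le.1 (show |m| ≤ N / 2 by omega)
    refine le_trans ?_ (exp_le_exp.2 hN0)
    obtain ⟨k, hk⟩ : ∃ k : ℕ, (k : ℤ) = m + N := ⟨(m + N).toNat, by omega⟩
    obtain ⟨c, hc⟩ : ∃ c : ℕ, (c : ℤ) = N - m := ⟨(N - m).toNat, by omega⟩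
    have hkc : k + 1 + c = 2 * N + 1 := by omega
    have hk2 : 2 * (k : ℝ) ≤ 3 * N := by
      have : 2 * (k : ℤ) ≤ 3 * N := by omega
      exact_mod_cast this
    have hc2 : 2 * (c : ℝ) ≤ 3 * N := by
      have : 2 * (c : ℤ) ≤ 3 * N := by omega
      exact_mod_cast this
    refine poisson_decay (a := -(N : ℤ)) k c N hN hD1 hlK h.K2 hD (by omega) ?_ hψ.bd (by rw [hkc]; exact hu0) ?_ ?_
    · intro n hn
      rw [Finset.mem_Ico] at hn
      exact hψ.eqn n (abs_le.2 ⟨by omega, by omega⟩)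
    · right; rw [hkc]; push_cast; linarith
    · right; rw [hkc]; push_cast; linarith
  · right
    intro x hx1 hx2
    have hx3 : |(x : ℝ)| ≤ 4 * N := by exact_mod_cast hx2
    refine le_trans ?_ (exp_le_exp.2 (neg_le_neg hx3))
    by_cases hxR : (R : ℤ) < |x|
    · rw [hψ.supp x hxR, abs_zero]; positivity
    push Not at hxR
    rcases abs_cases x with ⟨hax, hx0⟩ | ⟨hax, hx0⟩
    · rw [hax] at hx1 hx2 hxR
      obtain ⟨k, hk⟩ : ∃ k : ℕ, k + 1 = N := ⟨N - 1, by omega⟩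
      obtain ⟨c, hc⟩ : ∃ c : ℕ, (c : ℤ) = min ((N : ℤ) - 1) (R - x) :=
        ⟨(min ((N : ℤ) - 1) (R - x)).toNat, by omega⟩
      have hu := (h.dich N hN (-(N : ℤ)) (x - N + 1) (2 * N + 1) (k + 1 + c) (by omega) (by omega)
        (by omega) (by push_cast; omega) (by push_cast; omega) E).resolve_left hu0
      have hcR : (c : ℝ) + 1 ≤ N := by
        have : (c : ℤ) + 1 ≤ N := by omega
        exact_mod_cast this
      have hkR : (k : ℝ) + 1 = N := by exact_mod_cast hk
      have hc0 : (0 : ℝ) ≤ c := Nat.cast_nonneg c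
      refine poisson_decay k c N hN hD1 hlK h.K2 hD (by omega) ?_ hψ.bd hu ?_ ?_
      · intro n hn
        rw [Finset.mem_Ico] at hn
        push_cast at hn
        exact hψ.eqn n (abs_le.2 ⟨by omega, by omega⟩)
      · by_cases hcc : (R : ℤ) - x < N - 1
        · left
          apply hψ.supp
          rw [lt_abs]; left
          push_cast; omega
        · right
          have : (c : ℝ) = k := by
            have : c = k := by omega
            exact_mod_cast this
          push_cast; linarith
      · right; push_cast; linarith
    · rw [hax] at hx1 hx2 hxR
      obtain ⟨k, hk⟩ : ∃ k : ℕ, k + 1 = N := ⟨N - 1, by omega⟩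
      obtain ⟨c, hc⟩ : ∃ c : ℕ, (c : ℤ) = min ((N : ℤ) - 1) (R + x) :=
        ⟨(min ((N : ℤ) - 1) (R + x)).toNat, by omega⟩
      have hu := (h.dich N hN (x - c) (-(N : ℤ)) (c + 1 + k) (2 * N + 1) (by omega) (by omega)
        (by omega) (by push_cast; omega) (by push_cast; omega) E).resolve_right hu0
      have hcR : (c : ℝ) + 1 ≤ N := by
        have : (c : ℤ) + 1 ≤ N := by omega
        exact_mod_cast this
      have hkR : (k : ℝ) + 1 = N := by exact_mod_cast hk
      have hc0 : (0 : ℝ) ≤ c := Nat.cast_nonneg c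
      refine poisson_decay c k N hN hD1 hlK h.K2 hD (by omega) ?_ hψ.bd hu ?_ ?_
      · intro n hn
        rw [Finset.mem_Ico] at hn
        push_cast at hn
        exact hψ.eqn n (abs_le.2 ⟨by omega, by omega⟩)
      · right; push_cast; linarith
      · by_cases hcc : (R : ℤ) + x < N - 1
        · left
          apply hψ.supp
          rw [lt_abs]; right
          omega
        · right
          have : (c : ℝ) = k := by
            have : c = k := by omega
            exact_mod_cast this
          push_cast; linarith


lemma summable_exp_abs {c : ℝ} (hc : 0 < c) : Summable fun n : ℤ => exp (-(c * |(n : ℝ)|)) := by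
  have h : Summable fun n : ℕ => exp (-(c * (n : ℝ))) := by
    have := Real.summable_exp_nat_mul_iff (a := -c) |>.2 (by linarith)
    refine this.congr fun n => ?_
    congr 1; ring
  refine Summable.of_nat_of_neg ?_ ?_
  · simpa using h
  · simpa using h

def LocP (g : ℤ → ℝ) (M : ℝ) (N0 : ℕ) : Prop :=
  ∀ R N : ℕ, N0 ≤ N → ∀ (E : ℝ) (ψ : ℤ → ℝ), |E| ≤ M → BoxEF g R E ψ →
    (∀ m : ℤ, 2 * |m| ≤ N → |ψ m| ≤ exp (-(N : ℝ))) ∨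
    (∀ x : ℤ, 2 * (N : ℤ) ≤ |x| → |x| ≤ 4 * N → |ψ x| ≤ exp (-|(x : ℝ)|))

lemma LocP.far {g : ℤ → ℝ} {M : ℝ} {N0 : ℕ} (h : LocP g M N0) {R : ℕ} {E : ℝ} {ψ : ℤ → ℝ}
    (hE : |E| ≤ M) (hψ : BoxEF g R E ψ) (m : ℤ) (N : ℕ) (h1 : 1 ≤ N) (hN : N0 ≤ N) (hm : 2 * |m| ≤ N)
    (hl : exp (-(N : ℝ)) < |ψ m|) (x : ℤ) (hx : 2 * (N : ℤ) ≤ |x|) : |ψ x| ≤ exp (-|(x : ℝ)|) := by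
  obtain ⟨k, hk⟩ : ∃ k : ℕ, (k : ℤ) = |x| / 2 := ⟨(|x| / 2).toNat, by omega⟩
  rcases h R k (by omega) E ψ hE hψ with h2 | h2
  · exfalso
    have := h2 m (by omega)
    have h3 : exp (-(k : ℝ)) ≤ exp (-(N : ℝ)) := by
      apply exp_le_exp.2
      have : N ≤ k := by omega
      have : (N : ℝ) ≤ k := by exact_mod_cast this
      linarith
    linarith
  · exact h2 x (by omega) (by omega)

lemma LocP.decay {g : ℤ → ℝ} {M : ℝ} {N0 : ℕ} (h : LocP g M N0) {R : ℕ} {E : ℝ} {ψ : ℤ → ℝ}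
    (hE : |E| ≤ M) (hψ : BoxEF g R E ψ) (m : ℤ) (N : ℕ) (h1 : 1 ≤ N) (hN : N0 ≤ N) (hm : 2 * |m| ≤ N)
    (hl : exp (-(N : ℝ)) < |ψ m|) (x : ℤ) : |ψ x| ≤ exp (2 * N) * exp (-|(x : ℝ)|) := by
  by_cases hx : 2 * (N : ℤ) ≤ |x|
  · refine (h.far hE hψ m N h1 hN hm hl x hx).trans ?_
    have : 1 ≤ exp (2 * (N : ℝ)) := Real.one_le_exp (by positivity)
    have h0 := exp_pos (-|(x : ℝ)|)
    nlinarith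
  · refine (hψ.bd x).trans ?_
    rw [← exp_add]
    apply Real.one_le_exp
    have : |(x : ℝ)| ≤ 2 * N := by
      have : |x| ≤ 2 * N := by omega
      exact_mod_cast this
    linarith

/-- weighted lower bound -/
lemma LocP.weight {g : ℤ → ℝ} {M : ℝ} {N0 : ℕ} (h : LocP g M N0) (m : ℤ) : ∃ C : ℝ, 0 < C ∧
    ∀ (R : ℕ) (E : ℝ) (ψ : ℤ → ℝ), |E| ≤ M → BoxEF g R E ψ →
      (∑ n ∈ Finset.Ico (-(R : ℤ)) (-R + (2 * R + 1 : ℕ)), ψ n ^ 2 = 1) →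
      |ψ m| ≤ C * ∑ n ∈ Finset.Ico (-(R : ℤ)) (-R + (2 * R + 1 : ℕ)), exp (-(|(n : ℝ)| / 2)) * ψ n ^ 2 := by
  have hs := summable_exp_abs (c := 1) one_pos
  simp only [one_mul] at hs
  set S1 := ∑' n : ℤ, exp (-|(n : ℝ)|) with hS1
  obtain ⟨A, hA⟩ := exists_nat_ge S1
  set P : ℕ := N0 + 2 * m.natAbs + A + 1 with hP
  refine ⟨2 * exp (P + 2), by positivity, ?_⟩
  intro R E ψ hE hψ hnorm
  set Bx := Finset.Ico (-(R : ℤ)) (-R + (2 * R + 1 : ℕ)) with hBx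
  rcases eq_or_ne (ψ m) 0 with h0 | h0
  · rw [h0, abs_zero]
    exact mul_nonneg (by positivity) (Finset.sum_nonneg fun n _ => by positivity)
  have hpos : 0 < |ψ m| := abs_pos.2 h0
  have hlog : 0 ≤ -log |ψ m| := by
    have := Real.log_nonpos hpos.le (hψ.bd m); linarith
  set T : ℕ := ⌊-log |ψ m|⌋₊ + 1 with hT
  have hT1 : -log |ψ m| < T := by rw [hT]; push_cast; exact Nat.lt_floor_add_one _
  have hT2 : (T : ℝ) ≤ -log |ψ m| + 1 := by rw [hT]; push_cast; linarith [Nat.floor_le hlog]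
  set N := P + T with hN
  have hlt : exp (-(N : ℝ)) < |ψ m| := by
    rw [← Real.lt_log_iff_exp_lt hpos, hN]; push_cast
    have : (0 : ℝ) ≤ P := Nat.cast_nonneg P
    linarith
  have hdec := h.far hE hψ m N (by omega) (by omega) (by have := Int.natCast_natAbs m; omega) hlt
  have hfar : ∑ n ∈ Bx with 2 * (N : ℤ) ≤ |n|, ψ n ^ 2 ≤ 1 / 2 := by
    calc ∑ n ∈ Bx with 2 * (N : ℤ) ≤ |n|, ψ n ^ 2
        ≤ ∑ n ∈ Bx with 2 * (N : ℤ) ≤ |n|, exp (-(2 * N : ℝ)) * exp (-|(n : ℝ)|) := by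
          apply Finset.sum_le_sum
          intro n hn
          rw [Finset.mem_filter] at hn
          have h2 := hdec n hn.2
          have h3 : (2 * N : ℝ) ≤ |(n : ℝ)| := by exact_mod_cast hn.2
          rw [← sq_abs, sq]
          calc |ψ n| * |ψ n| ≤ exp (-|(n : ℝ)|) * exp (-|(n : ℝ)|) := by gcongr
            _ ≤ _ := by gcongr
      _ = exp (-(2 * N : ℝ)) * ∑ n ∈ Bx with 2 * (N : ℤ) ≤ |n|, exp (-|(n : ℝ)|) := by
          rw [Finset.mul_sum]
      _ ≤ exp (-(2 * N : ℝ)) * S1 := by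
          gcongr
          exact hs.sum_le_tsum _ fun n _ => (exp_pos _).le
      _ ≤ 1 / 2 := by
          have hNA : (A : ℝ) + 1 ≤ N := by
            have : A + 1 ≤ N := by omega
            exact_mod_cast this
          have e1 := Real.add_one_le_exp (2 * N : ℝ)
          rw [exp_neg, inv_mul_eq_div, div_le_div_iff₀ (exp_pos _) (by norm_num)]
          linarith
  have hnear : 1 / 2 ≤ ∑ n ∈ Bx with ¬ 2 * (N : ℤ) ≤ |n|, ψ n ^ 2 := by
    have := Finset.sum_filter_add_sum_filter_not Bx (fun n : ℤ => 2 * (N : ℤ) ≤ |n|) (fun n => ψ n ^ 2)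
    linarith
  have hw : exp (-(N : ℝ)) * (1 / 2) ≤ ∑ n ∈ Bx, exp (-(|(n : ℝ)| / 2)) * ψ n ^ 2 := by
    calc exp (-(N : ℝ)) * (1 / 2) ≤ exp (-(N : ℝ)) * ∑ n ∈ Bx with ¬ 2 * (N : ℤ) ≤ |n|, ψ n ^ 2 := by gcongr
      _ = ∑ n ∈ Bx with ¬ 2 * (N : ℤ) ≤ |n|, exp (-(N : ℝ)) * ψ n ^ 2 := by rw [Finset.mul_sum]
      _ ≤ ∑ n ∈ Bx with ¬ 2 * (N : ℤ) ≤ |n|, exp (-(|(n : ℝ)| / 2)) * ψ n ^ 2 := by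
          apply Finset.sum_le_sum
          intro n hn
          rw [Finset.mem_filter] at hn
          have h3 : |(n : ℝ)| ≤ 2 * N := by
            have : |n| ≤ 2 * N := by omega
            exact_mod_cast this
          gcongr
          linarith
      _ ≤ _ := Finset.sum_le_sum_of_subset_of_nonneg (Finset.filter_subset _ _) fun n _ _ => by positivity
  have e2 : |ψ m| ≤ 2 * exp (P + 2) * (exp (-(N : ℝ)) * (1 / 2)) := by
    have : 2 * exp ((P : ℝ) + 2) * (exp (-(N : ℝ)) * (1 / 2)) = exp (2 - T) := by
      rw [show (2 : ℝ) - T = (P + 2) + -(N : ℝ) by rw [hN]; push_cast; ring, exp_add ((P : ℝ) + 2) (-(N : ℝ))]; ring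
    rw [this]
    calc |ψ m| = exp (log |ψ m|) := (Real.exp_log hpos).symm
      _ ≤ _ := by apply exp_le_exp.2; linarith
  refine e2.trans ?_
  gcongr

lemma ES.boxEF {g : ℤ → ℝ} {R : ℕ} {lam : Ix (-(R : ℤ)) (2 * R + 1) → ℝ}
    {v : Ix (-(R : ℤ)) (2 * R + 1) → ℤ → ℝ} (h : ES g (-(R : ℤ)) (2 * R + 1) lam v) (i) :
    BoxEF g R (lam i) (v i) := by
  have hmem : ∀ n : ℤ, n ∈ Finset.Ico (-(R : ℤ)) (-R + (2 * R + 1 : ℕ)) ↔ |n| ≤ R := by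
    intro n; rw [Finset.mem_Ico, abs_le]; push_cast; omega
  refine ⟨fun n hn => h.supp i n (by rw [hmem]; omega), fun n hn => h.eqn i n ((hmem n).2 hn), ?_⟩
  intro n
  by_cases hn : n ∈ Finset.Ico (-(R : ℤ)) (-R + (2 * R + 1 : ℕ))
  · have h1 := h.orth i i
    rw [if_pos rfl] at h1
    have h2 := Finset.single_le_sum (f := fun n => v i n * v i n) (fun n _ => mul_self_nonneg _) hn
    rw [h1] at h2
    rw [← abs_one, ← sq_le_sq]; nlinarith
  · rw [h.supp i n hn]; simp

lemma LocP.sum_bound {g : ℤ → ℝ} {M : ℝ} {N0 : ℕ} (h : LocP g (M + 2) N0) (hg : ∀ n, |g n| ≤ M) (m : ℤ) :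
    ∃ C : ℝ, 0 < C ∧ ∀ (R : ℕ) (lam : Ix (-(R : ℤ)) (2 * R + 1) → ℝ)
    (v : Ix (-(R : ℤ)) (2 * R + 1) → ℤ → ℝ), ES g (-(R : ℤ)) (2 * R + 1) lam v →
      ∑ i, |v i m| ≤ C := by
  obtain ⟨C, hC, hw⟩ := h.weight m
  have hs := summable_exp_abs (c := 1 / 2) (by norm_num)
  have hs' : Summable fun n : ℤ => exp (-(|(n : ℝ)| / 2)) := hs.congr fun n => by congr 1; ring
  refine ⟨C * (∑' n : ℤ, exp (-(|(n : ℝ)| / 2))), mul_pos hC (hs'.tsum_pos (fun n => (exp_pos _).le) 0 (exp_pos _)), ?_⟩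
  intro R lam v hES
  calc ∑ i, |v i m| ≤ ∑ i, C * ∑ n ∈ Finset.Ico (-(R : ℤ)) (-R + (2 * R + 1 : ℕ)), exp (-(|(n : ℝ)| / 2)) * v i n ^ 2 := by
        apply Finset.sum_le_sum
        intro i _
        refine hw R (lam i) (v i) ((hES.isEV i).bound hg) (hES.boxEF i) ?_
        have := hES.orth i i
        rw [if_pos rfl] at this
        simpa [sq] using this
    _ = C * ∑ n ∈ Finset.Ico (-(R : ℤ)) (-R + (2 * R + 1 : ℕ)), exp (-(|(n : ℝ)| / 2)) := by
        rw [← Finset.mul_sum, Finset.sum_comm]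
        congr 1
        apply Finset.sum_congr rfl
        intro n hn
        rw [← Finset.mul_sum]
        have := hES.compl n hn n hn
        rw [if_pos rfl] at this
        simp only [sq, this, mul_one]
    _ ≤ _ := by
        gcongr
        exact hs'.sum_le_tsum _ fun n _ => (exp_pos _).le

lemma ES.exists_index {g : ℤ → ℝ} {a : ℤ} {l : ℕ} {lam : Ix a l → ℝ} {v : Ix a l → ℤ → ℝ}
    (h : ES g a l lam v) (f : ℤ → ℝ) (m : ℤ) (hm : m ∈ Finset.Ico a (a + (l : ℤ))) (C F2 θ κ t : ℝ)
    (hθ : 0 < θ) (hκ : 0 < κ) (ht : 0 < t) 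
    (hC : ∑ i, |v i m| ≤ C) (hF : ∑ n ∈ Finset.Ico a (a + (l : ℤ)), f n ^ 2 ≤ F2)
    (hlt : κ * C + t * F2 + θ * C / t < |f m|) :
    ∃ i, θ ≤ |v i m| ∧ κ ≤ |∑ n ∈ Finset.Ico a (a + (l : ℤ)), f n * v i n| := by
  classical
  by_contra hcon
  push Not at hcon
  set u : ℤ → ℝ := fun n => if n ∈ Finset.Ico a (a + (l : ℤ)) then f n else 0 with hu
  have hu0 : ∀ n, n ∉ Finset.Ico a (a + (l : ℤ)) → u n = 0 := fun n hn => by simp only [hu]; rw [if_neg hn]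
  have hu1 : ∀ n ∈ Finset.Ico a (a + (l : ℤ)), u n = f n := fun n hn => by simp only [hu]; rw [if_pos hn]
  have hc : ∀ i, (∑ m ∈ Finset.Ico a (a + (l : ℤ)), v i m * u m) = ∑ n ∈ Finset.Ico a (a + (l : ℤ)), f n * v i n :=
    fun i => Finset.sum_congr rfl fun n hn => by rw [hu1 n hn]; ring
  have hex := congrFun (h.expand u hu0) m
  have hpar := h.parseval u hu0
  simp only [hc] at hex hpar
  rw [hu1 m hm] at hex
  rw [Finset.sum_congr rfl fun n hn => by rw [hu1 n hn]] at hpar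
  generalize hcd : (fun i => ∑ n ∈ Finset.Ico a (a + (l : ℤ)), f n * v i n) = c at *
  have hcd' : ∀ i, ∑ n ∈ Finset.Ico a (a + (l : ℤ)), f n * v i n = c i := fun i => congrFun hcd i
  simp only [hcd'] at hex hpar hcon
  have hb : |f m| ≤ κ * C + t * F2 + θ * C / t := by
    rw [hex]
    calc |∑ i, c i * v i m| ≤ ∑ i, |c i * v i m| := Finset.abs_sum_le_sum_abs _ _
      _ ≤ ∑ i, (κ * |v i m| + t * c i ^ 2 + θ * |v i m| / t) := by
          apply Finset.sum_le_sum
          intro i _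
          rw [abs_mul]
          have a1 := abs_nonneg (v i m)
          have a2 := abs_nonneg (c i)
          have q1 : 0 ≤ t * c i ^ 2 := by positivity
          have q2 : 0 ≤ θ * |v i m| / t := by positivity
          by_cases hi : θ ≤ |v i m|
          · have := hcon i hi
            nlinarith
          · push Not at hi
            have q3 : |v i m| ^ 2 / t ≤ θ * |v i m| / t := by
              gcongr; nlinarith
            have q4 : |c i| * |v i m| ≤ t * |c i| ^ 2 + |v i m| ^ 2 / t := by
              have e : t * |c i| ^ 2 + |v i m| ^ 2 / t - |c i| * |v i m| =
                  ((t * |c i| - |v i m| / 2) ^ 2 + 3 / 4 * |v i m| ^ 2) / t := by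
                field_simp; ring
              have : 0 ≤ ((t * |c i| - |v i m| / 2) ^ 2 + 3 / 4 * |v i m| ^ 2) / t := by positivity
              linarith
            rw [sq_abs] at q4
            have : 0 ≤ κ * |v i m| := by positivity
            linarith
      _ = κ * (∑ i, |v i m|) + t * (∑ i, c i ^ 2) + θ * (∑ i, |v i m|) / t := by
          rw [Finset.sum_add_distrib, Finset.sum_add_distrib, Finset.mul_sum, Finset.mul_sum, Finset.mul_sum, Finset.sum_div]
      _ ≤ _ := by
          rw [← hpar]
          gcongr
  linarith


lemma ultra_lim (U : Ultrafilter ℕ) (x : ℕ → ℝ) (c : ℝ) (hx : ∀ n, |x n| ≤ c) :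
    ∃ a, Tendsto x U (nhds a) := by
  obtain ⟨a, _, ha⟩ := (isCompact_Icc (a := -c) (b := c)).ultrafilter_le_nhds (U.map x) (by
    rw [le_principal_iff, Ultrafilter.mem_coe, Ultrafilter.mem_map]
    exact Filter.univ_mem' fun n => abs_le.1 (hx n))
  exact ⟨a, ha⟩

lemma exists_good_ef {g : ℤ → ℝ} {M : ℝ} {N0 : ℕ} (hloc : LocP g (M + 2) N0) (hg : ∀ n, |g n| ≤ M)
    (f : ℤ → ℝ) (F2 : ℝ) (hF : ∀ s : Finset ℤ, ∑ n ∈ s, f n ^ 2 ≤ F2) (m : ℤ) (hfm : f m ≠ 0) :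
    ∃ (E : ℝ) (φ : ℤ → ℝ) (A : ℝ), IsEigenfunction g E φ ∧ (∀ x : ℤ, |φ x| ≤ A * exp (-|(x : ℝ)|)) ∧
      ∑' n, f n * φ n ≠ 0 := by
  obtain ⟨C, hC, hsum⟩ := hloc.sum_bound hg m
  have hF2 : 0 ≤ F2 := by simpa using hF ∅
  have hp : 0 < |f m| := abs_pos.2 hfm
  set t := |f m| / (4 * (F2 + 1)) with ht
  have ht0 : 0 < t := by positivity
  set κ := |f m| / (4 * C) with hκ
  have hκ0 : 0 < κ := by positivity
  set θ := |f m| * t / (4 * C) with hθ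
  have hθ0 : 0 < θ := by positivity
  have e1 : κ * C = |f m| / 4 := by rw [hκ]; field_simp
  have e2 : t * F2 ≤ |f m| / 4 := by
    have : t * (F2 + 1) = |f m| / 4 := by rw [ht]; field_simp
    nlinarith
  have e3 : θ * C / t = |f m| / 4 := by rw [hθ]; field_simp
  have main : ∀ R : ℕ, ∃ (E : ℝ) (ψ : ℤ → ℝ), |E| ≤ M + 2 ∧ BoxEF g (R + m.natAbs) E ψ ∧ θ ≤ |ψ m| ∧
      κ ≤ |∑' n, f n * ψ n| := by
    intro R
    obtain ⟨lam, v, hES⟩ := exists_ES g (-((R + m.natAbs : ℕ) : ℤ)) (2 * (R + m.natAbs) + 1)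
    obtain ⟨i, h1, h2⟩ := hES.exists_index f m (by rw [Finset.mem_Ico]; omega) C F2 θ κ t hθ0 hκ0 ht0
      (hsum _ _ _ hES) (hF _) (by linarith)
    refine ⟨lam i, v i, (hES.isEV i).bound hg, hES.boxEF i, h1, ?_⟩
    rw [tsum_eq_sum (s := Finset.Ico (-((R + m.natAbs : ℕ) : ℤ)) (-((R + m.natAbs : ℕ) : ℤ) + (2 * (R + m.natAbs) + 1 : ℕ)))]
    · exact h2
    · intro n hn; rw [hES.supp i n hn, mul_zero]
  choose E ψ hE hψ hθm hκs using main
  obtain ⟨n1, hn1⟩ := exists_nat_gt (-log θ)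
  set N := N0 + 2 * m.natAbs + n1 + 1 with hN
  have hlt : exp (-(N : ℝ)) < θ := by
    rw [← Real.lt_log_iff_exp_lt hθ0]
    have : (n1 : ℝ) ≤ N := by
      have : n1 ≤ N := by omega
      exact_mod_cast this
    linarith
  have hdec : ∀ R x, |ψ R x| ≤ exp (2 * N) * exp (-|(x : ℝ)|) := fun R x =>
    hloc.decay (hE R) (hψ R) m N (by omega) (by omega) (by have := Int.natCast_natAbs m; omega)
      (hlt.trans_le (hθm R)) x
  set U := hyperfilter ℕ with hU
  have hUt : (U : Filter ℕ) ≤ atTop := Nat.hyperfilter_le_atTop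
  obtain ⟨E', hE'⟩ := ultra_lim U E _ hE
  choose φ hφ using fun x => ultra_lim U (fun R => ψ R x) 1 fun R => (hψ R).bd x
  refine ⟨E', φ, exp (2 * N), ?_, ?_, ?_⟩
  · intro n
    have l1 := ((hφ (n + 1)).add (hφ (n - 1))).add ((hφ n).const_mul (g n))
    have l2 := hE'.mul (hφ n)
    refine tendsto_nhds_unique_of_eventuallyEq l1 l2 ?_
    have : ∀ᶠ R : ℕ in atTop, |n| ≤ ((R + m.natAbs : ℕ) : ℤ) := by
      filter_upwards [eventually_ge_atTop n.natAbs] with R hR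
      have := Int.natCast_natAbs n
      omega
    filter_upwards [hUt this] with R hR
    exact (hψ R).eqn n hR
  · intro x
    exact le_of_tendsto (hφ x).abs (Eventually.of_forall fun R => hdec R x)
  · have hs := summable_exp_abs (c := 1) one_pos
    simp only [one_mul] at hs
    have hfb : ∀ n, |f n| ≤ √F2 := by
      intro n
      apply Real.abs_le_sqrt
      simpa using hF {n}
    have lim := tendsto_tsum_of_dominated_convergence (𝓕 := (U : Filter ℕ)) (f := fun R n => f n * ψ R n)
      (g := fun n => f n * φ n) (bound := fun n : ℤ => √F2 * (exp (2 * N) * exp (-|(n : ℝ)|)))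
      ((hs.mul_left _).mul_left _) (fun n => (hφ n).const_mul _)
      (Eventually.of_forall fun R n => by
        rw [norm_mul, Real.norm_eq_abs, Real.norm_eq_abs]
        exact mul_le_mul (hfb n) (hdec R n) (abs_nonneg _) (by positivity))
    have := ge_of_tendsto lim.abs (Eventually.of_forall hκs)
    intro h0
    rw [h0, abs_zero] at this
    linarith


def Good (g : ℤ → ℝ) (E : ℝ) (φ : ℤ → ℝ) : Prop :=
  IsEigenfunction g E φ ∧ ∃ A : ℝ, ∀ x : ℤ, |φ x| ≤ A * exp (-|(x : ℝ)|)

lemma IsEigenfunction.zero {g : ℤ → ℝ} {E : ℝ} {φ : ℤ → ℝ} (h : IsEigenfunction g E φ)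
    (h0 : φ 0 = 0) (h1 : φ (-1) = 0) : φ = 0 := by
  have up : ∀ k : ℕ, φ k = 0 ∧ φ ((k : ℤ) - 1) = 0 := by
    intro k
    induction k with
    | zero => simpa using ⟨h0, h1⟩
    | succ k ih =>
      have := h k
      rw [ih.1, ih.2] at this
      push_cast
      refine ⟨by linarith, by simpa using ih.1⟩
  have dn : ∀ k : ℕ, φ (-(k : ℤ)) = 0 ∧ φ (-(k : ℤ) - 1) = 0 := by
    intro k
    induction k with
    | zero => simpa using ⟨h0, h1⟩
    | succ k ih =>
      have := h (-(k : ℤ) - 1)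
      rw [ih.2, show -(k : ℤ) - 1 + 1 = -k by ring, ih.1] at this
      push_cast
      rw [show -((k : ℤ) + 1) = -k - 1 by ring]
      exact ⟨ih.2, by linarith⟩
  funext n
  obtain ⟨k, rfl | rfl⟩ := Int.eq_nat_or_neg n
  · exact (up k).1
  · exact (dn k).1

lemma Good.summable {g : ℤ → ℝ} {E F : ℝ} {φ χ : ℤ → ℝ} (h : Good g E φ) (h' : Good g F χ) (a b : ℤ) :
    Summable fun n => φ (n + a) * χ (n + b) := by
  obtain ⟨A, hA⟩ := h.2
  obtain ⟨B, hB⟩ := h'.2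
  have hs := summable_exp_abs (c := 1) one_pos
  simp only [one_mul] at hs
  have hA0 : 0 ≤ A := by
    have := (abs_nonneg _).trans (hA 0)
    simpa using this
  have hB0 : 0 ≤ B := by
    have := (abs_nonneg _).trans (hB 0)
    simpa using this
  have hs' : Summable fun n : ℤ => A * B * exp (-|((n + a : ℤ) : ℝ)|) :=
    ((Equiv.addRight a).summable_iff.2 hs).mul_left _
  refine Summable.of_norm_bounded hs' fun n => ?_
  rw [norm_mul, Real.norm_eq_abs, Real.norm_eq_abs]
  have e : exp (-|((n + b : ℤ) : ℝ)|) ≤ 1 := by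
    rw [exp_le_one_iff]; simp
  calc |φ (n + a)| * |χ (n + b)| ≤ (A * exp (-|((n + a : ℤ) : ℝ)|)) * (B * exp (-|((n + b : ℤ) : ℝ)|)) :=
        mul_le_mul (hA _) (hB _) (abs_nonneg _) (by positivity)
    _ ≤ (A * exp (-|((n + a : ℤ) : ℝ)|)) * (B * 1) := by gcongr
    _ = _ := by ring

lemma Good.wronsk {g : ℤ → ℝ} {E : ℝ} {φ χ : ℤ → ℝ} (h : Good g E φ) (h' : Good g E χ) :
    φ 0 * χ (-1) - φ (-1) * χ 0 = 0 := by
  have hc : ∀ k : ℕ, φ (k : ℤ) * χ ((k : ℤ) - 1) - φ ((k : ℤ) - 1) * χ k = φ 0 * χ (-1) - φ (-1) * χ 0 := by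
    intro k
    induction k with
    | zero => simp
    | succ k ih =>
      rw [← ih]
      have h1 := h.1 k
      have h2 := h'.1 k
      push_cast
      rw [show (k : ℤ) + 1 - 1 = k by ring]
      linear_combination χ k * h1 - φ k * h2
  have s1 := ((h.summable h' 0 (-1)).sub (h.summable h' (-1) 0)).tendsto_cofinite_zero
  have t : Tendsto (fun k : ℕ => (k : ℤ)) atTop cofinite :=
    tendsto_natCast_atTop_atTop.mono_right atTop_le_cofinite
  have s2 := s1.comp t
  have s3 : Tendsto (fun _ : ℕ => φ 0 * χ (-1) - φ (-1) * χ 0) atTop (nhds 0) := by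
    refine s2.congr fun k => ?_
    rw [← hc k]
    simp only [Function.comp, add_zero, sub_eq_add_neg]
  exact tendsto_nhds_unique tendsto_const_nhds s3

lemma Good.simple {g : ℤ → ℝ} {E : ℝ} {φ χ : ℤ → ℝ} (h : Good g E φ) (h' : Good g E χ) (hne : φ ≠ 0) :
    ∃ c : ℝ, ∀ n, χ n = c * φ n := by
  have hw := h.wronsk h'
  have key : ∀ c : ℝ, χ 0 = c * φ 0 → χ (-1) = c * φ (-1) → ∀ n, χ n = c * φ n := by
    intro c h0 h1 n
    have : IsEigenfunction g E (fun n => χ n - c * φ n) := by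
      intro n
      linear_combination h'.1 n - c * h.1 n
    have := congrFun (this.zero (by simp [h0]) (by simp [h1])) n
    simp only [Pi.zero_apply] at this
    linarith
  by_cases h0 : φ 0 = 0
  · have h1 : φ (-1) ≠ 0 := fun h1 => hne (h.1.zero h0 h1)
    refine ⟨χ (-1) / φ (-1), key _ ?_ ?_⟩
    · rw [h0] at hw ⊢
      have : χ 0 = 0 := by
        have : φ (-1) * χ 0 = 0 := by linarith
        exact (mul_eq_zero.1 this).resolve_left h1
      rw [this, mul_zero]
    · field_simp
  · refine ⟨χ 0 / φ 0, key _ ?_ ?_⟩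
    · field_simp
    · field_simp; linarith

lemma Good.orth {g : ℤ → ℝ} {E F : ℝ} {φ χ : ℤ → ℝ} (h : Good g E φ) (h' : Good g F χ) (hne : E ≠ F) :
    ∑' n, φ n * χ n = 0 := by
  have s := h.summable h'
  have a1 : ∑' n, φ (n + 1) * χ n = ∑' n, φ n * χ (n - 1) := by
    rw [← (Equiv.addRight (1 : ℤ)).tsum_eq (fun n => φ n * χ (n - 1))]
    simp
  have a2 : ∑' n, φ (n - 1) * χ n = ∑' n, φ n * χ (n + 1) := by
    rw [← (Equiv.addRight (1 : ℤ)).tsum_eq (fun n => φ (n - 1) * χ n)]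
    simp
  have s1 := s 1 0
  have s2 := s (-1) 0
  have s3 := s 0 1
  have s4 := s 0 (-1)
  simp only [add_zero, ← sub_eq_add_neg] at s1 s2 s3 s4
  have key : (E - F) * ∑' n, φ n * χ n = 0 := by
    rw [← tsum_mul_left]
    have : ∀ n, (E - F) * (φ n * χ n) = (φ (n + 1) * χ n + φ (n - 1) * χ n) - (φ n * χ (n + 1) + φ n * χ (n - 1)) := by
      intro n
      linear_combination φ n * h'.1 n - χ n * h.1 n
    rw [tsum_congr this, (s1.add s2).tsum_sub (s3.add s4), s1.tsum_add s2, s3.tsum_add s4, a1, a2]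
    ring
  exact (mul_eq_zero.1 key).resolve_left (sub_ne_zero.2 hne)

abbrev HH := lp (fun _ : ℤ => ℝ) 2

lemma inner_HH (f h : HH) : inner ℝ f h = ∑' n, f n * h n := by
  rw [lp.inner_eq_tsum]
  refine tsum_congr fun n => ?_
  simp [mul_comm]

lemma sum_sq_HH (f : HH) (s : Finset ℤ) : ∑ n ∈ s, f n ^ 2 ≤ ‖f‖ ^ 2 := by
  have h1 : HasSum (fun n => f n ^ 2) (‖f‖ ^ 2) := by
    have := lp.hasSum_inner (𝕜 := ℝ) f f
    rw [real_inner_self_eq_norm_sq] at this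
    simpa [sq] using this
  exact sum_le_hasSum s (fun n _ => sq_nonneg _) h1

lemma Good.mem {g : ℤ → ℝ} {E : ℝ} {φ : ℤ → ℝ} (h : Good g E φ) : Memℓp φ 2 := by
  apply memℓp_gen
  have := h.summable h 0 0
  simpa [← sq] using this


lemma inner_single_HH (f : HH) (m : ℤ) : inner ℝ f (lp.single 2 m (1 : ℝ)) = f m := by
  rw [lp.inner_single_right]; simp

lemma parseval_HH {ι : Type*} (Φ : HilbertBasis ι ℝ HH) (m : ℤ) : HasSum (fun s => Φ s m ^ 2) 1 := by
  have := Φ.hasSum_inner_mul_inner (lp.single 2 m (1 : ℝ)) (lp.single 2 m (1 : ℝ))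
  rw [inner_single_HH] at this
  simp only [inner_single_HH, lp.single_apply_self] at this
  have h2 : ∀ s, inner ℝ (lp.single 2 m (1 : ℝ)) (Φ s) * Φ s m = Φ s m ^ 2 := fun s => by
    rw [real_inner_comm, inner_single_HH, sq]
  simpa only [h2] using this

theorem localization {g : ℤ → ℝ} {M : ℝ} {N0 : ℕ} (hloc : LocP g (M + 2) N0) (hg : ∀ n, |g n| ≤ M) :
    HasAndersonLocalization g := by
  classical
  let S : Set ℝ := {E | ∃ φ : HH, Good g E (fun n => φ n) ∧ ‖φ‖ = 1}
  choose Φ hG hN using fun E : S => E.2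
  have horth : Orthonormal ℝ Φ := by
    refine ⟨hN, fun E F hne => ?_⟩
    change inner ℝ (Φ E) (Φ F) = 0
    rw [inner_HH]
    exact (hG E).orth (hG F) (fun h => hne (Subtype.ext h))
  have hsp : (Submodule.span ℝ (Set.range Φ))ᗮ = ⊥ := by
    rw [Submodule.eq_bot_iff]
    intro f hf
    by_contra hne
    have : ∃ m, f m ≠ 0 := by
      by_contra! h
      exact hne (lp.ext (funext h))
    obtain ⟨m, hm⟩ := this
    obtain ⟨E, φ, A, h1, h2, h3⟩ := exists_good_ef hloc hg f (‖f‖ ^ 2) (sum_sq_HH f) m hm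
    have hφ : Good g E φ := ⟨h1, A, h2⟩
    let φ' : HH := ⟨φ, hφ.mem⟩
    have hφ0 : φ' ≠ 0 := by
      intro h0
      apply h3
      have : ∀ n, φ n = 0 := fun n => by
        have := congrArg (fun x : HH => x n) h0
        simpa [φ'] using this
      simp [this]
    have hn0 : ‖φ'‖ ≠ 0 := norm_ne_zero_iff.2 hφ0
    have hES : E ∈ S := by
      refine ⟨‖φ'‖⁻¹ • φ', ⟨?_, ‖φ'‖⁻¹ * A, ?_⟩, ?_⟩
      · intro n
        have := h1 n
        simp only [lp.coeFn_smul, Pi.smul_apply, smul_eq_mul]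
        change ‖φ'‖⁻¹ * φ (n + 1) + ‖φ'‖⁻¹ * φ (n - 1) + g n * (‖φ'‖⁻¹ * φ n) = E * (‖φ'‖⁻¹ * φ n)
        linear_combination ‖φ'‖⁻¹ * this
      · intro x
        simp only [lp.coeFn_smul, Pi.smul_apply, smul_eq_mul]
        change |‖φ'‖⁻¹ * φ x| ≤ _
        rw [abs_mul, abs_of_nonneg (by positivity : (0 : ℝ) ≤ ‖φ'‖⁻¹), mul_assoc]
        exact mul_le_mul_of_nonneg_left (h2 x) (by positivity)
      · rw [norm_smul, norm_inv, norm_norm, inv_mul_cancel₀ hn0]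
    have hΦ0 : (fun n => Φ ⟨E, hES⟩ n) ≠ 0 := by
      intro h0
      have : Φ ⟨E, hES⟩ = 0 := lp.ext h0
      have h := hN ⟨E, hES⟩
      rw [this] at h
      simp at h
    obtain ⟨c, hc⟩ := (hG ⟨E, hES⟩).simple hφ hΦ0
    have h4 := hf (Φ ⟨E, hES⟩) (Submodule.subset_span ⟨_, rfl⟩)
    rw [inner_HH] at h4
    apply h3
    calc ∑' n, f n * φ n = ∑' n, c * (Φ ⟨E, hES⟩ n * f n) := tsum_congr fun n => by rw [hc n]; ring
      _ = 0 := by rw [tsum_mul_left, h4, mul_zero]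
  let HB := HilbertBasis.mkOfOrthogonalEqBot horth hsp
  have hHB : ∀ E, HB E = Φ E := fun E => by
    rw [show (HB : S → HH) = Φ from HilbertBasis.coe_mkOfOrthogonalEqBot horth hsp]
  have hP : ∀ m, HasSum (fun E => Φ E m ^ 2) 1 := by
    intro m
    simpa only [hHB] using parseval_HH HB m
  have hcount : Countable S := by
    have h1 : ∀ n : ℤ, (Function.support fun E : S => Φ E n ^ 2).Countable := fun n =>
      (hP n).summable.countable_support
    have h2 : (Set.univ : Set S) ⊆ ⋃ n : ℤ, Function.support fun E : S => Φ E n ^ 2 := by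
      intro E _
      by_contra h
      simp only [Set.mem_iUnion, Function.mem_support, not_exists, not_not] at h
      have h0 : Φ E = 0 := lp.ext (funext fun n => by simpa using h n)
      have h := hN E
      rw [h0] at h
      simp at h
    exact Set.countable_univ_iff.1 ((Set.countable_iUnion h1).mono h2)
  have hinf : Infinite S := by
    by_contra hfin
    rw [not_infinite_iff_finite] at hfin
    haveI := Fintype.ofFinite S
    have ht : Tendsto (fun m : ℤ => ∑ E : S, Φ E m ^ 2) cofinite (nhds (∑ E : S, (0 : ℝ))) := by
      refine tendsto_finsetSum _ fun E _ => ?_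
      have := ((hG E).summable (hG E) 0 0).tendsto_cofinite_zero
      simpa [sq] using this
    have h1 : (fun m : ℤ => ∑ E : S, Φ E m ^ 2) = fun _ => (1 : ℝ) := by
      funext m
      exact (hasSum_fintype _).unique (hP m)
    rw [h1] at ht
    have := tendsto_nhds_unique ht tendsto_const_nhds
    simp at this
  haveI := Encodable.ofCountable S
  haveI := Denumerable.ofEncodableOfInfinite S
  let e : ℕ ≃ S := (Denumerable.eqv S).symm
  have horth' : Orthonormal ℝ (Φ ∘ e) := horth.comp e e.injective
  have hsp' : (Submodule.span ℝ (Set.range (Φ ∘ e)))ᗮ = ⊥ := by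
    rw [e.surjective.range_comp]; exact hsp
  have hHB' : ∀ s, HilbertBasis.mkOfOrthogonalEqBot horth' hsp' s = Φ (e s) := fun s => by
    rw [HilbertBasis.coe_mkOfOrthogonalEqBot horth' hsp']; rfl
  refine ⟨HilbertBasis.mkOfOrthogonalEqBot horth' hsp', fun _ => 0, 1, one_pos, fun s => ⟨e s, ?_⟩, fun s => ?_⟩
  · simp only [hHB']
    exact (hG (e s)).1
  · obtain ⟨A, hA⟩ := (hG (e s)).2
    refine ⟨A, fun n => ?_⟩
    rw [hHB']
    simpa using hA n


lemma ef_abs_le_one {φ : ℤ → ℝ} (h1 : HasSum (fun n => φ n ^ 2) 1) (n : ℤ) : |φ n| ≤ 1 := by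
  have := le_hasSum h1 n (fun j _ => sq_nonneg _)
  exact (sq_le_one_iff_abs_le_one _).1 this

lemma ef_energy {g : ℤ → ℝ} {M E : ℝ} {φ : ℤ → ℝ} (hg : ∀ n, |g n| ≤ M) (h : IsEigenfunction g E φ)
    (h1 : HasSum (fun n => φ n ^ 2) 1) : |E| ≤ M + 2 := by
  have hM : 0 ≤ M := (abs_nonneg _).trans (hg 0)
  have hb : BddAbove (Set.range fun n => |φ n|) := ⟨1, by rintro _ ⟨n, rfl⟩; exact ef_abs_le_one h1 n⟩
  set s := ⨆ n, |φ n| with hs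
  have hle : ∀ n, |φ n| ≤ s := fun n => le_ciSup hb n
  have hpos : 0 < s := by
    by_contra hn
    have : ∀ n, φ n ^ 2 = 0 := fun n => by
      have : |φ n| ≤ 0 := (hle n).trans (not_lt.1 hn)
      simpa using this
    simp only [this] at h1
    exact zero_ne_one (hasSum_zero.unique h1)
  have key : ∀ n, |φ n| * |E| ≤ (M + 2) * s := by
    intro n
    rw [mul_comm, ← abs_mul, ← h n]
    calc |φ (n + 1) + φ (n - 1) + g n * φ n| ≤ |φ (n + 1)| + |φ (n - 1)| + |g n * φ n| := abs_add_three _ _ _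
      _ ≤ s + s + M * s := by
        rw [abs_mul]
        have := mul_le_mul (hg n) (hle n) (abs_nonneg _) hM
        linarith [hle (n + 1), hle (n - 1)]
      _ = _ := by ring
  have : s * |E| ≤ (M + 2) * s := by
    rw [hs, Real.iSup_mul_of_nonneg (abs_nonneg _)]
    exact ciSup_le key
  nlinarith

lemma ef_refl {g : ℤ → ℝ} {M E η : ℝ} {φ : ℤ → ℝ} (hg : ∀ n, |g n| ≤ M) (h : IsEigenfunction g E φ)
    (h1 : HasSum (fun n => φ n ^ 2) 1) (B : ℤ) (hη : 0 < η) (hη1 : η ≤ 1)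
    (hr : ∀ m, |g (2 * B + 1 - m) - g m| ≤ η ^ 2) :
    ∃ τ : ℝ, |τ| = 1 ∧ ∀ k : ℕ, |φ (B + k) - τ * φ (B + 1 - k)| ≤ (2 * M + 4) ^ k * η := by
  have hM : 0 ≤ M := (abs_nonneg _).trans (hg 0)
  have hE := ef_energy hg h h1
  let ψ : ℤ → ℝ := fun m => φ (2 * B + 1 - m)
  have hψ : ∀ m, ψ (m + 1) + ψ (m - 1) + g (2 * B + 1 - m) * ψ m = E * ψ m := by
    intro m
    have := h (2 * B + 1 - m)
    simp only [ψ]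
    rw [show 2 * B + 1 - (m + 1) = 2 * B + 1 - m - 1 by ring, show 2 * B + 1 - (m - 1) = 2 * B + 1 - m + 1 by ring]
    linarith
  have hs2 : HasSum (fun n => ψ n ^ 2) 1 := by
    have := (Equiv.subLeft (2 * B + 1)).hasSum_iff.2 h1
    exact this
  let W : ℤ → ℝ := fun m => φ (m + 1) * ψ m - φ m * ψ (m + 1)
  have hW : ∀ m, W m - W (m - 1) = (g (2 * B + 1 - m) - g m) * (φ m * ψ m) := by
    intro m
    simp only [W, sub_add_cancel]
    linear_combination ψ m * h m - φ m * hψ m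
  have hsum : ∀ k : ℕ, |W B - W (B - k)| ≤ η ^ 2 * ∑ i ∈ Finset.range k, |φ (B - i) * ψ (B - i)| := by
    intro k
    induction k with
    | zero => simp
    | succ k ih =>
      rw [Finset.sum_range_succ, mul_add]
      have e : W B - W (B - (k + 1 : ℕ)) = (W B - W (B - k)) + (W (B - k) - W (B - k - 1)) := by
        push_cast
        rw [show B - ((k : ℤ) + 1) = B - k - 1 by ring]; ring
      rw [e]
      refine (abs_add_le _ _).trans (add_le_add ih ?_)
      rw [hW, abs_mul]
      exact mul_le_mul_of_nonneg_right (hr _) (abs_nonneg _)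
  have hs1 : ∀ k : ℕ, ∑ i ∈ Finset.range k, |φ (B - i) * ψ (B - i)| ≤ 1 := by
    intro k
    have hinj : Set.InjOn (fun i : ℕ => B - (i : ℤ)) (Finset.range k) := by
      intro a _ b _ hab
      simp only at hab
      omega
    have a1 := sum_le_hasSum ((Finset.range k).image fun i : ℕ => B - (i : ℤ)) (fun n _ => sq_nonneg _) h1
    have a2 := sum_le_hasSum ((Finset.range k).image fun i : ℕ => B - (i : ℤ)) (fun n _ => sq_nonneg _) hs2
    rw [Finset.sum_image hinj] at a1 a2
    calc ∑ i ∈ Finset.range k, |φ (B - i) * ψ (B - i)|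
        ≤ ∑ i ∈ Finset.range k, (φ (B - i) ^ 2 + ψ (B - i) ^ 2) / 2 := by
          refine Finset.sum_le_sum fun i _ => ?_
          rw [abs_le]
          constructor <;> nlinarith [sq_nonneg (φ (B - i) - ψ (B - i)), sq_nonneg (φ (B - i) + ψ (B - i))]
      _ = ((∑ i ∈ Finset.range k, φ (B - i) ^ 2) + ∑ i ∈ Finset.range k, ψ (B - i) ^ 2) / 2 := by
          rw [← Finset.sum_add_distrib, Finset.sum_div]
      _ ≤ 1 := by linarith
  have hW2 : ∀ k : ℕ, |W B - W (B - k)| ≤ η ^ 2 := fun k => by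
    have := hsum k
    nlinarith [hs1 k, sq_nonneg η]
  have hφ0 : Tendsto φ cofinite (nhds 0) := by
    have := h1.summable.tendsto_cofinite_zero
    have := this.sqrt
    simp only [sqrt_sq_eq_abs, sqrt_zero] at this
    exact (tendsto_zero_iff_abs_tendsto_zero _).2 this
  have hWlim : Tendsto (fun k : ℕ => W (B - k)) atTop (nhds 0) := by
    have t : Tendsto (fun k : ℕ => B - (k : ℤ)) atTop cofinite := by
      rw [← Nat.cofinite_eq_atTop]
      exact Function.Injective.tendsto_cofinite (fun a b hab => by omega)
    have t1 : Tendsto (fun k : ℕ => B - (k : ℤ) + 1) atTop cofinite := by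
      rw [← Nat.cofinite_eq_atTop]
      exact Function.Injective.tendsto_cofinite (fun a b hab => by omega)
    have u1 := hφ0.comp t
    have u2 := hφ0.comp t1
    have v : ∀ m, |ψ m| ≤ 1 := ef_abs_le_one hs2
    refine squeeze_zero_norm (a := fun k : ℕ => |φ (B - (k : ℤ) + 1)| + |φ (B - (k : ℤ))|) (fun k => ?_) ?_
    · simp only [W, Real.norm_eq_abs]
      refine (abs_sub _ _).trans ?_
      rw [abs_mul, abs_mul]
      have := v (B - k)
      have := v (B - k + 1)
      nlinarith [abs_nonneg (φ (B - (k : ℤ) + 1)), abs_nonneg (φ (B - (k : ℤ)))]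
    · simpa using u2.abs.add u1.abs
  have hWB : |W B| ≤ η ^ 2 := by
    have : Tendsto (fun k : ℕ => |W B - W (B - k)|) atTop (nhds |W B - 0|) := (tendsto_const_nhds.sub hWlim).abs
    rw [sub_zero] at this
    exact le_of_tendsto this (Eventually.of_forall hW2)
  have hψB : ψ B = φ (B + 1) := by simp only [ψ]; congr 1; ring
  have hψB1 : ψ (B + 1) = φ B := by simp only [ψ]; congr 1; ring
  have hτ : ∃ τ : ℝ, |τ| = 1 ∧ |φ B - τ * φ (B + 1)| ≤ η ∧ |φ (B + 1) - τ * φ B| ≤ η := by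
    simp only [W, hψB, hψB1] at hWB
    have e : φ (B + 1) * φ (B + 1) - φ B * φ B = (φ (B + 1) - φ B) * (φ (B + 1) + φ B) := by ring
    rw [e, abs_mul] at hWB
    by_cases hc : |φ (B + 1) - φ B| ≤ η
    · refine ⟨1, by simp, ?_, by simpa using hc⟩
      rw [one_mul, abs_sub_comm]; exact hc
    · push Not at hc
      have : |φ (B + 1) + φ B| ≤ η := by
        by_contra! h'
        nlinarith
      refine ⟨-1, by simp, ?_, ?_⟩
      · rw [show φ B - -1 * φ (B + 1) = φ (B + 1) + φ B by ring]; exact this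
      · rw [show φ (B + 1) - -1 * φ B = φ (B + 1) + φ B by ring]; exact this
  obtain ⟨τ, ht, h0, h01⟩ := hτ
  refine ⟨τ, ht, ?_⟩
  have key : ∀ k : ℕ, |φ (B + k) - τ * ψ (B + k)| ≤ (2 * M + 4) ^ k * η ∧
      |φ (B + k + 1) - τ * ψ (B + k + 1)| ≤ (2 * M + 4) ^ (k + 1) * η := by
    intro k
    induction k with
    | zero =>
      simp only [Nat.cast_zero, add_zero, hψB, hψB1, pow_zero, one_mul, zero_add, pow_one]
      refine ⟨h0, h01.trans ?_⟩
      nlinarith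
    | succ k ih =>
      push_cast
      rw [← add_assoc]
      refine ⟨ih.2, ?_⟩
      have a := h (B + k + 1)
      have b := hψ (B + k + 1)
      rw [add_sub_cancel_right] at a b
      set m := B + (k : ℤ) + 1 with hm
      have hD : φ (m + 1) - τ * ψ (m + 1) = (E - g m) * (φ m - τ * ψ m) - (φ (B + k) - τ * ψ (B + k))
          + τ * ((g (2 * B + 1 - m) - g m) * ψ m) := by
        linear_combination a - τ * b
      rw [hD]
      have hP : 1 ≤ (2 * M + 4) ^ k := one_le_pow₀ (by linarith)
      have c1 : |(E - g m) * (φ m - τ * ψ m)| ≤ (2 * M + 2) * ((2 * M + 4) ^ (k + 1) * η) := by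
        rw [abs_mul]
        refine mul_le_mul ?_ ih.2 (abs_nonneg _) (by linarith)
        have := abs_sub E (g m)
        linarith [hg m]
      have c2 : |τ * ((g (2 * B + 1 - m) - g m) * ψ m)| ≤ η := by
        rw [abs_mul, abs_mul, ht, one_mul]
        have := mul_le_mul (hr m) (ef_abs_le_one hs2 m) (abs_nonneg _) (sq_nonneg _)
        nlinarith
      have c3 := abs_add_le ((E - g m) * (φ m - τ * ψ m) - (φ (B + k) - τ * ψ (B + k))) (τ * ((g (2 * B + 1 - m) - g m) * ψ m))
      have c4 := abs_sub ((E - g m) * (φ m - τ * ψ m)) (φ (B + k) - τ * ψ (B + k))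
      have c5 : (2 * M + 4) ^ k * η ≤ (2 * M + 4) ^ (k + 1) * η := by
        gcongr
        · linarith
        · omega
      have c6 : η ≤ (2 * M + 4) ^ (k + 1) * η := by nlinarith
      calc _ ≤ (2 * M + 2) * ((2 * M + 4) ^ (k + 1) * η) + (2 * M + 4) ^ (k + 1) * η + (2 * M + 4) ^ (k + 1) * η := by
            linarith [ih.1]
        _ = _ := by ring
  intro k
  have := (key k).1
  simp only [ψ] at this
  rwa [show 2 * B + 1 - (B + (k : ℤ)) = B + 1 - k by ring] at this


lemma hasSum_sq_HB (Φ : HilbertBasis ℕ ℝ HH) (s : ℕ) : HasSum (fun n => Φ s n ^ 2) 1 := by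
  have := lp.hasSum_inner (𝕜 := ℝ) (Φ s) (Φ s)
  rw [real_inner_self_eq_norm_sq, Φ.orthonormal.1 s] at this
  simpa [sq] using this

lemma sule_weights (Φ : HilbertBasis ℕ ℝ HH) (ns : ℕ → ℤ) (γ : ℝ) (hγ : 0 < γ)
    (hS : ∀ ε : ℝ, 0 < ε → ∃ C : ℝ, ∀ (s : ℕ) (n : ℤ),
        |Φ s n| ≤ C * Real.exp (ε * |(ns s : ℝ)|) * Real.exp (-γ * |(n : ℝ) - (ns s : ℝ)|))
    (κ : ℝ) (hκ : 0 < κ) (hκγ : κ ≤ γ) :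
    ∃ T : ℝ, ∀ F : Finset ℕ, ∑ s ∈ F, exp (-(κ * |(ns s : ℝ)|)) ≤ T := by
  obtain ⟨C, hC⟩ := hS (κ / 4) (by positivity)
  have hC0 : 0 ≤ C := by
    have := (abs_nonneg _).trans (hC 0 0)
    rw [mul_assoc] at this
    exact nonneg_of_mul_nonneg_left this (by positivity)
  have hsγ := summable_exp_abs (c := γ) hγ
  have hsκ := summable_exp_abs (c := κ / 2) (by positivity)
  set G := ∑' n : ℤ, exp (-(γ * |(n : ℝ)|)) with hG
  set T0 := ∑' n : ℤ, exp (-(κ / 2 * |(n : ℝ)|)) with hT0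
  set D := C ^ 2 * G + 1 with hD
  have hG0 : 0 ≤ G := tsum_nonneg fun n => (exp_pos _).le
  have hD0 : 0 < D := by positivity
  have hAs : ∀ s, Summable fun x : ℤ => Φ s x ^ 2 * exp (-(κ / 2 * |(x : ℝ)|)) := by
    intro s
    refine Summable.of_nonneg_of_le (fun x => by positivity) (fun x => ?_) hsκ
    have := (sq_le_one_iff_abs_le_one _).2 (ef_abs_le_one (hasSum_sq_HB Φ s) x)
    have e := exp_pos (-(κ / 2 * |(x : ℝ)|))
    nlinarith
  have hZ : ∀ s, ∀ x : ℤ, Φ s x ^ 2 * exp (κ / 2 * |(x : ℝ)|) ≤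
      C ^ 2 * exp (κ * |(ns s : ℝ)|) * exp (-(γ * |((x - ns s : ℤ) : ℝ)|)) := by
    intro s x
    have a := hC s x
    have b : Φ s x ^ 2 ≤ (C * exp (κ / 4 * |(ns s : ℝ)|) * exp (-γ * |(x : ℝ) - ns s|)) ^ 2 := by
      rw [← sq_abs (Φ s x)]
      exact pow_le_pow_left₀ (abs_nonneg _) a 2
    calc Φ s x ^ 2 * exp (κ / 2 * |(x : ℝ)|)
        ≤ (C * exp (κ / 4 * |(ns s : ℝ)|) * exp (-γ * |(x : ℝ) - ns s|)) ^ 2 * exp (κ / 2 * |(x : ℝ)|) := by gcongr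
      _ = C ^ 2 * exp (κ / 2 * |(ns s : ℝ)| + -(2 * γ) * |(x : ℝ) - ns s| + κ / 2 * |(x : ℝ)|) := by
        rw [mul_pow, mul_pow, ← exp_nat_mul, ← exp_nat_mul, exp_add, exp_add]
        push_cast
        rw [show (2 : ℝ) * (κ / 4 * |(ns s : ℝ)|) = κ / 2 * |(ns s : ℝ)| by ring,
          show (2 : ℝ) * (-γ * |(x : ℝ) - ns s|) = -(2 * γ) * |(x : ℝ) - ns s| by ring]
        ring
      _ ≤ C ^ 2 * exp (κ * |(ns s : ℝ)| + -(γ * |((x - ns s : ℤ) : ℝ)|)) := by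
        refine mul_le_mul_of_nonneg_left (exp_le_exp.2 ?_) (sq_nonneg _)
        push_cast
        have t : |(x : ℝ)| ≤ |(x : ℝ) - ns s| + |(ns s : ℝ)| := by
          have := abs_add_le ((x : ℝ) - ns s) (ns s)
          simpa using this
        have t0 := abs_nonneg ((x : ℝ) - ns s)
        nlinarith
      _ = _ := by rw [exp_add, mul_assoc]
  have hlow : ∀ s, exp (-(κ * |(ns s : ℝ)|)) ≤ D * ∑' x : ℤ, Φ s x ^ 2 * exp (-(κ / 2 * |(x : ℝ)|)) := by
    intro s
    set w := exp (κ * |(ns s : ℝ)|) with hw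
    have hw0 : 0 < w := exp_pos _
    have h1 := hasSum_sq_HB Φ s
    have hB : HasSum (fun x : ℤ => C ^ 2 * w * exp (-(γ * |((x - ns s : ℤ) : ℝ)|))) (C ^ 2 * w * G) :=
      ((Equiv.subRight (ns s)).hasSum_iff.2 hsγ.hasSum).mul_left _
    have hA := (hAs s).hasSum
    set A := ∑' x : ℤ, Φ s x ^ 2 * exp (-(κ / 2 * |(x : ℝ)|)) with hAdef
    have hle := hasSum_le (fun x => ?_) h1 (((hA.mul_left (D * w)).add (hB.mul_left (D * w)⁻¹)).div_const 2)
    · have hq : (D * w)⁻¹ * (C ^ 2 * w * G) ≤ 1 := by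
        rw [inv_mul_le_iff₀ (by positivity), hD]
        nlinarith
      have : 1 ≤ D * w * A := by linarith
      rw [exp_neg, ← hw, inv_le_iff_one_le_mul₀ hw0]
      linarith
    · have hz := hZ s x
      rw [← hw] at hz
      have hDw : 0 < D * w := by positivity
      have hz2 := mul_le_mul_of_nonneg_left hz (inv_nonneg.2 hDw.le)
      refine le_trans ?_ (div_le_div_of_nonneg_right (add_le_add_right hz2 _) two_pos.le)
      have e1 : exp (-(κ / 2 * |(x : ℝ)|)) = (exp (κ / 2 * |(x : ℝ)|))⁻¹ := exp_neg _
      rw [e1]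
      set y := exp (κ / 2 * |(x : ℝ)|)
      have hy : 0 < y := exp_pos _
      set d := D * w
      have h3 : 1 ≤ (d * y⁻¹ + d⁻¹ * y) / 2 := by
        have e2 : d⁻¹ * y = (d * y⁻¹)⁻¹ := by rw [mul_inv d, inv_inv]
        rw [e2]
        set z := d * y⁻¹
        have hz0 : 0 < z := by positivity
        have : z * z⁻¹ = 1 := mul_inv_cancel₀ hz0.ne'
        nlinarith [sq_nonneg (z - z⁻¹), inv_pos.2 hz0]
      have h4 := sq_nonneg (Φ s x)
      calc Φ s x ^ 2 = Φ s x ^ 2 * 1 := by ring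
        _ ≤ Φ s x ^ 2 * ((d * y⁻¹ + d⁻¹ * y) / 2) := mul_le_mul_of_nonneg_left h3 h4
        _ = _ := by ring
  refine ⟨D * T0, fun F => ?_⟩
  calc ∑ s ∈ F, exp (-(κ * |(ns s : ℝ)|)) ≤ ∑ s ∈ F, D * ∑' x : ℤ, Φ s x ^ 2 * exp (-(κ / 2 * |(x : ℝ)|)) :=
        Finset.sum_le_sum fun s _ => hlow s
    _ = D * ∑ s ∈ F, ∑' x : ℤ, Φ s x ^ 2 * exp (-(κ / 2 * |(x : ℝ)|)) := by rw [Finset.mul_sum]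
    _ = D * ∑' x : ℤ, ∑ s ∈ F, Φ s x ^ 2 * exp (-(κ / 2 * |(x : ℝ)|)) := by
        rw [Summable.tsum_finsetSum fun s _ => hAs s]
    _ ≤ D * T0 := by
        refine mul_le_mul_of_nonneg_left ?_ hD0.le
        refine Summable.tsum_le_tsum (fun x => ?_) (summable_sum fun s _ => hAs s) hsκ
        rw [← Finset.sum_mul]
        have := sum_le_hasSum F (fun s _ => sq_nonneg _) (parseval_HH Φ x)
        have e := exp_pos (-(κ / 2 * |(x : ℝ)|))
        nlinarith

set_option maxHeartbeats 2000000 in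
theorem no_SULE {g : ℤ → ℝ} {M b : ℝ} (hg : ∀ n, |g n| ≤ M) (hb : 0 < b)
    (hr : ∀ X : ℝ, ∃ B : ℤ, X ≤ B ∧ ∀ m, |g (2 * B + 1 - m) - g m| ≤ 4 * exp (-(b * (2 * B + 1)))) :
    ¬ HasSULE g := by
  rintro ⟨Φ, ns, γ, hγ, hE, hS⟩
  have hM : 0 ≤ M := (abs_nonneg _).trans (hg 0)
  set P := 2 * M + 4 with hP
  have hP4 : 4 ≤ P := by linarith
  have hlP : 0 < log P := log_pos (by linarith)
  set c := min (b / (4 * log P)) (1 / 4) with hc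
  have hc0 : 0 < c := lt_min (by positivity) (by norm_num)
  have hcb : c * log P ≤ b / 4 := by
    have : c ≤ b / (4 * log P) := min_le_left _ _
    rw [le_div_iff₀ (by positivity)] at this
    linarith
  have hc4 : c ≤ 1 / 4 := min_le_right _ _
  set κ₀ := min (γ * c / 2) (b / 4) with hκ₀
  have hκ0 : 0 < κ₀ := lt_min (by positivity) (by positivity)
  have hκ1 : κ₀ ≤ γ * c / 2 := min_le_left _ _
  have hκ2 : κ₀ ≤ b / 4 := min_le_right _ _
  have hκ3 : κ₀ ≤ γ / 8 := by nlinarith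
  set ε := κ₀ / 12 with hε
  have hε0 : 0 < ε := by positivity
  obtain ⟨C, hC⟩ := hS ε hε0
  have hC0 : 0 ≤ C := by
    have := (abs_nonneg _).trans (hC 0 0)
    rw [mul_assoc] at this
    exact nonneg_of_mul_nonneg_left this (by positivity)
  obtain ⟨T, hT⟩ := sule_weights Φ ns γ hγ hS ε hε0 (by linarith)
  have hT0 : 0 ≤ T := by simpa using hT ∅
  set C2 := C + 2 * P with hC2
  have hC20 : 0 < C2 := by positivity
  have main : ∀ B : ℤ, 1 ≤ B → 2 / b ≤ B → (∀ m, |g (2 * B + 1 - m) - g m| ≤ 4 * exp (-(b * (2 * B + 1)))) →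
      1 ≤ C2 ^ 2 * exp (-(κ₀ * (2 * B + 1))) * T := by
    intro B hB1 hB2 hrB
    have hB1' : (1 : ℝ) ≤ B := by exact_mod_cast hB1
    set n : ℝ := 2 * B + 1 with hn
    have hn0 : 3 ≤ n := by linarith
    set k := ⌊c * n⌋₊ + 1 with hk
    have hk1 : c * n ≤ k := by push_cast [hk]; exact (Nat.lt_floor_add_one _).le
    have hk2 : (k : ℝ) ≤ c * n + 1 := by
      push_cast [hk]; linarith [Nat.floor_le (by positivity : 0 ≤ c * n)]
    have hk0 : (1 : ℝ) ≤ k := by push_cast [hk]; linarith [Nat.cast_nonneg (α := ℝ) ⌊c * n⌋₊]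
    set m : ℤ := B + k with hm
    have hbn : 2 ≤ b * n / 2 := by
      rw [div_le_iff₀ hb] at hB2
      nlinarith
    have pt : ∀ s, |Φ s m| ≤ C2 * exp (ε * |(ns s : ℝ)|) * exp (-(κ₀ * n)) := by
      intro s
      obtain ⟨E, hEs⟩ := hE s
      obtain ⟨τ, ht, hτ⟩ := ef_refl (η := 2 * exp (-(b * n / 2))) hg hEs (hasSum_sq_HB Φ s) B (by positivity) (by
          have h1 : exp (-(b * n / 2)) ≤ exp (-2) := exp_le_exp.2 (by linarith)
          have h2 : exp (-2) ≤ 1 / 2 := by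
            rw [exp_neg, one_div]
            exact inv_anti₀ two_pos (by linarith [add_one_le_exp (2 : ℝ)])
          linarith) (fun x => by
          refine (hrB x).trans (le_of_eq ?_)
          rw [mul_pow, ← exp_nat_mul]
          push_cast
          norm_num
          ring)
      have h3 := hτ k
      rw [← hP] at h3
      have hPk : P ^ k * (2 * exp (-(b * n / 2))) ≤ 2 * P * exp (-(κ₀ * n)) := by
        have e1 : P ^ k = exp (k * log P) := by
          rw [mul_comm, exp_mul, exp_log (by linarith), rpow_natCast]
        have e2 : P = exp (log P) := (exp_log (by linarith)).symm
        calc P ^ k * (2 * exp (-(b * n / 2))) = 2 * exp (k * log P + -(b * n / 2)) := by rw [e1, exp_add]; ring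
          _ ≤ 2 * exp (log P + -(κ₀ * n)) := by
            gcongr 2 * exp ?_
            nlinarith
          _ = _ := by rw [exp_add, ← e2, mul_assoc]
      have hex : 1 ≤ exp (ε * |(ns s : ℝ)|) := one_le_exp (by positivity)
      have hen := exp_pos (-(κ₀ * n))
      have dec : ∀ x : ℤ, c * n / 2 ≤ |(x : ℝ) - ns s| → |Φ s x| ≤ C * exp (ε * |(ns s : ℝ)|) * exp (-(κ₀ * n)) := by
        intro x hx
        refine (hC s x).trans ?_
        gcongr
        nlinarith
      have hfin : ∀ y, y ≤ C * exp (ε * |(ns s : ℝ)|) * exp (-(κ₀ * n)) + 2 * P * exp (-(κ₀ * n)) →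
          y ≤ C2 * exp (ε * |(ns s : ℝ)|) * exp (-(κ₀ * n)) := by
        intro y hy
        refine hy.trans ?_
        have : 2 * P * exp (-(κ₀ * n)) * 1 ≤ 2 * P * exp (-(κ₀ * n)) * exp (ε * |(ns s : ℝ)|) := by gcongr
        rw [hC2]
        linarith
      by_cases hd : c * n / 2 ≤ |(m : ℝ) - ns s|
      · refine hfin _ ((dec m hd).trans ?_)
        have : 0 ≤ 2 * P * exp (-(κ₀ * n)) := by positivity
        linarith
      · push Not at hd
        have hd2 : c * n / 2 ≤ |((B + 1 - k : ℤ) : ℝ) - ns s| := by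
          by_contra! h5
          have h6 := abs_sub ((m : ℝ) - ns s) (((B + 1 - k : ℤ) : ℝ) - ns s)
          have h7 : (m : ℝ) - ns s - (((B + 1 - k : ℤ) : ℝ) - ns s) = 2 * k - 1 := by
            rw [hm]; push_cast; ring
          rw [h7, abs_of_nonneg (by linarith)] at h6
          linarith
        have h8 := dec _ hd2
        apply hfin
        have h9 : |Φ s m| ≤ |Φ s m - τ * Φ s (B + 1 - k)| + |τ * Φ s (B + 1 - k)| := by
          have := abs_add_le (Φ s m - τ * Φ s (B + 1 - k)) (τ * Φ s (B + 1 - k))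
          simpa using this
        rw [abs_mul, ht, one_mul] at h9
        linarith
    have sq : ∀ s, Φ s m ^ 2 ≤ C2 ^ 2 * exp (-(κ₀ * n)) * exp (-(ε * |(ns s : ℝ)|)) := by
      intro s
      have ha := abs_nonneg (ns s : ℝ)
      by_cases hs : |(ns s : ℝ)| ≤ 4 * n
      · calc Φ s m ^ 2 = |Φ s m| ^ 2 := (sq_abs _).symm
          _ ≤ (C2 * exp (ε * |(ns s : ℝ)|) * exp (-(κ₀ * n))) ^ 2 := pow_le_pow_left₀ (abs_nonneg _) (pt s) 2
          _ = C2 ^ 2 * exp (2 * (ε * |(ns s : ℝ)|) + 2 * (-(κ₀ * n))) := by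
            rw [mul_pow, mul_pow, ← exp_nat_mul, ← exp_nat_mul, exp_add]; push_cast; ring
          _ ≤ C2 ^ 2 * exp (-(κ₀ * n) + -(ε * |(ns s : ℝ)|)) := by
            refine mul_le_mul_of_nonneg_left (exp_le_exp.2 ?_) (sq_nonneg _)
            have : ε * |(ns s : ℝ)| ≤ ε * (4 * n) := by gcongr
            rw [hε] at this ⊢
            nlinarith
          _ = _ := by rw [exp_add, mul_assoc]
      · push Not at hs
        have hmn : |(m : ℝ)| ≤ 2 * n := by
          rw [hm]; push_cast
          rw [abs_of_nonneg (by linarith)]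
          nlinarith
        have hdist : |(ns s : ℝ)| / 2 ≤ |(m : ℝ) - ns s| := by
          have := abs_sub_abs_le_abs_sub (ns s : ℝ) m
          rw [abs_sub_comm (m : ℝ)]
          linarith
        calc Φ s m ^ 2 = |Φ s m| ^ 2 := (sq_abs _).symm
          _ ≤ (C * exp (ε * |(ns s : ℝ)|) * exp (-γ * |(m : ℝ) - ns s|)) ^ 2 :=
            pow_le_pow_left₀ (abs_nonneg _) (hC s m) 2
          _ = C ^ 2 * exp (2 * (ε * |(ns s : ℝ)|) + 2 * (-γ * |(m : ℝ) - ns s|)) := by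
            rw [mul_pow, mul_pow, ← exp_nat_mul, ← exp_nat_mul, exp_add]; push_cast; ring
          _ ≤ C2 ^ 2 * exp (-(κ₀ * n) + -(ε * |(ns s : ℝ)|)) := by
            refine mul_le_mul (pow_le_pow_left₀ hC0 (by linarith) 2) (exp_le_exp.2 ?_) (exp_pos _).le (sq_nonneg _)
            · have h1 : γ * (|(ns s : ℝ)| / 2) ≤ γ * |(m : ℝ) - ns s| := by gcongr
              have h2 : κ₀ * n ≤ κ₀ * (|(ns s : ℝ)| / 4) := by gcongr; linarith
              have h3 : κ₀ * |(ns s : ℝ)| ≤ γ / 8 * |(ns s : ℝ)| := by gcongr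
              have h4 : 0 ≤ γ * |(ns s : ℝ)| := by positivity
              have h5 : ε * |(ns s : ℝ)| = κ₀ * |(ns s : ℝ)| / 12 := by rw [hε]; ring
              linarith
          _ = _ := by rw [exp_add, mul_assoc]
    refine le_of_tendsto (parseval_HH Φ m) (Eventually.of_forall fun F => ?_)
    calc ∑ s ∈ F, Φ s m ^ 2 ≤ ∑ s ∈ F, C2 ^ 2 * exp (-(κ₀ * n)) * exp (-(ε * |(ns s : ℝ)|)) :=
          Finset.sum_le_sum fun s _ => sq s
      _ = C2 ^ 2 * exp (-(κ₀ * n)) * ∑ s ∈ F, exp (-(ε * |(ns s : ℝ)|)) := by rw [Finset.mul_sum]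
      _ ≤ _ := by gcongr; exact hT F
  obtain ⟨B, hBX, hrB⟩ := hr (max (max 1 (2 / b)) (C2 ^ 2 * T / κ₀))
  have hB1 : (1 : ℝ) ≤ B := ((le_max_left _ _).trans (le_max_left _ _)).trans hBX
  have hB2 : 2 / b ≤ B := ((le_max_right _ _).trans (le_max_left _ _)).trans hBX
  have hB3 : C2 ^ 2 * T / κ₀ ≤ B := (le_max_right _ _).trans hBX
  have h1 := main B (by exact_mod_cast hB1) hB2 hrB
  rw [div_le_iff₀ hκ0] at hB3
  have h2 : κ₀ * (2 * B + 1) < exp (κ₀ * (2 * B + 1)) := by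
    linarith [add_one_le_exp (κ₀ * (2 * B + 1))]
  rw [exp_neg] at h1
  have h3 := exp_pos (κ₀ * (2 * B + 1))
  have h4 : exp (κ₀ * (2 * B + 1)) ≤ C2 ^ 2 * T := by
    have := mul_le_mul_of_nonneg_left h1 h3.le
    calc _ = exp (κ₀ * (2 * B + 1)) * 1 := by ring
      _ ≤ _ := this
      _ = C2 ^ 2 * T * (exp (κ₀ * (2 * B + 1)) * (exp (κ₀ * (2 * B + 1)))⁻¹) := by ring
      _ = _ := by rw [mul_inv_cancel₀ h3.ne', mul_one]
  nlinarith

theorem exists_localized_without_SULE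
    (b L₀ : ℝ) (hb : 0 < b) (hbL : b < L₀) :
    ∃ g : ℤ → ℝ, (∃ M : ℝ, ∀ n : ℤ, |g n| ≤ M) ∧
      deltaPot g = b ∧
      (∀ E : ℝ, L₀ ≤ LyapSup g E) ∧
      HasAndersonLocalization g ∧
      ¬ HasSULE g := by
  obtain ⟨q, K, hBig, hL⟩ := exists_Big b L₀ hb
  have hpar := hBig.par
  refine ⟨gpot q (sg b q K), ⟨_, hpar.g_bound⟩, hpar.delta hb, fun E => hBig.lyap hL E, ?_, ?_⟩
  · exact localization (M := 2 * sg b q K 0) (N0 := 1000)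
      (fun R N hN E ψ hE hψ => hBig.loc R N hN E ψ hE hψ) hpar.g_bound
  · refine no_SULE hpar.g_bound hb fun X => ?_
    obtain ⟨j, hj⟩ := exists_B_ge hpar ⌈X⌉
    refine ⟨Bn q j, (Int.le_ceil X).trans (by exact_mod_cast hj), fun m => ?_⟩
    exact hpar.refl_close j m
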